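/- Let s > 2 and let S be the kernel S(k,ℓ) = Λ(k,ℓ)/|kℓ(k+ℓ)|^{1/2} if kℓ(k+ℓ) ≠ 0 and 0 otherwise, with Λ(k,ℓ) = 2|k+ℓ|·|k|·|ℓ|/(|k+ℓ|+|k|+|ℓ|) for (k,ℓ)≠(0,0) and Λ(0,0)=0. There exists a constant K_s > 0 with the following property. For every measurable f₀:ℝ→ℂ with f₀(−k) = conj(f₀(k)) a.e. and M₀ := (∫_ℝ (1+|k|^{2s})|f₀(k)|² dk)^{1/2} < ∞, setting N₀ := (∫_ℝ |f₀(k)|² dk)^{1/2} and τ* := 1/(K_s · N₀^{1−2/s} · M₀^{2/s}), there exists a unique measurable f: (−τ*,τ*)×ℝ → ℂ such that: (i) f(0,k) = f₀(k) for a.e. k; (ii) f(τ,−k) = conj(f(τ,k)) for a.e. k and all τ; (iii) the map τ ↦ f(τ,·) is continuous from (−τ*,τ*) into L²(ℝ,(1+|k|^{2s})dk), with ∫_ℝ(1+|k|^{2s})|f(τ,k)|² dk finite for each τ ∈ (−τ*,τ*); and (iv) for a.e. k ∈ ℝ and all τ ∈ (−τ*,τ*): f(τ,k) = f₀(k) −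 i k ∫₀^τ ∫_ℝ S(k−ℓ,ℓ) f(σ,k−ℓ) f(σ,ℓ) dℓ dσ. -/

import Mathlib

open MeasureTheory

/-- The kernel `Λ` of the surface-wave amplitude equation. -/
noncomputable def Lam (k l : ℝ) : ℝ :=
  if (k, l) = ((0 : ℝ), (0 : ℝ)) then 0
  else 2 * |k + l| * |k| * |l| / (|k + l| + |k| + |l|)

/-- The kernel `S` of the noncanonical form of the amplitude equation. -/
noncomputable def Sker (k l : ℝ) : ℝ :=
  if k * l * (k + l) ≠ 0 then Lam k l / Real.sqrt |k * l * (k + l)| else 0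

lemma Sker_eq (a b : ℝ) :
    Sker a b = 2 * Real.sqrt (|a| * |b| * |a + b|) / (|a + b| + |a| + |b|) := by
  unfold Sker
  split_ifs with h
  · have ha : a ≠ 0 := by rintro rfl; simp at h
    have hb : b ≠ 0 := by rintro rfl; simp at h
    have hc : a + b ≠ 0 := by intro h'; simp [h'] at h
    have hL : Lam a b = 2 * |a + b| * |a| * |b| / (|a + b| + |a| + |b|) := by
      unfold Lam
      rw [if_neg]
      simp [ha]
    rw [hL, abs_mul, abs_mul]
    have hx : 0 < |a| * |b| * |a + b| := by positivity
    have hs : Real.sqrt (|a| * |b| * |a + b|) ≠ 0 := (Real.sqrt_pos.2 hx).ne'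
    have hd : 0 < |a + b| + |a| + |b| := by positivity
    rw [div_div, div_eq_div_iff (by positivity) (by positivity)]
    have := Real.mul_self_sqrt hx.le
    linear_combination (-2 * (|a + b| + |a| + |b|)) * this
  · push Not at h
    rw [← abs_mul, ← abs_mul, h]
    simp

lemma Sker_nonneg (a b : ℝ) : 0 ≤ Sker a b := by
  rw [Sker_eq]; positivity

lemma Sker_comm (a b : ℝ) : Sker a b = Sker b a := by
  rw [Sker_eq, Sker_eq, add_comm b a, mul_comm |b| |a|]
  ring

lemma Sker_neg (a b : ℝ) : Sker (-a) (-b) = Sker a b := by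
  rw [Sker_eq, Sker_eq, ← neg_add, abs_neg, abs_neg, abs_neg]

lemma Sker_rot (a b : ℝ) : Sker (-a) (a + b) = Sker a b := by
  rw [Sker_eq, Sker_eq, abs_neg, neg_add_cancel_left,
    show |a| * |a + b| * |b| = |a| * |b| * |a + b| by ring]
  congr 1; ring

lemma Sker_swap (k l : ℝ) : Sker (l - k) k = Sker (k - l) l := by
  have := Sker_rot (k - l) l
  rwa [neg_sub, sub_add_cancel] at this

lemma Sker_le_left (a b : ℝ) : Sker a b ≤ Real.sqrt |a| := by
  rw [Sker_eq]
  apply div_le_of_le_mul₀ (by positivity) (by positivity)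
  rw [mul_assoc, Real.sqrt_mul (by positivity)]
  have h1 : 2 * Real.sqrt (|b| * |a + b|) ≤ |a + b| + |b| := by
    rw [Real.sqrt_mul (by positivity)]
    nlinarith [sq_nonneg (Real.sqrt |b| - Real.sqrt |a+b|), Real.mul_self_sqrt (abs_nonneg b),
      Real.mul_self_sqrt (abs_nonneg (a+b))]
  have h2 := Real.sqrt_nonneg |a|
  nlinarith [abs_nonneg a]

lemma Sker_le_right (a b : ℝ) : Sker a b ≤ Real.sqrt |b| := by
  rw [Sker_comm]; exact Sker_le_left b a

lemma Sker_le_add (a b : ℝ) : Sker a b ≤ Real.sqrt |a + b| := by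
  rw [← Sker_rot]; exact Sker_le_right _ _

lemma Sker_meas : Measurable (fun p : ℝ × ℝ => Sker p.1 p.2) := by
  have : (fun p : ℝ × ℝ => Sker p.1 p.2) = fun p : ℝ × ℝ =>
    2 * Real.sqrt (|p.1| * |p.2| * |p.1 + p.2|) / (|p.1 + p.2| + |p.1| + |p.2|) := by
    ext p; exact Sker_eq _ _
  rw [this]
  fun_prop

lemma Sker_meas' {α : Type*} [MeasurableSpace α] {f g : α → ℝ} (hf : Measurable f)
    (hg : Measurable g) : Measurable (fun x => Sker (f x) (g x)) :=
  Sker_meas.comp (hf.prodMk hg)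

/-! Admissible weights -/

structure Adm (p : ℝ) (V : ℝ → ℝ) : Prop where
  meas : Measurable V
  nonneg : ∀ x, 0 ≤ V x
  even : ∀ x, V |x| = V x
  mono : ∀ x y, 0 ≤ x → x ≤ y → V x ≤ V y
  dbl : ∀ x y, 0 ≤ x → x ≤ y → 0 < y → V (x + y) ≤ (1 + x / y) ^ p * V y

lemma pow_lin {p t : ℝ} (hp : 1 ≤ p) (h0 : 0 ≤ t) (h1 : t ≤ 1) :
    (1 + t) ^ p ≤ 1 + t * 2 ^ p := by
  have := (convexOn_rpow hp).2 (show (1:ℝ) ∈ Set.Ici 0 by simp) (show (2:ℝ) ∈ Set.Ici 0 by simp)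
    (show 0 ≤ 1 - t by linarith) h0 (by ring)
  simp only [smul_eq_mul, Real.one_rpow] at this
  rw [show (1 - t) * 1 + t * 2 = 1 + t by ring] at this
  linarith

lemma Adm.core {p : ℝ} {V : ℝ → ℝ} (h : Adm p V) (hp : 1 ≤ p) {x y : ℝ} (hx : 0 ≤ x)
    (hxy : x ≤ y) :
    |(x + y) * V (x + y) - x * V x - y * V y| ≤ 2 ^ (p + 1) * (x * V y) := by
  have hm1 := h.mono x (x + y) hx (by linarith)
  have hm2 := h.mono y (x + y) (by linarith) (by linarith)
  rw [abs_of_nonneg (by nlinarith)]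
  have hn := h.nonneg y
  have hnx := h.nonneg x
  rcases eq_or_lt_of_le (hx.trans hxy) with hy | hy
  · have : x = 0 := by linarith
    subst this; subst hy; simp
  have hd := h.dbl x y hx hxy hy
  have ht0 : 0 ≤ x / y := by positivity
  have ht1 : x / y ≤ 1 := by rw [div_le_one hy]; exact hxy
  have hl := pow_lin hp ht0 ht1
  have h3 : V (x + y) ≤ (1 + x / y * 2 ^ p) * V y := hd.trans (by gcongr)
  have h2p : (1:ℝ) ≤ 2 ^ p := Real.one_le_rpow (by norm_num) (by linarith)
  have h4 : V (x + y) ≤ 2 ^ p * V y := by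
    refine hd.trans ?_
    gcongr
    linarith
  have h5 : y * V (x + y) ≤ y * V y + x * 2 ^ p * V y := by
    calc y * V (x + y) ≤ y * ((1 + x / y * 2 ^ p) * V y) := by gcongr
      _ = _ := by field_simp
  rw [Real.rpow_add_one (by norm_num)]
  have h6 : x * V (x + y) ≤ x * (2 ^ p * V y) := by gcongr
  nlinarith [mul_nonneg hx hnx]

/-- sum over triples -/
lemma Adm.core2 {p : ℝ} {V : ℝ → ℝ} (h : Adm p V) (hp : 1 ≤ p) {a b c σ X Y Z : ℝ} (ha : 0 ≤ a)
    (hab : a ≤ b) (hc : c = a + b) (hσ0 : 0 ≤ σ) (hσ : σ ≤ Real.sqrt a)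
    (hX : 0 ≤ X) (hY : 0 ≤ Y) (hZ : 0 ≤ Z) :
    |c * V c - a * V a - b * V b| * σ * (X * Y * Z) ≤
      2 ^ p * (a ^ (3/2 : ℝ) * X * (V b * Y ^ 2 + V c * Z ^ 2)) := by
  subst hc
  have h1 := h.core hp ha hab
  have hm := h.mono b (a + b) (by linarith) (by linarith)
  have hn := h.nonneg b
  have e : a ^ (3/2 : ℝ) = a * Real.sqrt a := by
    rw [Real.sqrt_eq_rpow, show (3/2:ℝ) = 1 + 1/2 by norm_num, Real.rpow_add' ha (by norm_num), Real.rpow_one]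
  have h2 : V b * (Y * Z) * 2 ≤ V b * Y ^ 2 + V (a + b) * Z ^ 2 := by
    nlinarith [mul_nonneg hn (sq_nonneg (Y - Z)), mul_le_mul_of_nonneg_right hm (sq_nonneg Z)]
  rw [e]
  have h3 := Real.sqrt_nonneg a
  have h2p : (0:ℝ) < 2 ^ p := by positivity
  calc _ ≤ 2 ^ (p + 1) * (a * V b) * Real.sqrt a * (X * Y * Z) := by gcongr
    _ = 2 ^ p * (a * Real.sqrt a * X * (V b * (Y * Z) * 2)) := by
        rw [Real.rpow_add_one (by norm_num)]; ring
    _ ≤ _ := by gcongr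

/-- the pointwise symmetrized bound -/
lemma Adm.tri {p : ℝ} {V : ℝ → ℝ} (h : Adm p V) (hp : 1 ≤ p) {a b c X Y Z : ℝ} (hc : c = a + b)
    (hX : 0 ≤ X) (hY : 0 ≤ Y) (hZ : 0 ≤ Z) :
    |a * V a + b * V b - c * V c| * Sker a b * (X * Y * Z) ≤
      2 ^ p * (|a| ^ (3/2 : ℝ) * X * (V b * Y ^ 2 + V c * Z ^ 2)
        + |b| ^ (3/2 : ℝ) * Y * (V a * X ^ 2 + V c * Z ^ 2)
        + |c| ^ (3/2 : ℝ) * Z * (V a * X ^ 2 + V b * Y ^ 2)) := by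
  have hS := Sker_nonneg a b
  have hSa := Sker_le_left a b
  have hSb := Sker_le_right a b
  have hSc := Sker_le_add a b
  rw [← hc] at hSc
  have hVa := h.nonneg a
  have hVb := h.nonneg b
  have hVc := h.nonneg c
  have ta : 0 ≤ 2 ^ p * (|a| ^ (3/2 : ℝ) * X * (V b * Y ^ 2 + V c * Z ^ 2)) := by positivity
  have tb : 0 ≤ 2 ^ p * (|b| ^ (3/2 : ℝ) * Y * (V a * X ^ 2 + V c * Z ^ 2)) := by positivity
  have tc : 0 ≤ 2 ^ p * (|c| ^ (3/2 : ℝ) * Z * (V a * X ^ 2 + V b * Y ^ 2)) := by positivity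
  have key : ∀ u v w : ℝ, |u| ≤ |v| → |w| = |u| + |v| → ∀ X Y Z : ℝ, 0 ≤ X → 0 ≤ Y → 0 ≤ Z →
      Sker a b ≤ Real.sqrt |u| → 
      |(|w| * V w - |u| * V u - |v| * V v)| * Sker a b * (X * Y * Z) ≤
      2 ^ p * (|u| ^ (3/2 : ℝ) * X * (V v * Y ^ 2 + V w * Z ^ 2)) := by
    intro u v w huv hw X Y Z hX hY hZ hs
    have := h.core2 hp (abs_nonneg u) huv hw hS hs hX hY hZ
    rwa [h.even, h.even, h.even] at this
  have main : (|c| = |a| + |b| ∧ |a * V a + b * V b - c * V c| = |(|c| * V c - |a| * V a - |b| * V b)|)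
     ∨ (|a| = |b| + |c| ∧ |a * V a + b * V b - c * V c| = |(|a| * V a - |b| * V b - |c| * V c)|)
     ∨ (|b| = |a| + |c| ∧ |a * V a + b * V b - c * V c| = |(|b| * V b - |a| * V a - |c| * V c)|) := by
    rcases le_total 0 a with h1 | h1 <;> rcases le_total 0 b with h2 | h2 <;>
    rcases le_total 0 c with h3 | h3 <;>
    simp only [abs_of_nonneg, abs_of_nonpos, h1, h2, h3]
    · left; exact ⟨by linarith, by rw [← abs_neg]; congr 1; ring⟩
    · left; exact ⟨by linarith, by 
        have : c = 0 := by linarith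
        have : a = 0 := by linarith
        have : b = 0 := by linarith
        simp [*]⟩
    · right; left; exact ⟨by linarith, by congr 1; ring⟩
    · right; right; exact ⟨by linarith, by rw [← abs_neg]; congr 1; ring⟩
    · right; right; exact ⟨by linarith, by congr 1; ring⟩
    · right; left; exact ⟨by linarith, by rw [← abs_neg]; congr 1; ring⟩
    · left; exact ⟨by linarith, by 
        have : c = 0 := by linarith
        have : a = 0 := by linarith
        have : b = 0 := by linarith
        simp [*]⟩
    · left; exact ⟨by linarith, by congr 1; ring⟩
  rcases main with ⟨e, e'⟩ | ⟨e, e'⟩ | ⟨e, e'⟩ <;> rw [e']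
  · rcases le_total |a| |b| with hl | hl
    · have := key a b c hl e X Y Z hX hY hZ hSa
      linarith
    · have := key b a c hl (by linarith) Y X Z hY hX hZ hSb
      rw [sub_right_comm, mul_comm Y X] at this
      linarith
  · rcases le_total |b| |c| with hl | hl
    · have := key b c a hl e Y Z X hY hZ hX hSb
      rw [show Y * Z * X = X * Y * Z by ring] at this
      linarith
    · have := key c b a hl (by linarith) Z Y X hZ hY hX hSc
      rw [sub_right_comm, show Z * Y * X = X * Y * Z by ring] at this
      linarith
  · rcases le_total |a| |c| with hl | hl
    · have := key a c b hl e X Z Y hX hZ hY hSa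
      rw [show X * Z * Y = X * Y * Z by ring] at this
      linarith
    · have := key c a b hl (by linarith) Z X Y hZ hX hY hSc
      rw [sub_right_comm, show Z * X * Y = X * Y * Z by ring] at this
      linarith

open MeasureTheory

lemma mp_ab : MeasurePreserving (fun z : ℝ × ℝ => (z.1 - z.2, z.2)) volume volume :=
  measurePreserving_sub_prod volume volume

lemma mp_ca : MeasurePreserving (fun z : ℝ × ℝ => (z.1, z.1 - z.2)) volume volume :=
  MeasurePreserving.skew_product (g := fun k l : ℝ => k - l) (MeasurePreserving.id volume)
    (measurable_fst.sub measurable_snd) (Filter.Eventually.of_forall fun k =>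
      (Measure.measurePreserving_sub_left volume k).map_eq)

lemma iadd {α E : Type*} [MeasurableSpace α] {μ : Measure α} [NormedAddCommGroup E]
    [NormedSpace ℝ E] {f g : α → E} (hf : Integrable f μ) (hg : Integrable g μ) :
    Integrable (fun z => f z + g z) μ ∧ ∫ z, (f z + g z) ∂μ = (∫ z, f z ∂μ) + ∫ z, g z ∂μ :=
  ⟨hf.add hg, integral_add hf hg⟩

lemma mp_swap : MeasurePreserving (fun z : ℝ × ℝ => (z.2, z.1)) volume volume :=
  Measure.measurePreserving_swap

lemma mp_id : MeasurePreserving (fun z : ℝ × ℝ => (z.1, z.2)) volume volume :=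
  MeasurePreserving.id _

lemma mp_int {E : Type*} [NormedAddCommGroup E] [NormedSpace ℝ E] {φ : ℝ × ℝ → ℝ × ℝ}
    (hφ : MeasurePreserving φ volume volume)
    {F : ℝ × ℝ → E} (hF : Integrable F) :
    Integrable (fun z => F (φ z)) ∧ ∫ z, F (φ z) = ∫ z, F z := by
  refine ⟨hφ.integrable_comp_of_integrable hF, ?_⟩
  have h := integral_map (μ := volume) hφ.measurable.aemeasurable (f := F)
    (by rw [hφ.map_eq]; exact hF.1)
  rw [hφ.map_eq] at h
  exact h.symm

lemma mp_prod {α β : ℝ → ℝ} {φ : ℝ × ℝ → ℝ × ℝ}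
    (hφ : MeasurePreserving φ volume volume) (hα : Integrable α) (hβ : Integrable β) :
    Integrable (fun z => α (φ z).1 * β (φ z).2) ∧
      ∫ z, α (φ z).1 * β (φ z).2 = (∫ x, α x) * ∫ x, β x := by
  have h := mp_int hφ (F := fun z => α z.1 * β z.2) (hα.mul_prod hβ)
  refine ⟨h.1, ?_⟩
  rw [h.2]
  exact integral_prod_mul α β

lemma sym3 {p : ℝ} {V : ℝ → ℝ} (hV : Adm p V) (hp : 1 ≤ p) {f : ℝ → ℂ}
    (hreal : ∀ k, f (-k) = (starRingEnd ℂ) (f k))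
    (hint : Integrable (fun z : ℝ × ℝ => ((z.1 * V z.1 * Sker (z.1 - z.2) z.2 : ℝ) : ℂ) *
      (f (z.1 - z.2) * f z.2 * (starRingEnd ℂ) (f z.1))))
    (hA : Integrable (fun k => |k| ^ (3/2 : ℝ) * ‖f k‖))
    (hE : Integrable (fun k => V k * ‖f k‖ ^ 2)) :
    |(∫ z : ℝ × ℝ, ((z.1 * V z.1 * Sker (z.1 - z.2) z.2 : ℝ) : ℂ) *
      (f (z.1 - z.2) * f z.2 * (starRingEnd ℂ) (f z.1))).im| ≤
    2 * 2 ^ p * (∫ k, |k| ^ (3/2 : ℝ) * ‖f k‖) * ∫ k, V k * ‖f k‖ ^ 2 := by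
  set G : ℝ × ℝ → ℂ := fun z => f (z.1 - z.2) * f z.2 * (starRingEnd ℂ) (f z.1) with hG
  set F1 : ℝ × ℝ → ℂ := fun z => ((z.1 * V z.1 * Sker (z.1 - z.2) z.2 : ℝ) : ℂ) * G z with hF1
  set F2 : ℝ × ℝ → ℂ := fun z => ((z.2 * V z.2 * Sker (z.1 - z.2) z.2 : ℝ) : ℂ) * G z with hF2
  set F3 : ℝ × ℝ → ℂ := fun z =>
    (((z.1 - z.2) * V (z.1 - z.2) * Sker (z.1 - z.2) z.2 : ℝ) : ℂ) * G z with hF3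
  have hi1 : Integrable F1 := hint
  have e2 : F2 = fun z => (starRingEnd ℂ) (F1 (z.2, z.1)) := by
    ext z
    simp only [hF2, hF1, hG, map_mul, Complex.conj_ofReal, Complex.conj_conj]
    rw [Sker_swap z.1 z.2, ← hreal (z.2 - z.1), neg_sub]
    ring
  have e3 : F3 = fun z => F2 (z.1, z.1 - z.2) := by
    ext z
    simp only [hF2, hF3, hG, sub_sub_cancel]
    rw [Sker_comm (z.1 - z.2)]
    ring
  have hconj : Integrable (fun z => (starRingEnd ℂ) (F1 z)) :=
    (LinearIsometryEquiv.integrable_comp_iff Complex.conjLIE).2 hi1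
  have q2 := mp_int mp_swap hconj
  have q3 := mp_int mp_ca (F := F2) (by rw [e2]; exact q2.1)
  have hi2 : Integrable F2 := by rw [e2]; exact q2.1
  have hi3 : Integrable F3 := by rw [e3]; exact q3.1
  have v2 : ∫ z, F2 z = (starRingEnd ℂ) (∫ z, F1 z) := by
    rw [e2, ← integral_conj]; exact q2.2
  have v3 : ∫ z, F3 z = (starRingEnd ℂ) (∫ z, F1 z) := by
    rw [e3, ← v2]; exact q3.2
  have vs : ∫ z, (F3 z + F2 z - F1 z) = 2 * (starRingEnd ℂ) (∫ z, F1 z) - ∫ z, F1 z := by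
    rw [integral_sub (iadd hi3 hi2).1 hi1, integral_add hi3 hi2, v2, v3]; ring
  set α : ℝ → ℝ := fun k => |k| ^ (3/2 : ℝ) * ‖f k‖ with hα
  set β : ℝ → ℝ := fun k => V k * ‖f k‖ ^ 2 with hβ
  have r1 := mp_prod mp_ab hA hE
  have r2 := mp_prod (mp_swap.comp mp_ca) hA hE
  have r3 := mp_prod (mp_swap.comp mp_ab) hA hE
  have r4 := mp_prod mp_swap hA hE
  have r5 := mp_prod mp_ca hA hE
  have r6 := mp_prod mp_id hA hE
  simp only [Function.comp_def] at r1 r2 r3 r4 r5 r6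
  have hb : ∀ z : ℝ × ℝ, ‖F3 z + F2 z - F1 z‖ ≤ 2 ^ p *
      ((α (z.1 - z.2) * β z.2 + α (z.1 - z.2) * β z.1) +
       (α z.2 * β (z.1 - z.2) + α z.2 * β z.1) +
       (α z.1 * β (z.1 - z.2) + α z.1 * β z.2)) := by
    intro z
    have ht := hV.tri hp (show z.1 = (z.1 - z.2) + z.2 by ring) (norm_nonneg (f (z.1 - z.2)))
      (norm_nonneg (f z.2)) (norm_nonneg (f z.1))
    have : F3 z + F2 z - F1 z = ((((z.1 - z.2) * V (z.1 - z.2) + z.2 * V z.2 - z.1 * V z.1) *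
        Sker (z.1 - z.2) z.2 : ℝ) : ℂ) * G z := by
      simp only [hF1, hF2, hF3]; push_cast; ring
    rw [this, norm_mul, Complex.norm_real, Real.norm_eq_abs, abs_mul, abs_of_nonneg (Sker_nonneg _ _),
      hG]
    simp only [norm_mul, RCLike.norm_conj]
    refine ht.trans (le_of_eq ?_)
    simp only [hα, hβ]; ring
  have t1 := iadd r1.1 r2.1
  have t2 := iadd r3.1 r4.1
  have t3 := iadd r5.1 r6.1
  have t4 := iadd t1.1 t2.1
  have t5 := iadd t4.1 t3.1
  have hbi := norm_integral_le_of_norm_le (t5.1.const_mul (2 ^ p)) (Filter.Eventually.of_forall hb)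
  rw [integral_const_mul, t5.2, t4.2, t3.2, t2.2, t1.2, 
    r1.2, r2.2, r3.2, r4.2, r5.2, r6.2] at hbi
  rw [vs] at hbi
  have him : |(2 * (starRingEnd ℂ) (∫ z, F1 z) - ∫ z, F1 z).im| = 3 * |(∫ z, F1 z).im| := by
    simp only [Complex.sub_im, Complex.mul_im, Complex.conj_im, Complex.conj_re]
    norm_num
    rw [show -(2 * (∫ z, F1 z).im) - (∫ z, F1 z).im = -(3 * (∫ z, F1 z).im) by ring, abs_neg, abs_mul]
    norm_num
  have := (Complex.abs_im_le_norm _).trans hbi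
  rw [him] at this
  linarith

lemma sym2 {h w : ℝ → ℂ}
    (hreal : ∀ᵐ k, h (-k) = (starRingEnd ℂ) (h k))
    (hint : Integrable (fun z : ℝ × ℝ => ((z.1 * Sker (z.1 - z.2) z.2 : ℝ) : ℂ) *
      (h (z.1 - z.2) * w z.2 * (starRingEnd ℂ) (w z.1))))
    (hA : Integrable (fun k => |k| ^ (3/2 : ℝ) * ‖h k‖))
    (hE : Integrable (fun k => ‖w k‖ ^ 2)) :
    |(∫ z : ℝ × ℝ, ((z.1 * Sker (z.1 - z.2) z.2 : ℝ) : ℂ) *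
      (h (z.1 - z.2) * w z.2 * (starRingEnd ℂ) (w z.1))).im| ≤
    1 / 2 * (∫ k, |k| ^ (3/2 : ℝ) * ‖h k‖) * ∫ k, ‖w k‖ ^ 2 := by
  set G : ℝ × ℝ → ℂ := fun z => h (z.1 - z.2) * w z.2 * (starRingEnd ℂ) (w z.1) with hG
  set F1 : ℝ × ℝ → ℂ := fun z => ((z.1 * Sker (z.1 - z.2) z.2 : ℝ) : ℂ) * G z with hF1
  set F2 : ℝ × ℝ → ℂ := fun z => ((z.2 * Sker (z.1 - z.2) z.2 : ℝ) : ℂ) * G z with hF2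
  have hi1 : Integrable F1 := hint
  have hre : ∀ᵐ z : ℝ × ℝ, h (-(z.2 - z.1)) = (starRingEnd ℂ) (h (z.2 - z.1)) := by
    have h1 : MeasurePreserving (fun z : ℝ × ℝ => (z.2 - z.1, z.1)) volume volume :=
      mp_ab.comp mp_swap
    have h2 : ∀ᵐ z : ℝ × ℝ, h (-z.1) = (starRingEnd ℂ) (h z.1) :=
      (Measure.quasiMeasurePreserving_fst (μ := volume) (ν := volume)).ae hreal
    exact h1.quasiMeasurePreserving.ae h2
  have e2 : F2 =ᵐ[volume] fun z => (starRingEnd ℂ) (F1 (z.2, z.1)) := by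
    filter_upwards [hre] with z hz
    simp only [hF2, hF1, hG, map_mul, Complex.conj_ofReal, Complex.conj_conj]
    rw [Sker_swap z.1 z.2, ← hz, neg_sub]
    ring
  have hconj : Integrable (fun z => (starRingEnd ℂ) (F1 z)) :=
    (LinearIsometryEquiv.integrable_comp_iff Complex.conjLIE).2 hi1
  have q2 := mp_int mp_swap hconj
  have hi2 : Integrable F2 := q2.1.congr e2.symm
  have v2 : ∫ z, F2 z = (starRingEnd ℂ) (∫ z, F1 z) := by
    rw [integral_congr_ae e2, ← integral_conj]; exact q2.2
  have vs : ∫ z, (F2 z - F1 z) = (starRingEnd ℂ) (∫ z, F1 z) - ∫ z, F1 z := by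
    rw [integral_sub hi2 hi1, v2]
  set α : ℝ → ℝ := fun k => |k| ^ (3/2 : ℝ) * ‖h k‖ with hα
  set β : ℝ → ℝ := fun k => ‖w k‖ ^ 2 with hβ
  have r1 := mp_prod mp_ab hA hE
  have r2 := mp_prod (mp_swap.comp mp_ca) hA hE
  simp only [Function.comp_def] at r1 r2
  have hb : ∀ z : ℝ × ℝ, ‖F2 z - F1 z‖ ≤ 1 / 2 *
      (α (z.1 - z.2) * β z.2 + α (z.1 - z.2) * β z.1) := by
    intro z
    have : F2 z - F1 z = (((z.2 - z.1) * Sker (z.1 - z.2) z.2 : ℝ) : ℂ) * G z := by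
      simp only [hF1, hF2]; push_cast; ring
    rw [this, norm_mul, Complex.norm_real, Real.norm_eq_abs, abs_mul, abs_of_nonneg (Sker_nonneg _ _),
      hG, abs_sub_comm]
    simp only [norm_mul, RCLike.norm_conj, hα, hβ]
    have e : |z.1 - z.2| ^ (3/2 : ℝ) = |z.1 - z.2| * Real.sqrt |z.1 - z.2| := by
      rw [Real.sqrt_eq_rpow, show (3/2:ℝ) = 1 + 1/2 by norm_num,
        Real.rpow_add' (abs_nonneg _) (by norm_num), Real.rpow_one]
    rw [e]
    have hs := Sker_le_left (z.1 - z.2) z.2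
    calc _ ≤ |z.1 - z.2| * Real.sqrt |z.1 - z.2| * (‖h (z.1 - z.2)‖ * ‖w z.2‖ * ‖w z.1‖) := by gcongr
      _ = |z.1 - z.2| * Real.sqrt |z.1 - z.2| * ‖h (z.1 - z.2)‖ * (‖w z.2‖ * ‖w z.1‖) := by ring
      _ ≤ |z.1 - z.2| * Real.sqrt |z.1 - z.2| * ‖h (z.1 - z.2)‖ *
          (1 / 2 * (‖w z.2‖ ^ 2 + ‖w z.1‖ ^ 2)) := by
        refine mul_le_mul_of_nonneg_left ?_ (by positivity)
        nlinarith [sq_nonneg (‖w z.2‖ - ‖w z.1‖)]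
      _ = _ := by ring
  have hbi := norm_integral_le_of_norm_le ((r1.1.add r2.1).const_mul (1 / 2))
    (Filter.Eventually.of_forall hb)
  simp only [Pi.add_apply] at hbi
  rw [integral_const_mul, integral_add r1.1 r2.1, r1.2, r2.2, vs] at hbi
  have him : |((starRingEnd ℂ) (∫ z, F1 z) - ∫ z, F1 z).im| = 2 * |(∫ z, F1 z).im| := by
    simp only [Complex.sub_im, Complex.conj_im]
    rw [show -((∫ z, F1 z).im) - (∫ z, F1 z).im = -(2 * (∫ z, F1 z).im) by ring, abs_neg, abs_mul]
    norm_num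
  have := (Complex.abs_im_le_norm _).trans hbi
  rw [him] at this
  linarith

open MeasureTheory Set

lemma gron_pos {T c d : ℝ} (hT : 0 ≤ T) (hc : 0 ≤ c) (hd : 0 ≤ d) {E q : ℝ → ℝ}
    (hE0 : ∀ τ ∈ Icc 0 T, 0 ≤ E τ)
    (hqi : IntegrableOn q (Icc 0 T))
    (hE : ∀ τ ∈ Icc 0 T, E τ = E 0 + ∫ σ in (0:ℝ)..τ, q σ)
    (hq : ∀ σ ∈ Icc 0 T, |q σ| ≤ c * E σ + d) :
    ∀ τ ∈ Icc 0 T, E τ ≤ (E 0 + d * T) * Real.exp (c * T) := by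
  have h0 : (0:ℝ) ∈ Icc 0 T := ⟨le_rfl, hT⟩
  have hprim : ContinuousOn (fun τ => ∫ σ in (0:ℝ)..τ, q σ) (Icc 0 T) := by
    have := intervalIntegral.continuousOn_primitive_interval (μ := volume) (f := q) (a := 0) (b := T)
      (by rwa [uIcc_of_le hT])
    rwa [uIcc_of_le hT] at this
  have hEc : ContinuousOn E (Icc 0 T) :=
    ((continuousOn_const (c := E 0)).add hprim).congr hE
  have hEi : IntervalIntegrable E volume 0 T := by
    apply ContinuousOn.intervalIntegrable; rwa [uIcc_of_le hT]
  set y : ℝ → ℝ := fun τ => E 0 + d * T + c * ∫ σ in (0:ℝ)..τ, E σ with hy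
  have hsub : ∀ τ ∈ Icc 0 T, uIcc 0 τ ⊆ Icc 0 T := by
    intro τ hτ; rw [uIcc_of_le hτ.1]; exact Icc_subset_Icc_right hτ.2
  have hEy : ∀ τ ∈ Icc 0 T, E τ ≤ y τ := by
    intro τ hτ
    have hEi' : IntervalIntegrable E volume 0 τ := (hEc.mono (hsub τ hτ)).intervalIntegrable
    have hqi' : IntervalIntegrable q volume 0 τ := by
      rw [intervalIntegrable_iff, uIoc_of_le hτ.1]
      exact hqi.mono_set (Ioc_subset_Icc_self.trans (Icc_subset_Icc_right hτ.2))
    rw [hE τ hτ, hy]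
    have : ∫ σ in (0:ℝ)..τ, q σ ≤ ∫ σ in (0:ℝ)..τ, (c * E σ + d) := by
      apply intervalIntegral.integral_mono_on hτ.1 hqi'
        ((hEi'.const_mul c).add intervalIntegrable_const)
      intro σ hσ
      exact (le_abs_self _).trans (hq σ ⟨hσ.1, hσ.2.trans hτ.2⟩)
    rw [intervalIntegral.integral_add (hEi'.const_mul c) intervalIntegrable_const,
      intervalIntegral.integral_const_mul, intervalIntegral.integral_const] at this
    simp only [sub_zero, smul_eq_mul] at this
    have := mul_le_mul_of_nonneg_left hτ.2 hd
    simp only; nlinarith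
  have hyc : ContinuousOn y (Icc 0 T) := by
    have := intervalIntegral.continuousOn_primitive_interval (μ := volume) (f := E) (a := 0) (b := T)
      (by rw [uIcc_of_le hT]; exact hEc.integrableOn_Icc)
    rw [uIcc_of_le hT] at this
    exact continuousOn_const.add (continuousOn_const.mul this)
  have hyd : ∀ x ∈ Ico 0 T, HasDerivWithinAt y (c * E x) (Ici x) x := by
    intro x hx
    have hx' : x ∈ Icc 0 T := ⟨hx.1, hx.2.le⟩
    have hEi' : IntervalIntegrable E volume 0 x := (hEc.mono (hsub x hx')).intervalIntegrable
    have hmem : Icc 0 T ∈ nhdsWithin x (Ioi x) := Icc_mem_nhdsGT_of_mem hx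
    have hcw : ContinuousWithinAt E (Ioi x) x := (hEc x hx').mono_of_mem_nhdsWithin hmem
    have := intervalIntegral.integral_hasDerivWithinAt_right hEi' (s := Ici x) (t := Ioi x)
      ⟨Icc 0 T, hmem, hEc.aestronglyMeasurable measurableSet_Icc⟩ hcw
    exact (this.const_mul c).const_add _
  intro τ hτ
  have := norm_le_gronwallBound_of_norm_deriv_right_le (f := y) (δ := E 0 + d * T) (K := c) (ε := 0)
    hyc hyd (by
      have : 0 ≤ E 0 + d * T := by have := hE0 0 h0; positivity
      simp [hy, abs_of_nonneg this]) (by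
      intro x hx
      have hx' : x ∈ Icc 0 T := ⟨hx.1, hx.2.le⟩
      rw [Real.norm_eq_abs, Real.norm_eq_abs, abs_mul, abs_of_nonneg hc, abs_of_nonneg (hE0 x hx'), add_zero]
      exact mul_le_mul_of_nonneg_left ((hEy x hx').trans (le_abs_self _)) hc) τ hτ
  rw [gronwallBound_ε0, sub_zero] at this
  refine (hEy τ hτ).trans ((le_abs_self _).trans (this.trans ?_))
  have h1 : 0 ≤ E 0 + d * T := by have := hE0 0 h0; positivity
  gcongr
  exact hτ.2

lemma energy_pos {T c d B : ℝ} (hT : 0 ≤ T) (hc : 0 ≤ c) (hd : 0 ≤ d) {w Q : ℝ → ℝ → ℂ} {V : ℝ → ℝ}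
    (hwm : Measurable (Function.uncurry w)) (hQm : Measurable (Function.uncurry Q))
    (hVm : Measurable V) (hV0 : ∀ k, 0 ≤ V k)
    (hwc : ∀ᵐ k : ℝ, ContinuousOn (fun τ => w τ k) (Icc 0 T))
    (hQc : ∀ᵐ k : ℝ, ContinuousOn (fun τ => Q τ k) (Icc 0 T))
    (hder : ∀ᵐ k : ℝ, ∀ τ ∈ Ioo 0 T, HasDerivAt (fun τ => w τ k) (Q τ k) τ)
    (hEi : ∀ τ ∈ Icc 0 T, Integrable (fun k => V k * ‖w τ k‖ ^ 2))
    (hBi : ∀ τ ∈ Icc 0 T, Integrable (fun k => V k * (‖w τ k‖ * ‖Q τ k‖)))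
    (hB : ∀ τ ∈ Icc 0 T, ∫ k, V k * (‖w τ k‖ * ‖Q τ k‖) ≤ B)
    (hq : ∀ τ ∈ Icc 0 T, |∫ k, V k * (2 * ((starRingEnd ℂ) (w τ k) * Q τ k).re)| ≤
      c * (∫ k, V k * ‖w τ k‖ ^ 2) + d) :
    ∀ τ ∈ Icc 0 T, ∫ k, V k * ‖w τ k‖ ^ 2 ≤
      ((∫ k, V k * ‖w 0 k‖ ^ 2) + d * T) * Real.exp (c * T) := by
  have h0 : (0:ℝ) ∈ Icc 0 T := ⟨le_rfl, hT⟩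
  set Φ : ℝ → ℝ → ℝ := fun τ k => V k * (2 * ((starRingEnd ℂ) (w τ k) * Q τ k).re) with hΦ
  have hΦm : Measurable (Function.uncurry Φ) := by
    have h1 : Measurable fun z : ℝ × ℝ => ((starRingEnd ℂ) (w z.1 z.2) * Q z.1 z.2).re :=
      Complex.measurable_re.comp ((Complex.continuous_conj.measurable.comp hwm).mul hQm)
    exact (hVm.comp measurable_snd).mul (h1.const_mul 2)
  have hΦb : ∀ τ k, ‖Φ τ k‖ ≤ 2 * (V k * (‖w τ k‖ * ‖Q τ k‖)) := by
    intro τ k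
    rw [hΦ, norm_mul, norm_mul, Real.norm_of_nonneg (hV0 k), Real.norm_eq_abs, Real.norm_eq_abs,
      abs_of_nonneg (show (0:ℝ) ≤ 2 by norm_num)]
    have := Complex.abs_re_le_norm ((starRingEnd ℂ) (w τ k) * Q τ k)
    rw [norm_mul, RCLike.norm_conj] at this
    have h2 := mul_le_mul_of_nonneg_left this (hV0 k)
    linarith
  have hΦs : ∀ τ ∈ Icc 0 T, Integrable (Φ τ) := fun τ hτ =>
    ((hBi τ hτ).const_mul 2).mono' (hΦm.comp (measurable_prodMk_left)).aestronglyMeasurable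
      (Filter.Eventually.of_forall (hΦb τ))
  have hΦn : ∀ τ ∈ Icc 0 T, ∫ k, ‖Φ τ k‖ ≤ 2 * B := by
    intro τ hτ
    calc _ ≤ ∫ k, 2 * (V k * (‖w τ k‖ * ‖Q τ k‖)) :=
          integral_mono (hΦs τ hτ).norm ((hBi τ hτ).const_mul 2) (hΦb τ)
      _ ≤ _ := by rw [integral_const_mul]; linarith [hB τ hτ]
  have hprod : Integrable (Function.uncurry Φ) ((volume.restrict (Icc 0 T)).prod volume) := by
    rw [integrable_prod_iff hΦm.aestronglyMeasurable]
    constructor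
    · filter_upwards [ae_restrict_mem measurableSet_Icc] with τ hτ using hΦs τ hτ
    · refine Integrable.mono' (g := fun _ => 2 * B) (integrable_const _) ?_ ?_
      · exact (hΦm.norm.stronglyMeasurable.integral_prod_right' (ν := volume)).aestronglyMeasurable
      · filter_upwards [ae_restrict_mem measurableSet_Icc] with τ hτ
        rw [Real.norm_of_nonneg (integral_nonneg fun _ => norm_nonneg _)]
        exact hΦn τ hτ
  have hqi : IntegrableOn (fun τ => ∫ k, Φ τ k) (Icc 0 T) := hprod.integral_prod_left
  refine gron_pos hT hc hd (E := fun τ => ∫ k, V k * ‖w τ k‖ ^ 2) (q := fun τ => ∫ k, Φ τ k)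
    (fun τ _ => integral_nonneg fun k => mul_nonneg (hV0 k) (by positivity)) hqi ?_ hq
  intro τ hτ
  have hprod' : Integrable (Function.uncurry Φ) ((volume.restrict (Ioc 0 τ)).prod volume) :=
    hprod.mono_measure (Measure.prod_mono (Measure.restrict_mono 
      (Ioc_subset_Icc_self.trans (Icc_subset_Icc_right hτ.2)) le_rfl) le_rfl)
  have hswap : ∫ σ in (0:ℝ)..τ, ∫ k, Φ σ k = ∫ k, ∫ σ in (0:ℝ)..τ, Φ σ k := by
    simp only [intervalIntegral.integral_of_le hτ.1]
    exact integral_integral_swap hprod'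
  rw [hswap]
  have hpt : ∀ᵐ k : ℝ, ∫ σ in (0:ℝ)..τ, Φ σ k = V k * ‖w τ k‖ ^ 2 - V k * ‖w 0 k‖ ^ 2 := by
    filter_upwards [hwc, hQc, hder] with k h1 h2 h3
    have hsub : Icc 0 τ ⊆ Icc 0 T := Icc_subset_Icc_right hτ.2
    refine intervalIntegral.integral_eq_sub_of_hasDerivAt_of_le hτ.1
      (f := fun σ => V k * ‖w σ k‖ ^ 2) ?_ ?_ ?_
    · exact continuousOn_const.mul ((h1.mono hsub).norm.pow 2)
    · intro x hx
      have hd := (h3 x ⟨hx.1, hx.2.trans_le hτ.2⟩).norm_sq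
      have := hd.const_mul (V k)
      convert! this using 1
      simp only [hΦ, Complex.inner]
      ring_nf
    · apply ContinuousOn.intervalIntegrable
      rw [uIcc_of_le hτ.1]
      refine continuousOn_const.mul (continuousOn_const.mul ?_)
      exact Complex.continuous_re.comp_continuousOn
        ((Complex.continuous_conj.comp_continuousOn (h1.mono hsub)).mul (h2.mono hsub))
  rw [integral_congr_ae hpt, integral_sub (hEi τ hτ) (hEi 0 h0)]
  ring

lemma energy {T c d B : ℝ} (hT : 0 ≤ T) (hc : 0 ≤ c) (hd : 0 ≤ d) {w Q : ℝ → ℝ → ℂ} {V : ℝ → ℝ}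
    (hwm : Measurable (Function.uncurry w)) (hQm : Measurable (Function.uncurry Q))
    (hVm : Measurable V) (hV0 : ∀ k, 0 ≤ V k)
    (hwc : ∀ᵐ k : ℝ, ContinuousOn (fun τ => w τ k) (Icc (-T) T))
    (hQc : ∀ᵐ k : ℝ, ContinuousOn (fun τ => Q τ k) (Icc (-T) T))
    (hder : ∀ᵐ k : ℝ, ∀ τ ∈ Ioo (-T) T, HasDerivAt (fun τ => w τ k) (Q τ k) τ)
    (hEi : ∀ τ ∈ Icc (-T) T, Integrable (fun k => V k * ‖w τ k‖ ^ 2))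
    (hBi : ∀ τ ∈ Icc (-T) T, Integrable (fun k => V k * (‖w τ k‖ * ‖Q τ k‖)))
    (hB : ∀ τ ∈ Icc (-T) T, ∫ k, V k * (‖w τ k‖ * ‖Q τ k‖) ≤ B)
    (hq : ∀ τ ∈ Icc (-T) T, |∫ k, V k * (2 * ((starRingEnd ℂ) (w τ k) * Q τ k).re)| ≤
      c * (∫ k, V k * ‖w τ k‖ ^ 2) + d) :
    ∀ τ ∈ Icc (-T) T, ∫ k, V k * ‖w τ k‖ ^ 2 ≤
      ((∫ k, V k * ‖w 0 k‖ ^ 2) + d * T) * Real.exp (c * T) := by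
  intro τ hτ
  have hs : Icc 0 T ⊆ Icc (-T) T := Icc_subset_Icc_left (by linarith)
  have hn : ∀ σ ∈ Icc 0 T, -σ ∈ Icc (-T) T := fun σ h => ⟨by linarith [h.2], by linarith [h.1]⟩
  rcases le_total 0 τ with h | h
  · refine energy_pos hT hc hd hwm hQm hVm hV0 ?_ ?_ ?_ (fun σ hσ => hEi σ (hs hσ))
      (fun σ hσ => hBi σ (hs hσ)) (fun σ hσ => hB σ (hs hσ)) (fun σ hσ => hq σ (hs hσ)) τ ⟨h, hτ.2⟩
    · filter_upwards [hwc] with k hk using hk.mono hs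
    · filter_upwards [hQc] with k hk using hk.mono hs
    · filter_upwards [hder] with k hk σ hσ using hk σ ⟨by linarith [hσ.1], hσ.2⟩
  · have hnm : Measurable (fun z : ℝ × ℝ => (-z.1, z.2)) := by fun_prop
    have := energy_pos (w := fun σ k => w (-σ) k) (Q := fun σ k => - Q (-σ) k) (V := V) (B := B)
      hT hc hd (hwm.comp hnm) (hQm.comp hnm).neg hVm hV0 ?_ ?_ ?_ (fun σ hσ => hEi _ (hn σ hσ))
      (fun σ hσ => by simpa using hBi _ (hn σ hσ)) (fun σ hσ => by simpa using hB _ (hn σ hσ))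
      (fun σ hσ => by
        simp only [mul_neg, Complex.neg_re, integral_neg, abs_neg]; exact hq _ (hn σ hσ)) (-τ) ⟨by linarith, by linarith [hτ.1]⟩
    · simpa using this
    · filter_upwards [hwc] with k hk using hk.comp continuousOn_neg hn
    · filter_upwards [hQc] with k hk using (hk.comp continuousOn_neg hn).neg
    · filter_upwards [hder] with k hk σ hσ
      have h1 := hk (-σ) ⟨by linarith [hσ.2], by linarith [hσ.1]⟩
      have h2 := HasDerivAt.scomp σ h1 (hasDerivAt_neg σ)
      simpa [Function.comp_def] using h2

open MeasureTheory Set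

noncomputable def V0 (s k : ℝ) : ℝ := 1 + |k| ^ (2 * s)

lemma V0_one_le (s k : ℝ) : 1 ≤ V0 s k := by
  unfold V0; have : 0 ≤ |k| ^ (2 * s) := by positivity
  linarith

lemma V0_pos (s k : ℝ) : 0 < V0 s k := lt_of_lt_of_le one_pos (V0_one_le s k)

lemma V0_meas (s : ℝ) : Measurable (V0 s) := by unfold V0; fun_prop

lemma adm_one {p : ℝ} (hp : 0 ≤ p) : Adm p (fun _ => 1) where
  meas := measurable_const
  nonneg _ := zero_le_one
  even _ := rfl
  mono _ _ _ _ := le_rfl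
  dbl x y hx _ hy := by
    rw [mul_one]; apply Real.one_le_rpow _ hp
    have : 0 ≤ x / y := by positivity
    linarith

lemma V0_mono {s : ℝ} (hs : 0 ≤ s) {x y : ℝ} (h : |x| ≤ |y|) : V0 s x ≤ V0 s y := by
  unfold V0; gcongr

lemma V0_dbl {s : ℝ} (hs : 0 ≤ s) {x y : ℝ} (hx : 0 ≤ x) (hy : 0 < y) :
    V0 s (x + y) ≤ (1 + x / y) ^ (2 * s) * V0 s y := by
  unfold V0
  have h1 : 0 ≤ x / y := by positivity
  have h2 : 1 ≤ (1 + x / y) ^ (2 * s) := Real.one_le_rpow (by linarith) (by linarith)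
  have h3 : |x + y| = (1 + x / y) * |y| := by
    rw [abs_of_pos hy, abs_of_pos (by linarith)]; field_simp; ring
  rw [h3, Real.mul_rpow (by linarith) (abs_nonneg _)]
  linarith

lemma adm_V0 {s : ℝ} (hs : 0 ≤ s) : Adm (2 * s + 1) (V0 s) where
  meas := V0_meas s
  nonneg x := (V0_pos s x).le
  even x := by simp [V0]
  mono x y hx hxy := V0_mono hs (by rw [abs_of_nonneg hx, abs_of_nonneg (hx.trans hxy)]; exact hxy)
  dbl x y hx _ hy := by
    refine (V0_dbl hs hx hy).trans ?_
    have h1 : 0 ≤ x / y := by positivity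
    have := (V0_pos s y).le
    gcongr <;> linarith

noncomputable def VR (s R k : ℝ) : ℝ := V0 s k * min 1 (|k| / R)

lemma VR_le {s R : ℝ} (k : ℝ) : VR s R k ≤ V0 s k := by
  unfold VR
  have := (V0_pos s k).le
  calc _ ≤ V0 s k * 1 := by gcongr; exact min_le_left _ _
    _ = _ := mul_one _

lemma VR_eq {s R k : ℝ} (hR : 0 < R) (h : R ≤ |k|) : VR s R k = V0 s k := by
  unfold VR
  rw [min_eq_left ((one_le_div hR).2 h), mul_one]

lemma adm_VR {s R : ℝ} (hs : 0 ≤ s) (hR : 0 < R) : Adm (2 * s + 1) (VR s R) where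
  meas := by have := V0_meas s; unfold VR; fun_prop
  nonneg x := by have := (V0_pos s x).le; unfold VR; positivity
  even x := by simp [VR, V0]
  mono x y hx hxy := by
    unfold VR
    have := (V0_pos s x).le
    have h1 : |x| ≤ |y| := by rw [abs_of_nonneg hx, abs_of_nonneg (hx.trans hxy)]; exact hxy
    have h2 := V0_mono hs h1
    have h3 : 0 ≤ V0 s y := (V0_pos s y).le
    gcongr
  dbl x y hx _ hy := by
    unfold VR
    have h1 : 0 ≤ x / y := by positivity
    have h0 := (V0_pos s y).le
    have h2 : min 1 (|x + y| / R) ≤ (1 + x / y) * min 1 (|y| / R) := by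
      have h3 : |x + y| = (1 + x / y) * |y| := by
        rw [abs_of_pos hy, abs_of_pos (by linarith)]; field_simp; ring
      rw [h3, mul_min_of_nonneg _ _ (by linarith : (0:ℝ) ≤ 1 + x / y)]
      exact min_le_min (by linarith) (by rw [mul_div_assoc])
    rw [Real.rpow_add_one (by positivity)]
    calc _ ≤ ((1 + x / y) ^ (2 * s) * V0 s y) * ((1 + x / y) * min 1 (|y| / R)) := by
          gcongr; exact V0_dbl hs hx hy
      _ = _ := by ring

lemma rpow_le_V0 {s j : ℝ} (k : ℝ) (h0 : 0 ≤ j) (h : j ≤ 2 * s) : |k| ^ j ≤ V0 s k := by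
  unfold V0
  rcases le_total |k| 1 with h1 | h1
  · have := Real.rpow_le_one (abs_nonneg k) h1 h0
    have : 0 ≤ |k| ^ (2 * s) := by positivity
    linarith
  · have := Real.rpow_le_rpow_of_exponent_le h1 h
    linarith

lemma V0_inv_int {s j : ℝ} (h0 : 0 ≤ j) (h : j + 1 < 2 * s) :
    Integrable (fun k : ℝ => |k| ^ j / V0 s k) := by
  have hi : Integrable (fun k : ℝ => 2 ^ (2 * s) * (1 + ‖k‖) ^ (-(2 * s - j))) :=
    (integrable_one_add_norm (by simp; linarith)).const_mul _
  refine hi.mono' (by have := V0_meas s; exact (by fun_prop : Measurable _).aestronglyMeasurable) ?_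
  refine Filter.Eventually.of_forall fun k => ?_
  have hV := V0_pos s k
  rw [Real.norm_of_nonneg (by positivity), Real.norm_eq_abs, div_le_iff₀ hV]
  have ha := abs_nonneg k
  have h1 : (1 + |k|) ^ (2 * s) ≤ 2 ^ (2 * s) * V0 s k := by
    rcases le_total |k| 1 with h1 | h1
    · calc (1 + |k|) ^ (2 * s) ≤ 2 ^ (2 * s) := by gcongr <;> linarith
        _ ≤ 2 ^ (2 * s) * V0 s k := le_mul_of_one_le_right (by positivity) (V0_one_le s k)
    · calc (1 + |k|) ^ (2 * s) ≤ (2 * |k|) ^ (2 * s) := by gcongr <;> linarith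
        _ = 2 ^ (2 * s) * |k| ^ (2 * s) := Real.mul_rpow (by norm_num) ha
        _ ≤ _ := by unfold V0; gcongr; linarith
  have h2 : |k| ^ j ≤ (1 + |k|) ^ j := by gcongr; linarith
  calc |k| ^ j ≤ (1 + |k|) ^ j := h2
    _ = (1 + |k|) ^ (-(2 * s - j)) * (1 + |k|) ^ (2 * s) := by
        rw [← Real.rpow_add (by linarith)]; congr 1; ring
    _ ≤ (1 + |k|) ^ (-(2 * s - j)) * (2 ^ (2 * s) * V0 s k) := by gcongr
    _ = _ := by ring

lemma scale_int {s lam : ℝ} (hl : 0 < lam) :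
    (fun k : ℝ => |k| ^ (3:ℝ) / (lam ^ (2 * s) + |k| ^ (2 * s))) =
      fun k : ℝ => lam ^ (3 - 2 * s) * (fun x => |x| ^ (3:ℝ) / V0 s x) (lam⁻¹ * k) := by
  ext k
  simp only [V0]
  rw [abs_mul, abs_of_pos (inv_pos.2 hl), Real.mul_rpow (by positivity) (abs_nonneg _),
    Real.mul_rpow (by positivity) (abs_nonneg _), Real.inv_rpow hl.le, Real.inv_rpow hl.le,
    Real.rpow_sub hl]
  have h1 : 0 < lam ^ (2 * s) := by positivity
  have h2 : 0 < lam ^ (3:ℝ) := by positivity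
  have h3 : 0 ≤ |k| ^ (2 * s) := by positivity
  field_simp

structure Hs (s : ℝ) (f : ℝ → ℂ) : Prop where
  meas : Measurable f
  int : Integrable (fun k => V0 s k * ‖f k‖ ^ 2)

noncomputable def cj (s j : ℝ) : ℝ := ∫ k : ℝ, |k| ^ j / V0 s k

lemma cj_nonneg (s j : ℝ) : 0 ≤ cj s j :=
  integral_nonneg fun k => div_nonneg (by positivity) (V0_pos s k).le

lemma Hs.wt {s : ℝ} {f : ℝ → ℂ} (hf : Hs s f) {V : ℝ → ℝ} (hV : Measurable V) (h0 : ∀ k, 0 ≤ V k)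
    (h : ∀ k, V k ≤ V0 s k) : Integrable (fun k => V k * ‖f k‖ ^ 2) ∧
      ∫ k, V k * ‖f k‖ ^ 2 ≤ ∫ k, V0 s k * ‖f k‖ ^ 2 := by
  have hle : ∀ k, V k * ‖f k‖ ^ 2 ≤ V0 s k * ‖f k‖ ^ 2 := fun k => by have := h k; gcongr
  have hi : Integrable (fun k => V k * ‖f k‖ ^ 2) := by
    refine hf.int.mono' (hV.mul (hf.meas.norm.pow_const 2)).aestronglyMeasurable ?_
    refine Filter.Eventually.of_forall fun k => ?_
    rw [Real.norm_of_nonneg (by have := h0 k; positivity)]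
    exact hle k
  exact ⟨hi, integral_mono hi hf.int hle⟩

lemma Hs.L2 {s : ℝ} {f : ℝ → ℂ} (hf : Hs s f) : Integrable (fun k => ‖f k‖ ^ 2) ∧
      ∫ k, ‖f k‖ ^ 2 ≤ ∫ k, V0 s k * ‖f k‖ ^ 2 := by
  simpa using hf.wt measurable_const (fun _ => zero_le_one) (V0_one_le s)

lemma Hs.L1 {s : ℝ} {f : ℝ → ℂ} (hf : Hs s f) {j : ℝ} (h0 : 0 ≤ j) (h : 2 * j + 1 < 2 * s) :
    Integrable (fun k => |k| ^ j * ‖f k‖) ∧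
      ∫ k, |k| ^ j * ‖f k‖ ≤ 1 / 2 * (cj s (2 * j) + ∫ k, V0 s k * ‖f k‖ ^ 2) := by
  have hi := V0_inv_int (s := s) (j := 2 * j) (by linarith) h
  have hle : ∀ k, |k| ^ j * ‖f k‖ ≤ 1 / 2 * (|k| ^ (2 * j) / V0 s k + V0 s k * ‖f k‖ ^ 2) := by
    intro k
    have hV := V0_pos s k
    have e : |k| ^ (2 * j) = (|k| ^ j) ^ 2 := by
      rw [← Real.rpow_natCast, ← Real.rpow_mul (abs_nonneg k)]; congr 1; push_cast; ring
    rw [e]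
    have : 0 ≤ (|k| ^ j - V0 s k * ‖f k‖) ^ 2 / V0 s k := by positivity
    have e2 : (|k| ^ j - V0 s k * ‖f k‖) ^ 2 / V0 s k =
      (|k| ^ j) ^ 2 / V0 s k + V0 s k * ‖f k‖ ^ 2 - 2 * (|k| ^ j * ‖f k‖) := by
      field_simp; ring
    linarith
  have hii := (iadd hi hf.int).1.const_mul (1/2)
  have hI : Integrable (fun k => |k| ^ j * ‖f k‖) := by
    refine hii.mono' (by have := hf.meas; exact (by fun_prop : Measurable _).aestronglyMeasurable) ?_
    refine Filter.Eventually.of_forall fun k => ?_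
    rw [Real.norm_of_nonneg (by positivity)]
    exact hle k
  refine ⟨hI, (integral_mono hI hii hle).trans (le_of_eq ?_)⟩
  rw [integral_const_mul, (iadd hi hf.int).2]; rfl

lemma Hs.A_bound {s : ℝ} (hs : 2 < s) {f : ℝ → ℂ} (hf : Hs s f) {lam μ P : ℝ} (hl : 0 < lam) (hμ : 0 < μ)
    (hP : lam ^ (2 * s) * (∫ k, ‖f k‖ ^ 2) + (∫ k, V0 s k * ‖f k‖ ^ 2) ≤ P) :
    ∫ k, |k| ^ (3/2 : ℝ) * ‖f k‖ ≤ 1 / 2 * (μ * (lam ^ (4 - 2 * s) * cj s 3) + P / μ) := by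
  have hi0 := V0_inv_int (s := s) (j := 3) (by norm_num) (by linarith)
  have hi : Integrable (fun k : ℝ => |k| ^ (3:ℝ) / (lam ^ (2 * s) + |k| ^ (2 * s))) := by
    rw [scale_int hl]
    exact (hi0.comp_mul_left' (inv_pos.2 hl).ne').const_mul _
  have hiv : ∫ k : ℝ, |k| ^ (3:ℝ) / (lam ^ (2 * s) + |k| ^ (2 * s)) = lam ^ (4 - 2 * s) * cj s 3 := by
    rw [scale_int hl, integral_const_mul,
      Measure.integral_comp_mul_left (fun x => |x| ^ (3:ℝ) / V0 s x) lam⁻¹]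
    simp only [inv_inv, abs_of_pos hl, smul_eq_mul]
    rw [← mul_assoc, show (4 - 2 * s) = (3 - 2 * s) + 1 by ring, Real.rpow_add_one hl.ne']
    rfl
  have h2 := hf.L2.1.const_mul (lam ^ (2 * s))
  have hV2 : Integrable (fun k => |k| ^ (2 * s) * ‖f k‖ ^ 2) :=
    (hf.wt (V := fun k => |k| ^ (2 * s)) (by fun_prop) (fun k => by positivity)
      (fun k => by unfold V0; linarith)).1
  have hV2' : ∫ k, |k| ^ (2 * s) * ‖f k‖ ^ 2 ≤ ∫ k, V0 s k * ‖f k‖ ^ 2 :=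
    (hf.wt (V := fun k => |k| ^ (2 * s)) (by fun_prop) (fun k => by positivity)
      (fun k => by unfold V0; linarith)).2
  have hle : ∀ k, |k| ^ (3/2:ℝ) * ‖f k‖ ≤ 1 / 2 * (μ * (|k| ^ (3:ℝ) / (lam ^ (2 * s) + |k| ^ (2 * s)))
      + 1 / μ * (lam ^ (2 * s) * ‖f k‖ ^ 2 + |k| ^ (2 * s) * ‖f k‖ ^ 2)) := by
    intro k
    have hV : 0 < lam ^ (2 * s) + |k| ^ (2 * s) := by positivity
    have e : |k| ^ (3:ℝ) = (|k| ^ (3/2:ℝ)) ^ 2 := by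
      rw [← Real.rpow_natCast, ← Real.rpow_mul (abs_nonneg k)]; congr 1; norm_num
    rw [e, ← add_mul]
    set θ := lam ^ (2 * s) + |k| ^ (2 * s)
    have : 0 ≤ (μ * |k| ^ (3/2:ℝ) - θ * ‖f k‖) ^ 2 / (θ * μ) := by positivity
    have e2 : (μ * |k| ^ (3/2:ℝ) - θ * ‖f k‖) ^ 2 / (θ * μ) =
      μ * ((|k| ^ (3/2:ℝ)) ^ 2 / θ) + 1 / μ * (θ * ‖f k‖ ^ 2) - 2 * (|k| ^ (3/2:ℝ) * ‖f k‖) := by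
      field_simp; ring
    linarith
  have i1 := iadd (hi.const_mul μ) ((iadd h2 hV2).1.const_mul (1/μ))
  refine (integral_mono (hf.L1 (j := 3/2) (by norm_num) (by linarith)).1 (i1.1.const_mul (1/2)) hle).trans ?_
  rw [integral_const_mul, i1.2, integral_const_mul, integral_const_mul, (iadd h2 hV2).2, hiv,
    integral_const_mul, div_eq_mul_one_div P, mul_comm P]
  gcongr
  linarith

lemma Hs.add {s : ℝ} {f g : ℝ → ℂ} (hf : Hs s f) (hg : Hs s g) : Hs s (fun k => f k + g k) where
  meas := hf.meas.add hg.meas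
  int := by
    refine ((hf.int.const_mul 2).add (hg.int.const_mul 2)).mono'
      (by have := V0_meas s; have := hf.meas; have := hg.meas; exact (by fun_prop : Measurable _).aestronglyMeasurable) ?_
    refine Filter.Eventually.of_forall fun k => ?_
    have hV := V0_pos s k
    rw [Real.norm_of_nonneg (by positivity)]
    simp only [Pi.add_apply]
    have h1 := norm_add_le (f k) (g k)
    have : ‖f k + g k‖ ^ 2 ≤ 2 * ‖f k‖ ^ 2 + 2 * ‖g k‖ ^ 2 := by
      nlinarith [sq_nonneg (‖f k‖ - ‖g k‖), norm_nonneg (f k + g k)]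
    nlinarith

lemma Hs.neg {s : ℝ} {f : ℝ → ℂ} (hf : Hs s f) : Hs s (fun k => - f k) where
  meas := hf.meas.neg
  int := by simpa using hf.int

lemma Hs.sub {s : ℝ} {f g : ℝ → ℂ} (hf : Hs s f) (hg : Hs s g) : Hs s (fun k => f k - g k) := by
  simpa [sub_eq_add_neg] using hf.add hg.neg

lemma nice_int {C n : ℝ} {F : ℝ → ℝ} (hF : Measurable F) (hC : ∀ k, |F k| ≤ C)
    (hn : ∀ k, n < |k| → F k = 0) : Integrable F := by
  have : Integrable (Set.indicator (Icc (-n) n) (fun _ => C)) :=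
    (integrable_indicator_iff measurableSet_Icc).2
      (integrable_const (μ := volume.restrict (Icc (-n) n)) C)
  refine this.mono' hF.aestronglyMeasurable (Filter.Eventually.of_forall fun k => ?_)
  by_cases h : k ∈ Icc (-n) n
  · rw [indicator_of_mem h]; exact hC k
  · rw [indicator_of_notMem h, hn k]; simp
    by_contra h'
    exact h (abs_le.1 (not_lt.1 h'))

lemma nice_Hs {s R n : ℝ} (hs : 0 ≤ s) {f : ℝ → ℂ} (hf : Measurable f) (hR : ∀ k, ‖f k‖ ≤ R)
    (hn : ∀ k, n < |k| → f k = 0) : Hs s f where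
  meas := hf
  int := by
    refine nice_int (C := V0 s n * R ^ 2) (n := n) (by have := V0_meas s; fun_prop) (fun k => ?_)
      (fun k hk => by simp [hn k hk])
    have hV := V0_pos s k
    have hVn := V0_pos s n
    have hR0 := (norm_nonneg _).trans (hR k)
    rw [abs_of_nonneg (by positivity)]
    by_cases h : n < |k|
    · simp [hn k h]; positivity
    · have : V0 s k ≤ V0 s n := V0_mono hs ((not_lt.1 h).trans (le_abs_self n))
      have := hR k
      gcongr

open MeasureTheory Set

noncomputable def Gq (u v : ℝ → ℂ) (k : ℝ) : ℂ := ∫ l : ℝ, ((Sker (k - l) l : ℝ) : ℂ) * u (k - l) * v l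

structure Lt (f : ℝ → ℂ) : Prop where
  meas : Measurable f
  int : Integrable (fun k => ‖f k‖ ^ 2)

lemma Hs.lt {s : ℝ} {f : ℝ → ℂ} (hf : Hs s f) : Lt f := ⟨hf.meas, hf.L2.1⟩

lemma Lt.memLp {f : ℝ → ℂ} (hf : Lt f) : MemLp (fun k => ‖f k‖) 2 :=
  (memLp_two_iff_integrable_sq hf.meas.norm.aestronglyMeasurable).2 hf.int

lemma Lt.refl {f : ℝ → ℂ} (hf : Lt f) (k : ℝ) : Lt (fun l => f (k - l)) :=
  ⟨hf.meas.comp (measurable_const.sub measurable_id), hf.int.comp_sub_left k⟩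

lemma Lt.cs {f g : ℝ → ℂ} (hf : Lt f) (hg : Lt g) : Integrable (fun l => ‖f l‖ * ‖g l‖) ∧
    ∫ l, ‖f l‖ * ‖g l‖ ≤ Real.sqrt (∫ l, ‖f l‖ ^ 2) * Real.sqrt (∫ l, ‖g l‖ ^ 2) := by
  refine ⟨hf.memLp.integrable_mul hg.memLp, ?_⟩
  have := integral_mul_le_Lp_mul_Lq_of_nonneg (μ := volume) (f := fun k => ‖f k‖) (g := fun k => ‖g k‖)
    Real.HolderConjugate.two_two (Filter.Eventually.of_forall fun k => norm_nonneg _)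
    (Filter.Eventually.of_forall fun k => norm_nonneg _) (by simpa using hf.memLp) (by simpa using hg.memLp)
  simpa [Real.sqrt_eq_rpow] using this

lemma Lt.add {f g : ℝ → ℂ} (hf : Lt f) (hg : Lt g) : Lt (fun k => f k + g k) where
  meas := hf.meas.add hg.meas
  int := by
    refine ((hf.int.const_mul 2).add (hg.int.const_mul 2)).mono'
      (by have := hf.meas; have := hg.meas; exact (by fun_prop : Measurable _).aestronglyMeasurable) ?_
    refine Filter.Eventually.of_forall fun k => ?_
    rw [Real.norm_of_nonneg (by positivity)]
    simp only [Pi.add_apply]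
    have h1 := norm_add_le (f k) (g k)
    nlinarith [sq_nonneg (‖f k‖ - ‖g k‖), norm_nonneg (f k + g k)]

lemma Lt.neg {f : ℝ → ℂ} (hf : Lt f) : Lt (fun k => - f k) where
  meas := hf.meas.neg
  int := by simpa using hf.int

lemma Lt.sub {f g : ℝ → ℂ} (hf : Lt f) (hg : Lt g) : Lt (fun k => f k - g k) := by
  simpa [sub_eq_add_neg] using hf.add hg.neg

lemma Gq_meas1 {u v : ℝ → ℂ} (hu : Measurable u) (hv : Measurable v) :
    Measurable (fun z : ℝ × ℝ => ((Sker (z.1 - z.2) z.2 : ℝ) : ℂ) * u (z.1 - z.2) * v z.2) := by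
  have h1 : Measurable fun z : ℝ × ℝ => Sker (z.1 - z.2) z.2 :=
    Sker_meas' (measurable_fst.sub measurable_snd) measurable_snd
  exact ((Complex.measurable_ofReal.comp h1).mul (hu.comp (measurable_fst.sub measurable_snd))).mul
    (hv.comp measurable_snd)

lemma Gq_int {u v : ℝ → ℂ} (hu : Lt u) (hv : Lt v) (k : ℝ) :
    Integrable (fun l : ℝ => ((Sker (k - l) l : ℝ) : ℂ) * u (k - l) * v l) ∧
    ∀ l, ‖((Sker (k - l) l : ℝ) : ℂ) * u (k - l) * v l‖ ≤ Real.sqrt |k| * (‖u (k - l)‖ * ‖v l‖) := by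
  have hb : ∀ l, ‖((Sker (k - l) l : ℝ) : ℂ) * u (k - l) * v l‖ ≤
      Real.sqrt |k| * (‖u (k - l)‖ * ‖v l‖) := by
    intro l
    have h := Sker_le_add (k - l) l
    rw [sub_add_cancel] at h
    rw [norm_mul, norm_mul, Complex.norm_real, Real.norm_of_nonneg (Sker_nonneg _ _), mul_assoc]
    gcongr
  refine ⟨?_, hb⟩
  refine (((hu.refl k).cs hv).1.const_mul (Real.sqrt |k|)).mono' ?_ (Filter.Eventually.of_forall hb)
  exact ((Gq_meas1 hu.meas hv.meas).comp (measurable_const.prodMk measurable_id)).aestronglyMeasurable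

lemma Gq_le {u v : ℝ → ℂ} (hu : Lt u) (hv : Lt v) (k : ℝ) :
    ‖Gq u v k‖ ≤ Real.sqrt |k| * (Real.sqrt (∫ l, ‖u l‖ ^ 2) * Real.sqrt (∫ l, ‖v l‖ ^ 2)) := by
  have h1 := (hu.refl k).cs hv
  rw [integral_sub_left_eq_self (fun l => ‖u l‖ ^ 2) volume k] at h1
  calc ‖Gq u v k‖ ≤ ∫ l, Real.sqrt |k| * (‖u (k - l)‖ * ‖v l‖) :=
        norm_integral_le_of_norm_le (h1.1.const_mul _) (Filter.Eventually.of_forall (Gq_int hu hv k).2)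
    _ = Real.sqrt |k| * ∫ l, (‖u (k - l)‖ * ‖v l‖) := integral_const_mul _ _
    _ ≤ _ := by gcongr; exact h1.2

lemma Gq_self_le {u : ℝ → ℂ} (hu : Lt u) (k : ℝ) :
    ‖Gq u u k‖ ≤ Real.sqrt |k| * ∫ l, ‖u l‖ ^ 2 := by
  refine (Gq_le hu hu k).trans (le_of_eq ?_)
  rw [Real.mul_self_sqrt (integral_nonneg fun k => by positivity)]

lemma Gq_comm (u v : ℝ → ℂ) (k : ℝ) : Gq u v k = Gq v u k := by
  unfold Gq
  rw [← integral_sub_left_eq_self _ volume k]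
  congr 1; ext l
  rw [sub_sub_cancel, Sker_comm]; ring

lemma Gq_add_right {u v w : ℝ → ℂ} (hu : Lt u) (hv : Lt v) (hw : Lt w) (k : ℝ) :
    Gq u (fun l => v l + w l) k = Gq u v k + Gq u w k := by
  unfold Gq
  rw [← integral_add (Gq_int hu hv k).1 (Gq_int hu hw k).1]
  congr 1; ext l; ring

lemma Gq_neg_right (u v : ℝ → ℂ) (k : ℝ) :
    Gq u (fun l => - v l) k = - Gq u v k := by
  unfold Gq
  rw [← integral_neg]
  congr 1; ext l; ring

lemma Gq_diff {f g : ℝ → ℂ} (hf : Lt f) (hg : Lt g) (k : ℝ) :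
    Gq (fun l => g l + f l) (fun l => g l - f l) k = Gq g g k - Gq f f k := by
  have e1 : Gq (fun l => g l + f l) (fun l => g l - f l) k =
      Gq (fun l => g l + f l) g k - Gq (fun l => g l + f l) f k := by
    simp only [sub_eq_add_neg]
    rw [Gq_add_right (hg.add hf) hg hf.neg, Gq_neg_right]
  rw [e1, Gq_comm _ g, Gq_comm _ f, Gq_add_right hg hg hf, Gq_add_right hf hg hf, Gq_comm f g]
  ring

lemma Gq_diff_le {f g : ℝ → ℂ} (hf : Lt f) (hg : Lt g) (k : ℝ) :
    ‖Gq g g k - Gq f f k‖ ≤ Real.sqrt |k| * (Real.sqrt (∫ l, ‖g l + f l‖ ^ 2) *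
      Real.sqrt (∫ l, ‖g l - f l‖ ^ 2)) := by
  rw [← Gq_diff hf hg]
  exact Gq_le (hg.add hf) (hg.sub hf) k

lemma Gq_meas {u v : ℝ → ℝ → ℂ} (hu : Measurable (Function.uncurry u))
    (hv : Measurable (Function.uncurry v)) :
    Measurable (Function.uncurry fun τ k => Gq (u τ) (v τ) k) := by
  have h1 : Measurable fun z : (ℝ × ℝ) × ℝ => Sker (z.1.2 - z.2) z.2 :=
    Sker_meas' (by fun_prop) (by fun_prop)
  have h2 : Measurable fun z : (ℝ × ℝ) × ℝ => u z.1.1 (z.1.2 - z.2) :=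
    hu.comp (by fun_prop : Measurable fun z : (ℝ × ℝ) × ℝ => (z.1.1, z.1.2 - z.2))
  have h3 : Measurable fun z : (ℝ × ℝ) × ℝ => v z.1.1 z.2 :=
    hv.comp (by fun_prop : Measurable fun z : (ℝ × ℝ) × ℝ => (z.1.1, z.2))
  have h4 : Measurable fun z : (ℝ × ℝ) × ℝ =>
      ((Sker (z.1.2 - z.2) z.2 : ℝ) : ℂ) * u z.1.1 (z.1.2 - z.2) * v z.1.1 z.2 :=
    ((Complex.measurable_ofReal.comp h1).mul h2).mul h3
  exact (h4.stronglyMeasurable.integral_prod_right (ν := volume)).measurable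

lemma Gq_meas0 {u v : ℝ → ℂ} (hu : Measurable u) (hv : Measurable v) : Measurable (Gq u v) :=
  ((Gq_meas1 hu hv).stronglyMeasurable.integral_prod_right (ν := volume)).measurable

lemma Gq_symm {f : ℝ → ℂ} (hf : ∀ k, f (-k) = (starRingEnd ℂ) (f k)) (k : ℝ) :
    Gq f f (-k) = (starRingEnd ℂ) (Gq f f k) := by
  unfold Gq
  rw [← integral_conj, ← integral_neg_eq_self]
  congr 1; ext l
  rw [show -k - -l = -(k - l) by ring, Sker_neg, hf, hf]; simp

/-- basic trilinear bound -/
lemma triB {u v w : ℝ → ℂ} (hu : Measurable u) (hv : Measurable v) (hw : Measurable w)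
    (h32 : Integrable (fun k => |k| ^ (3/2 : ℝ) * ‖u k‖))
    (h12 : Integrable (fun k => |k| ^ (1/2 : ℝ) * ‖u k‖))
    (hv0 : Integrable (fun k => ‖v k‖ ^ 2)) (hv2 : Integrable (fun k => |k| ^ (2:ℝ) * ‖v k‖ ^ 2))
    (hw0 : Integrable (fun k => ‖w k‖ ^ 2)) :
    Integrable (fun z : ℝ × ℝ => ((z.1 * Sker (z.1 - z.2) z.2 : ℝ) : ℂ) *
      (u (z.1 - z.2) * v z.2 * (starRingEnd ℂ) (w z.1))) ∧
    ∫ z : ℝ × ℝ, ‖((z.1 * Sker (z.1 - z.2) z.2 : ℝ) : ℂ) *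
      (u (z.1 - z.2) * v z.2 * (starRingEnd ℂ) (w z.1))‖ ≤
    (∫ k, |k| ^ (3/2 : ℝ) * ‖u k‖) * (1/2 * ((∫ k, ‖v k‖ ^ 2) + ∫ k, ‖w k‖ ^ 2)) +
    (∫ k, |k| ^ (1/2 : ℝ) * ‖u k‖) * (1/2 * ((∫ k, |k| ^ (2:ℝ) * ‖v k‖ ^ 2) + ∫ k, ‖w k‖ ^ 2)) := by
  have mp_cb : MeasurePreserving (fun z : ℝ × ℝ => (z.1 - z.2, z.1)) volume volume :=
    mp_swap.comp mp_ca
  have p1 := mp_prod mp_ab h32 hv0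
  have p2 := mp_prod mp_cb h32 hw0
  have p3 := mp_prod mp_ab h12 hv2
  have p4 := mp_prod mp_cb h12 hw0
  have q1 := iadd p1.1 p2.1
  have q2 := iadd p3.1 p4.1
  have q := iadd q1.1 q2.1
  have hle : ∀ z : ℝ × ℝ, ‖((z.1 * Sker (z.1 - z.2) z.2 : ℝ) : ℂ) *
      (u (z.1 - z.2) * v z.2 * (starRingEnd ℂ) (w z.1))‖ ≤ 1/2 *
      ((|z.1 - z.2| ^ (3/2:ℝ) * ‖u (z.1 - z.2)‖ * ‖v z.2‖ ^ 2 +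
        |z.1 - z.2| ^ (3/2:ℝ) * ‖u (z.1 - z.2)‖ * ‖w z.1‖ ^ 2) +
       (|z.1 - z.2| ^ (1/2:ℝ) * ‖u (z.1 - z.2)‖ * (|z.2| ^ (2:ℝ) * ‖v z.2‖ ^ 2) +
        |z.1 - z.2| ^ (1/2:ℝ) * ‖u (z.1 - z.2)‖ * ‖w z.1‖ ^ 2)) := by
    rintro ⟨k, l⟩
    simp only [norm_mul, Complex.norm_real, Real.norm_eq_abs, abs_mul, RCLike.norm_conj,
      abs_of_nonneg (Sker_nonneg _ _)]
    have h1 := Sker_le_left (k - l) l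
    have h2 : |k| ≤ |k - l| + |l| := by simpa using abs_add_le (k - l) l
    have e1 : |k - l| ^ (3/2:ℝ) = |k - l| * Real.sqrt |k - l| := by
      rw [Real.sqrt_eq_rpow, show (3/2:ℝ) = 1 + 1/2 by norm_num,
        Real.rpow_add_of_nonneg (abs_nonneg _) (by norm_num) (by norm_num), Real.rpow_one]
    rw [e1, ← Real.sqrt_eq_rpow, Real.rpow_two]
    set r := Real.sqrt |k - l|
    have hr : 0 ≤ r := Real.sqrt_nonneg _
    have hS := Sker_nonneg (k - l) l
    set a := |k - l|
    have ha : 0 ≤ a := abs_nonneg _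
    set U := ‖u (k - l)‖
    have hU : 0 ≤ U := norm_nonneg _
    have hm : |k| * Sker (k - l) l ≤ (a + |l|) * r := by gcongr
    calc |k| * Sker (k - l) l * (U * ‖v l‖ * ‖w k‖)
        ≤ (a + |l|) * r * (U * ‖v l‖ * ‖w k‖) := by gcongr
      _ = a * r * U * (‖v l‖ * ‖w k‖) + r * U * ((|l| * ‖v l‖) * ‖w k‖) := by ring
      _ ≤ a * r * U * (1/2 * (‖v l‖ ^ 2 + ‖w k‖ ^ 2)) +
          r * U * (1/2 * ((|l| * ‖v l‖) ^ 2 + ‖w k‖ ^ 2)) := by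
        have g1 : ‖v l‖ * ‖w k‖ ≤ 1/2 * (‖v l‖ ^ 2 + ‖w k‖ ^ 2) := by
          nlinarith [sq_nonneg (‖v l‖ - ‖w k‖)]
        have g2 : (|l| * ‖v l‖) * ‖w k‖ ≤ 1/2 * ((|l| * ‖v l‖) ^ 2 + ‖w k‖ ^ 2) := by
          nlinarith [sq_nonneg (|l| * ‖v l‖ - ‖w k‖)]
        exact add_le_add (mul_le_mul_of_nonneg_left g1 (by positivity))
          (mul_le_mul_of_nonneg_left g2 (by positivity))
      _ = _ := by ring
  have hm : Measurable (fun z : ℝ × ℝ => ((z.1 * Sker (z.1 - z.2) z.2 : ℝ) : ℂ) *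
      (u (z.1 - z.2) * v z.2 * (starRingEnd ℂ) (w z.1))) := by
    have h1 : Measurable fun z : ℝ × ℝ => Sker (z.1 - z.2) z.2 :=
      Sker_meas' (measurable_fst.sub measurable_snd) measurable_snd
    refine (Complex.measurable_ofReal.comp (measurable_fst.mul h1)).mul ?_
    refine ((hu.comp (measurable_fst.sub measurable_snd)).mul (hv.comp measurable_snd)).mul ?_
    exact Complex.continuous_conj.measurable.comp (hw.comp measurable_fst)
  have hI := (q.1.const_mul (1/2)).mono' hm.aestronglyMeasurable (Filter.Eventually.of_forall hle)
  refine ⟨hI, (integral_mono hI.norm (q.1.const_mul (1/2)) hle).trans (le_of_eq ?_)⟩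
  rw [integral_const_mul, q.2, q1.2, q2.2, p1.2, p2.2, p3.2, p4.2]
  ring

lemma tri_fub {V : ℝ → ℝ} (hV : Measurable V) (hV0 : ∀ k, 0 ≤ V k) {u v w : ℝ → ℂ} (hu : Lt u) (hv : Lt v)
    (hw : Measurable w)
    (hint : Integrable (fun z : ℝ × ℝ => ((z.1 * V z.1 * Sker (z.1 - z.2) z.2 : ℝ) : ℂ) *
      (u (z.1 - z.2) * v z.2 * (starRingEnd ℂ) (w z.1)))) :
    (Integrable (fun k => V k * (‖w k‖ * ‖-Complex.I * (k:ℂ) * Gq u v k‖)) ∧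
    ∫ k, V k * (‖w k‖ * ‖-Complex.I * (k:ℂ) * Gq u v k‖) ≤
      ∫ z : ℝ × ℝ, ‖((z.1 * V z.1 * Sker (z.1 - z.2) z.2 : ℝ) : ℂ) *
      (u (z.1 - z.2) * v z.2 * (starRingEnd ℂ) (w z.1))‖) ∧
    ∫ k, V k * (2 * ((starRingEnd ℂ) (w k) * (-Complex.I * (k:ℂ) * Gq u v k)).re) =
      2 * (∫ z : ℝ × ℝ, ((z.1 * V z.1 * Sker (z.1 - z.2) z.2 : ℝ) : ℂ) *
      (u (z.1 - z.2) * v z.2 * (starRingEnd ℂ) (w z.1))).im := by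
  have e : ∀ k : ℝ, ∫ l : ℝ, ((k * V k * Sker (k - l) l : ℝ) : ℂ) *
      (u (k - l) * v l * (starRingEnd ℂ) (w k)) = (k * V k : ℝ) * (starRingEnd ℂ) (w k) * Gq u v k := by
    intro k
    unfold Gq
    rw [← integral_const_mul]
    congr 1; ext l; push_cast; ring
  have hmG := Gq_meas0 hu.meas hv.meas
  have hb : ∀ k : ℝ, V k * (‖w k‖ * ‖-Complex.I * (k:ℂ) * Gq u v k‖) ≤
      ∫ l : ℝ, ‖((k * V k * Sker (k - l) l : ℝ) : ℂ) * (u (k - l) * v l * (starRingEnd ℂ) (w k))‖ := by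
    intro k
    refine le_trans (le_of_eq ?_) (norm_integral_le_integral_norm _)
    rw [e k]
    simp only [norm_mul, norm_neg, Complex.norm_I, Complex.norm_real, RCLike.norm_conj, Real.norm_eq_abs,
      abs_of_nonneg (hV0 k)]
    ring
  have hn := hint.norm.integral_prod_left
  have hI : Integrable (fun k => V k * (‖w k‖ * ‖-Complex.I * (k:ℂ) * Gq u v k‖)) := by
    refine hn.mono' (by exact (by fun_prop : Measurable _).aestronglyMeasurable)
      (Filter.Eventually.of_forall fun k => ?_)
    rw [Real.norm_of_nonneg (by have := hV0 k; positivity)]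
    exact hb k
  refine ⟨⟨hI, ?_⟩, ?_⟩
  · refine (integral_mono hI hn hb).trans (le_of_eq ?_)
    rw [Measure.volume_eq_prod, integral_prod _ (by rw [← Measure.volume_eq_prod]; exact hint.norm)]
  · have h1 := hint.integral_prod_left
    rw [Measure.volume_eq_prod, integral_prod _ (by rw [← Measure.volume_eq_prod]; exact hint)]
    simp only [e] at h1 ⊢
    have h2 := Complex.imCLM.integral_comp_comm h1
    simp only [Complex.imCLM_apply] at h2
    rw [← h2, ← integral_const_mul]
    congr 1; ext k
    simp [Complex.mul_re, Complex.mul_im]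
    ring

open MeasureTheory Set

lemma ode_glob {E : Type*} [NormedAddCommGroup E] [NormedSpace ℝ E] [CompleteSpace E] {F : E → E}
    {K L : NNReal} (hL : LipschitzWith K F) (hb : ∀ x, ‖F x‖ ≤ L) (x₀ : E) {T : ℝ} (hT : 0 ≤ T) :
    ∃ α : ℝ → E, α 0 = x₀ ∧ ∀ t ∈ Icc (-T) T, HasDerivWithinAt α (F (α t)) (Icc (-T) T) t := by
  have h0 : (0:ℝ) ∈ Icc (-T) T := ⟨by linarith, hT⟩
  have hp : IsPicardLindelof (fun _ : ℝ => F) (tmin := -T) (tmax := T) ⟨0, h0⟩ x₀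
      (L * ⟨T, hT⟩) 0 L K := by
    refine ⟨fun _ _ => hL.lipschitzOnWith, fun _ _ => continuousOn_const, fun _ _ x _ => hb x, ?_⟩
    simp only [sub_zero, zero_sub, neg_neg, max_self, NNReal.coe_zero, sub_zero]
    exact le_of_eq rfl
  exact hp.exists_eq_forall_mem_Icc_hasDerivWithinAt₀

lemma supp_int {C n : ℝ} (hn : 0 ≤ n) {F : ℝ → ℝ} (hF : Measurable F) (h0 : ∀ k, 0 ≤ F k) (hC : ∀ k, F k ≤ C)
    (hs : ∀ k, n < |k| → F k = 0) : Integrable F ∧ ∫ k, F k ≤ 2 * n * C := by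
  have hi := nice_int hF (fun k => by rw [abs_of_nonneg (h0 k)]; exact hC k) hs
  refine ⟨hi, ?_⟩
  have hii : Integrable (Set.indicator (Icc (-n) n) (fun _ => C)) :=
    (integrable_indicator_iff measurableSet_Icc).2
      (integrable_const (μ := volume.restrict (Icc (-n) n)) C)
  refine (integral_mono hi hii fun k => ?_).trans (le_of_eq ?_)
  · by_cases h : k ∈ Icc (-n) n
    · rw [indicator_of_mem h]; exact hC k
    · rw [indicator_of_notMem h, hs k]
      by_contra h'
      exact h (abs_le.1 (not_lt.1 h'))
  · rw [integral_indicator measurableSet_Icc]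
    simp only [integral_const, smul_eq_mul, measureReal_restrict_apply_univ, Real.volume_real_Icc]
    rw [max_eq_left (by linarith)]; ring

noncomputable abbrev LI := lp (fun _ : ℝ => ℂ) (⊤ : ENNReal)

lemma LI.le (x : LI) (k : ℝ) : ‖x k‖ ≤ ‖x‖ := lp.norm_apply_le_norm ENNReal.top_ne_zero x k

def XX (n : ℝ) : Submodule ℝ LI where
  carrier := {x | Measurable (x : ℝ → ℂ) ∧ (∀ k, n < |k| → x k = 0) ∧
    ∀ k, x (-k) = (starRingEnd ℂ) (x k)}
  add_mem' := by
    rintro x y ⟨a, b, c⟩ ⟨a', b', c'⟩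
    refine ⟨a.add a', fun k hk => ?_, fun k => ?_⟩
    · simp [b k hk, b' k hk]
    · simp [c k, c' k]
  zero_mem' := ⟨measurable_const (a := (0 : ℂ)), by simp, by simp⟩
  smul_mem' := by
    rintro t x ⟨a, b, c⟩
    refine ⟨a.const_smul t, fun k hk => ?_, fun k => ?_⟩
    · simp [b k hk]
    · simp [c k]

lemma XX_closed (n : ℝ) : IsClosed (XX n : Set LI) := by
  apply IsSeqClosed.isClosed
  intro x y hx hxy
  have hp : ∀ k, Filter.Tendsto (fun i => (x i) k) Filter.atTop (nhds (y k)) := by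
    intro k
    rw [tendsto_iff_norm_sub_tendsto_zero]
    have h := tendsto_iff_norm_sub_tendsto_zero.1 hxy
    refine squeeze_zero (fun _ => norm_nonneg _) (fun i => ?_) h
    simpa using LI.le (x i - y) k
  refine ⟨measurable_of_tendsto_metrizable (fun i => (hx i).1) (tendsto_pi_nhds.2 hp), fun k hk => ?_,
    fun k => ?_⟩
  · refine tendsto_nhds_unique (hp k) ?_
    simp [(hx _).2.1 k hk]
  · refine tendsto_nhds_unique (hp (-k)) ?_
    have := (Complex.continuous_conj.tendsto (y k)).comp (hp k)
    refine this.congr fun i => ?_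
    simp [(hx i).2.2 k]

instance XX_complete (n : ℝ) : CompleteSpace (XX n) := (XX_closed n).completeSpace_coe

lemma XX.le {n : ℝ} (x : XX n) (k : ℝ) : ‖x.1 k‖ ≤ ‖x‖ := LI.le x.1 k

lemma XX.sq {n : ℝ} (hn : 0 ≤ n) (x : XX n) : Lt x.1 ∧ ∫ k, ‖x.1 k‖ ^ 2 ≤ 2 * n * ‖x‖ ^ 2 := by
  have h := supp_int hn (F := fun k => ‖x.1 k‖ ^ 2) (C := ‖x‖ ^ 2) (x.2.1.norm.pow_const 2)
    (fun k => by positivity) (fun k => by have := XX.le x k; gcongr)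
    (fun k hk => by simp [x.2.2.1 k hk])
  exact ⟨⟨x.2.1, h.1⟩, h.2⟩

noncomputable def Dn (n : ℝ) (u : ℝ → ℂ) (k : ℝ) : ℂ :=
  if |k| ≤ n then -Complex.I * (k : ℂ) * Gq u u k else 0

lemma Dn_meas {n : ℝ} {u : ℝ → ℂ} (hu : Measurable u) : Measurable (Dn n u) := by
  unfold Dn
  refine Measurable.ite (measurableSet_le (by fun_prop) measurable_const) ?_ measurable_const
  have := Gq_meas0 hu hu
  fun_prop

lemma Dn_symm {n : ℝ} {u : ℝ → ℂ} (hu : ∀ k, u (-k) = (starRingEnd ℂ) (u k)) (k : ℝ) :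
    Dn n u (-k) = (starRingEnd ℂ) (Dn n u k) := by
  unfold Dn
  rw [abs_neg, Gq_symm hu]
  split_ifs <;> simp

lemma Dn_diff {n : ℝ} (hn : 0 ≤ n) (x y : XX n) (k : ℝ) :
    ‖Dn n x.1 k - Dn n y.1 k‖ ≤ n * Real.sqrt n * (2 * n) * (‖x + y‖ * ‖x - y‖) := by
  unfold Dn
  split_ifs with h
  · have h1 := Gq_diff_le (XX.sq hn y).1 (XX.sq hn x).1 k
    have h2 := (XX.sq hn (x + y)).2
    have h3 := (XX.sq hn (x - y)).2
    have h2' : ∫ l, ‖x.1 l + y.1 l‖ ^ 2 ≤ 2 * n * ‖x + y‖ ^ 2 := by simpa using h2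
    have h3' : ∫ l, ‖x.1 l - y.1 l‖ ^ 2 ≤ 2 * n * ‖x - y‖ ^ 2 := by simpa using h3
    rw [← mul_sub, norm_mul, norm_mul, norm_neg, Complex.norm_I, one_mul, Complex.norm_real, Real.norm_eq_abs]
    calc |k| * ‖Gq x.1 x.1 k - Gq y.1 y.1 k‖
        ≤ n * (Real.sqrt n * (Real.sqrt (2 * n * ‖x + y‖ ^ 2) * Real.sqrt (2 * n * ‖x - y‖ ^ 2))) := by
          refine mul_le_mul h (h1.trans ?_) (norm_nonneg _) hn
          gcongr
      _ = _ := by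
          rw [Real.sqrt_mul (by positivity : 0 ≤ 2 * n) (‖x + y‖ ^ 2),
            Real.sqrt_mul (by positivity : 0 ≤ 2 * n) (‖x - y‖ ^ 2), Real.sqrt_sq (norm_nonneg _),
            Real.sqrt_sq (norm_nonneg _)]
          have := Real.mul_self_sqrt (by positivity : 0 ≤ 2 * n)
          linear_combination (n * Real.sqrt n * ‖x + y‖ * ‖x - y‖) * this
  · simp; positivity

lemma Dn_le {n : ℝ} (hn : 0 ≤ n) (x : XX n) (k : ℝ) :
    ‖Dn n x.1 k‖ ≤ n * Real.sqrt n * (2 * n) * ‖x‖ ^ 2 := by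
  have := Dn_diff hn x 0 k
  simp only [add_zero, sub_zero] at this
  have e : Dn n ((0 : XX n) : LI) k = 0 := by simp [Dn, Gq]
  rw [e, sub_zero] at this
  rw [sq]; exact this

noncomputable def Bq {n : ℝ} (hn : 0 ≤ n) (x : XX n) : XX n :=
  ⟨⟨fun k => Dn n x.1 k, memℓp_infty ⟨_, by rintro _ ⟨k, rfl⟩; exact Dn_le hn x k⟩⟩,
    Dn_meas x.2.1, fun k hk => by simp [Dn, not_le.2 hk], fun k => Dn_symm x.2.2.2 k⟩

lemma Bq_apply {n : ℝ} (hn : 0 ≤ n) (x : XX n) (k : ℝ) : (Bq hn x).1 k = Dn n x.1 k := rfl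

lemma Bq_le {n : ℝ} (hn : 0 ≤ n) (x : XX n) : ‖Bq hn x‖ ≤ n * Real.sqrt n * (2 * n) * ‖x‖ ^ 2 :=
  lp.norm_le_of_forall_le (f := (Bq hn x).1) (by positivity) fun k => Dn_le hn x k

lemma Bq_diff {n : ℝ} (hn : 0 ≤ n) (x y : XX n) :
    ‖Bq hn x - Bq hn y‖ ≤ n * Real.sqrt n * (2 * n) * (‖x + y‖ * ‖x - y‖) :=
  lp.norm_le_of_forall_le (f := (Bq hn x - Bq hn y).1) (by positivity) fun k => Dn_diff hn x y k

noncomputable def AA (u : ℝ → ℂ) : ℝ := ∫ k, |k| ^ (3/2 : ℝ) * ‖u k‖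

lemma AA_int {n : ℝ} (hn : 0 ≤ n) (x : XX n) : Integrable (fun k => |k| ^ (3/2 : ℝ) * ‖x.1 k‖) ∧
    AA x.1 ≤ 2 * n * (n ^ (3/2 : ℝ) * ‖x‖) := by
  refine supp_int hn ((by fun_prop : Measurable fun k : ℝ => |k| ^ (3/2:ℝ)).mul x.2.1.norm) (fun k => by positivity) (fun k => ?_)
    (fun k hk => by simp [x.2.2.1 k hk])
  by_cases h : n < |k|
  · simp [x.2.2.1 k h]; positivity
  · have := XX.le x k
    have := not_lt.1 h
    gcongr

lemma AA_lip {n : ℝ} (hn : 0 ≤ n) (x y : XX n) : AA x.1 ≤ AA y.1 + 2 * n * n ^ (3/2 : ℝ) * ‖x - y‖ := by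
  have h1 := AA_int hn x
  have h2 := AA_int hn y
  have h3 := AA_int hn (x - y)
  have h4 := iadd h2.1 h3.1
  have : AA x.1 ≤ AA y.1 + AA (x - y).1 := by
    unfold AA
    rw [← h4.2]
    refine integral_mono h1.1 h4.1 fun k => ?_
    simp only
    rw [← mul_add]
    gcongr
    have : x.1 k = y.1 k + (x - y).1 k := by simp
    conv_lhs => rw [this]
    exact norm_add_le _ _
  have h5 := h3.2
  rw [← mul_assoc] at h5
  linarith

noncomputable def rho (A R : ℝ) {n : ℝ} (x : XX n) : ℝ := max 1 (max (AA x.1 / A) (‖x‖ / R))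

lemma rho_lip {A R n : ℝ} (hn : 0 ≤ n) (hA : 0 < A) (hR : 0 < R) (x y : XX n) :
    |rho A R x - rho A R y| ≤ (2 * n * n ^ (3/2 : ℝ) / A + 1 / R) * ‖x - y‖ := by
  have key : ∀ x y : XX n, rho A R x ≤ rho A R y + (2 * n * n ^ (3/2 : ℝ) / A + 1 / R) * ‖x - y‖ := by
    intro x y
    have c1 : 0 ≤ 2 * n * n ^ (3/2 : ℝ) / A * ‖x - y‖ := by positivity
    have c2 : 0 ≤ 1 / R * ‖x - y‖ := by positivity
    unfold rho
    refine max_le ?_ (max_le ?_ ?_)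
    · have := le_max_left 1 (max (AA y.1 / A) (‖y‖ / R)); nlinarith
    · have h1 := le_max_right 1 (max (AA y.1 / A) (‖y‖ / R))
      have h2 := le_max_left (AA y.1 / A) (‖y‖ / R)
      have h3 : AA x.1 / A ≤ AA y.1 / A + 2 * n * n ^ (3/2 : ℝ) / A * ‖x - y‖ := by
        have := AA_lip hn x y
        calc _ ≤ (AA y.1 + 2 * n * n ^ (3/2 : ℝ) * ‖x - y‖) / A := by gcongr
          _ = _ := by ring
      nlinarith
    · have h1 := le_max_right 1 (max (AA y.1 / A) (‖y‖ / R))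
      have h2 := le_max_right (AA y.1 / A) (‖y‖ / R)
      have h3 : ‖x‖ / R ≤ ‖y‖ / R + 1 / R * ‖x - y‖ := by
        have : ‖x‖ ≤ ‖y‖ + ‖x - y‖ := by
          have := norm_add_le y (x - y); simpa using this
        calc _ ≤ (‖y‖ + ‖x - y‖) / R := by gcongr
          _ = _ := by ring
      nlinarith
  have h1 := key x y
  have h2 := key y x
  rw [norm_sub_rev] at h2
  rw [abs_le]; constructor <;> linarith

lemma rho_one {A R n : ℝ} (x : XX n) : 1 ≤ rho A R x := le_max_left _ _

lemma rho_A {A R n : ℝ} (hA : 0 < A) (x : XX n) : AA x.1 ≤ A * rho A R x := by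
  have : AA x.1 / A ≤ rho A R x := (le_max_left _ _).trans (le_max_right _ _)
  rw [div_le_iff₀ hA] at this; linarith

lemma rho_R {A R n : ℝ} (hR : 0 < R) (x : XX n) : ‖x‖ ≤ R * rho A R x := by
  have : ‖x‖ / R ≤ rho A R x := (le_max_right _ _).trans (le_max_right _ _)
  rw [div_le_iff₀ hR] at this; linarith

noncomputable def phi (A R : ℝ) {n : ℝ} (x : XX n) : XX n := (rho A R x)⁻¹ • x

lemma phi_le {A R n : ℝ} (hR : 0 < R) (x : XX n) : ‖phi A R x‖ ≤ R := by
  have h1 := rho_one (A := A) (R := R) x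
  unfold phi
  rw [norm_smul, Real.norm_of_nonneg (by positivity), inv_mul_le_iff₀ (by linarith), mul_comm]
  exact rho_R hR x

lemma phi_lip {A R n : ℝ} (hn : 0 ≤ n) (hA : 0 < A) (hR : 0 < R) (x y : XX n) :
    ‖phi A R x - phi A R y‖ ≤ ((2 * n * n ^ (3/2 : ℝ) / A + 1 / R) * R + 1) * ‖x - y‖ := by
  have h1 := rho_one (A := A) (R := R) x
  have h2 := rho_one (A := A) (R := R) y
  have h3 := rho_lip hn hA hR x y
  have hx := rho_R (A := A) hR x
  set a := rho A R x with ha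
  set b := rho A R y with hb
  set c := 2 * n * n ^ (3/2 : ℝ) / A + 1 / R
  have e : phi A R x - phi A R y = (a⁻¹ - b⁻¹) • x + b⁻¹ • (x - y) := by
    simp only [phi, ← ha, ← hb]; module
  rw [e]
  refine (norm_add_le _ _).trans ?_
  rw [norm_smul, norm_smul, Real.norm_eq_abs, Real.norm_of_nonneg (by positivity : 0 ≤ b⁻¹), add_mul, one_mul]
  have hbi : b⁻¹ ≤ 1 := inv_le_one_of_one_le₀ h2
  refine add_le_add ?_ (mul_le_of_le_one_left (norm_nonneg _) hbi)
  have e2 : a⁻¹ - b⁻¹ = (b - a) * (a⁻¹ * b⁻¹) := by field_simp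
  rw [e2, abs_mul, abs_sub_comm, abs_of_nonneg (by positivity : 0 ≤ a⁻¹ * b⁻¹)]
  calc |a - b| * (a⁻¹ * b⁻¹) * ‖x‖ ≤ (c * ‖x - y‖) * (a⁻¹ * 1) * (R * a) := by gcongr
    _ = c * R * ‖x - y‖ := by field_simp

lemma ode_lip {A R n : ℝ} (hn : 0 ≤ n) (hA : 0 < A) (hR : 0 < R) (x y : XX n) :
    ‖Bq hn (phi A R x) - Bq hn (phi A R y)‖ ≤ n * Real.sqrt n * (2 * n) *
      ((2 * R) * ((2 * n * n ^ (3/2 : ℝ) / A + 1 / R) * R + 1)) * ‖x - y‖ := by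
  refine (Bq_diff hn _ _).trans ?_
  have h1 := phi_le (A := A) hR x
  have h2 := phi_le (A := A) hR y
  have h3 := phi_lip hn hA hR x y
  have h4 : ‖phi A R x + phi A R y‖ ≤ 2 * R := (norm_add_le _ _).trans (by linarith)
  calc _ ≤ n * Real.sqrt n * (2 * n) * ((2 * R) * (((2 * n * n ^ (3/2 : ℝ) / A + 1 / R) * R + 1) * ‖x - y‖)) := by gcongr
    _ = _ := by ring

open MeasureTheory Set

noncomputable def evk {n : ℝ} (k : ℝ) : XX n →L[ℝ] ℂ :=
  LinearMap.mkContinuous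
    { toFun := fun x => x.1 k
      map_add' := fun x y => by simp
      map_smul' := fun t x => by simp } 1 (fun x => by rw [one_mul]; exact XX.le x k)

lemma evk_apply {n : ℝ} (k : ℝ) (x : XX n) : evk k x = x.1 k := rfl

lemma Gq_smul (c : ℝ) (u : ℝ → ℂ) (k : ℝ) : Gq (fun l => (c:ℂ) * u l) (fun l => (c:ℂ) * u l) k = (c:ℂ) ^ 2 * Gq u u k := by
  unfold Gq
  rw [← integral_const_mul]
  congr 1; ext l; ring

structure Gal (n A T R : ℝ) (g₀ : ℝ → ℂ) (f : ℝ → ℝ → ℂ) (ρ : ℝ → ℝ) : Prop where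
  meas : Measurable (Function.uncurry f)
  init : ∀ k, f 0 k = g₀ k
  supp : ∀ τ k, n < |k| → f τ k = 0
  symm : ∀ τ k, f τ (-k) = (starRingEnd ℂ) (f τ k)
  bdd : ∃ C, ∀ τ k, ‖f τ k‖ ≤ C
  cont : ∀ k, Continuous (fun τ => f τ k)
  rc : Continuous ρ
  r1 : ∀ τ, 1 ≤ ρ τ
  rA : ∀ τ, AA (f τ) ≤ A * ρ τ
  rR : ∀ τ, AA (f τ) ≤ A → (∀ k, ‖f τ k‖ ≤ R) → ρ τ = 1
  Qc : ∀ k, Continuous (fun τ => (((ρ τ)⁻¹ : ℝ) : ℂ) ^ 2 * Dn n (f τ) k)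
  der : ∀ k, ∀ τ ∈ Ioo (-T) T, HasDerivAt (fun τ => f τ k) ((((ρ τ)⁻¹ : ℝ) : ℂ) ^ 2 * Dn n (f τ) k) τ

lemma galerkin {n A R T : ℝ} (hn : 0 ≤ n) (hA : 0 < A) (hR : 0 < R) (hT : 0 ≤ T) {g₀ : ℝ → ℂ}
    (hm : Measurable g₀) (hb : ∃ C, ∀ k, ‖g₀ k‖ ≤ C) (hs : ∀ k, n < |k| → g₀ k = 0)
    (hr : ∀ k, g₀ (-k) = (starRingEnd ℂ) (g₀ k)) : ∃ f ρ, Gal n A T R g₀ f ρ := by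
  obtain ⟨C, hC⟩ := hb
  let x₀ : XX n := ⟨⟨g₀, memℓp_infty ⟨C, by rintro _ ⟨k, rfl⟩; exact hC k⟩⟩, hm, hs, hr⟩
  set c1 := n * Real.sqrt n * (2 * n) *
      ((2 * R) * ((2 * n * n ^ (3/2 : ℝ) / A + 1 / R) * R + 1)) with hc1
  have hc1' : 0 ≤ c1 := by positivity
  have hc2' : 0 ≤ n * Real.sqrt n * (2 * n) * R ^ 2 := by positivity
  have hL : LipschitzWith ⟨c1, hc1'⟩ (fun x : XX n => Bq hn (phi A R x)) :=
    LipschitzWith.of_dist_le_mul fun x y => by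
      rw [dist_eq_norm, dist_eq_norm]; exact ode_lip hn hA hR x y
  obtain ⟨α, h0, hα⟩ := ode_glob (L := ⟨_, hc2'⟩) hL (fun x => by
    refine (Bq_le hn _).trans ?_
    have := phi_le (A := A) hR x
    change _ ≤ n * Real.sqrt n * (2 * n) * R ^ 2
    gcongr) x₀ hT
  have hαc : ContinuousOn α (Icc (-T) T) := fun t ht => (hα t ht).continuousWithinAt
  let cl : ℝ → ℝ := fun τ => max (-T) (min τ T)
  have hcl : ∀ τ, cl τ ∈ Icc (-T) T := fun τ => ⟨le_max_left _ _, max_le (by linarith) (min_le_right _ _)⟩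
  have hcl2 : ∀ τ ∈ Icc (-T) T, cl τ = τ := fun τ h => by
    simp only [cl]; rw [min_eq_left h.2, max_eq_right h.1]
  have hclc : Continuous cl := by fun_prop
  let β : ℝ → XX n := fun τ => α (cl τ)
  have hβ : Continuous β := hαc.comp_continuous hclc hcl
  have hrc : Continuous (fun x : XX n => rho A R x) := by
    have : LipschitzWith ⟨2 * n * n ^ (3/2 : ℝ) / A + 1 / R, by positivity⟩ (fun x : XX n => rho A R x) :=
      LipschitzWith.of_dist_le_mul fun x y => by
        rw [dist_eq_norm, dist_eq_norm]; exact rho_lip hn hA hR x y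
    exact this.continuous
  have hB : ∀ (x : XX n) k, (Bq hn (phi A R x)).1 k = (((rho A R x)⁻¹ : ℝ) : ℂ) ^ 2 * Dn n x.1 k := by
    intro x k
    rw [Bq_apply]
    have e : ((phi A R x).1 : ℝ → ℂ) = fun l => (((rho A R x)⁻¹ : ℝ) : ℂ) * x.1 l := by
      ext l; simp [phi]
    unfold Dn
    split_ifs
    · rw [e, Gq_smul]; ring
    · simp
  have hc : ∀ k, Continuous (fun τ => (β τ).1 k) := fun k => (evk k).continuous.comp hβ
  have hbd : ∃ C, ∀ τ, ‖β τ‖ ≤ C := by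
    obtain ⟨C, hC⟩ := isCompact_Icc.exists_bound_of_continuousOn hαc
    exact ⟨C, fun τ => hC _ (hcl τ)⟩
  refine ⟨fun τ k => (β τ).1 k, fun τ => rho A R (β τ), ?_, ?_, ?_, ?_, ?_, hc, hrc.comp hβ,
    fun τ => rho_one _, fun τ => rho_A hA _, ?_, ?_, ?_⟩
  · exact measurable_uncurry_of_continuous_of_measurable (u := fun (τ : ℝ) (k : ℝ) => (β τ).1 k)
      hc (fun τ => (β τ).2.1)
  · intro k
    simp only [β]
    rw [hcl2 0 ⟨by linarith, hT⟩, h0]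
  · exact fun τ k hk => (β τ).2.2.1 k hk
  · exact fun τ k => (β τ).2.2.2 k
  · obtain ⟨C, hC⟩ := hbd
    exact ⟨C, fun τ k => (XX.le _ k).trans (hC τ)⟩
  · intro τ h1 h2
    have h3 : ‖β τ‖ ≤ R := lp.norm_le_of_forall_le (f := (β τ).1) hR.le h2
    unfold rho
    apply max_eq_left
    apply max_le
    · rwa [div_le_one hA]
    · rwa [div_le_one hR]
  · intro k
    have := (evk k).continuous.comp (hL.continuous.comp hβ)
    refine this.congr fun τ => ?_
    exact hB _ k
  · intro k τ hτ
    have hτ' := Ioo_subset_Icc_self hτ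
    have h1 := (hα τ hτ').hasDerivAt (Icc_mem_nhds hτ.1 hτ.2)
    have h2 := ((evk k).hasFDerivAt).comp_hasDerivAt τ h1
    have h3 : (fun σ => (β σ).1 k) =ᶠ[nhds τ] (evk k ∘ α) := by
      filter_upwards [Icc_mem_nhds hτ.1 hτ.2] with σ hσ
      simp only [β, hcl2 σ hσ]; rfl
    have h4 := h2.congr_of_eventuallyEq h3
    refine h4.congr_deriv ?_
    change _ = (((rho A R (α (cl τ)))⁻¹ : ℝ) : ℂ) ^ 2 * Dn n (α (cl τ)).1 k
    rw [hcl2 τ hτ']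
    exact hB _ k

open MeasureTheory Set

noncomputable def Bc (s P : ℝ) : ℝ := 1/2 * (cj s 3 + P) + 1/2 * (cj s 1 + P)

lemma Hs.L32 {s : ℝ} (hs : 2 < s) {f : ℝ → ℂ} (hf : Hs s f) {P : ℝ} (hP : ∫ k, V0 s k * ‖f k‖ ^ 2 ≤ P) :
    Integrable (fun k => |k| ^ (3/2 : ℝ) * ‖f k‖) ∧ ∫ k, |k| ^ (3/2 : ℝ) * ‖f k‖ ≤ 1/2 * (cj s 3 + P) := by
  have h := hf.L1 (j := 3/2) (by norm_num) (by linarith)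
  refine ⟨h.1, h.2.trans ?_⟩
  rw [show (2:ℝ) * (3/2) = 3 by norm_num]
  linarith

lemma Hs.L12 {s : ℝ} (hs : 2 < s) {f : ℝ → ℂ} (hf : Hs s f) {P : ℝ} (hP : ∫ k, V0 s k * ‖f k‖ ^ 2 ≤ P) :
    Integrable (fun k => |k| ^ (1/2 : ℝ) * ‖f k‖) ∧ ∫ k, |k| ^ (1/2 : ℝ) * ‖f k‖ ≤ 1/2 * (cj s 1 + P) := by
  have h := hf.L1 (j := 1/2) (by norm_num) (by linarith)
  refine ⟨h.1, h.2.trans ?_⟩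
  rw [show (2:ℝ) * (1/2) = 1 by norm_num]
  linarith

lemma Hs.w2 {s : ℝ} (hs : 2 < s) {f : ℝ → ℂ} (hf : Hs s f) :
    Integrable (fun k => |k| ^ (2 : ℝ) * ‖f k‖ ^ 2) ∧
      ∫ k, |k| ^ (2 : ℝ) * ‖f k‖ ^ 2 ≤ ∫ k, V0 s k * ‖f k‖ ^ 2 :=
  hf.wt (V := fun k => |k| ^ (2:ℝ)) (by fun_prop) (fun k => by positivity)
    (fun k => rpow_le_V0 k (by norm_num) (by linarith))

lemma E_nonneg (s : ℝ) (f : ℝ → ℂ) : 0 ≤ ∫ k, V0 s k * ‖f k‖ ^ 2 :=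
  integral_nonneg fun k => mul_nonneg (V0_pos s k).le (by positivity)

lemma hs_tri {s : ℝ} (hs : 2 < s) {u v w : ℝ → ℂ} {P : ℝ} (hu : Hs s u) (hv : Hs s v) (hw : Lt w)
    (hPu : ∫ k, V0 s k * ‖u k‖ ^ 2 ≤ P) (hPv : ∫ k, V0 s k * ‖v k‖ ^ 2 ≤ P) (hPw : ∫ k, ‖w k‖ ^ 2 ≤ P) :
    Integrable (fun z : ℝ × ℝ => ((z.1 * Sker (z.1 - z.2) z.2 : ℝ) : ℂ) *
      (u (z.1 - z.2) * v z.2 * (starRingEnd ℂ) (w z.1))) ∧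
    ∫ z : ℝ × ℝ, ‖((z.1 * Sker (z.1 - z.2) z.2 : ℝ) : ℂ) *
      (u (z.1 - z.2) * v z.2 * (starRingEnd ℂ) (w z.1))‖ ≤ Bc s P * P := by
  have h32 := hu.L32 hs hPu
  have h12 := hu.L12 hs hPu
  have h2 := hv.w2 hs
  have h := triB hu.meas hv.meas hw.meas h32.1 h12.1 hv.lt.int h2.1 hw.int
  refine ⟨h.1, h.2.trans ?_⟩
  have hP : 0 ≤ P := (E_nonneg s u).trans hPu
  have c3 := cj_nonneg s 3
  have c1 := cj_nonneg s 1
  have hv0 := hv.L2.2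
  unfold Bc
  rw [add_mul]
  refine add_le_add (mul_le_mul h32.2 (by linarith) ?_ (by positivity))
    (mul_le_mul h12.2 (by linarith [h2.2]) ?_ (by positivity))
  · have : 0 ≤ ∫ k, ‖v k‖ ^ 2 := integral_nonneg fun k => by positivity
    have : 0 ≤ ∫ k, ‖w k‖ ^ 2 := integral_nonneg fun k => by positivity
    positivity
  · have : 0 ≤ ∫ k, |k| ^ (2:ℝ) * ‖v k‖ ^ 2 := integral_nonneg fun k => by positivity
    have : 0 ≤ ∫ k, ‖w k‖ ^ 2 := integral_nonneg fun k => by positivity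
    positivity

lemma duh {w Q : ℝ → ℂ} {T : ℝ} (hT : 0 ≤ T) (hw : ContinuousOn w (Icc (-T) T))
    (hQ : ContinuousOn Q (Icc (-T) T)) (hd : ∀ τ ∈ Ioo (-T) T, HasDerivAt w (Q τ) τ) :
    ∀ τ ∈ Icc (-T) T, w τ = w 0 + ∫ σ in (0:ℝ)..τ, Q σ := by
  intro τ hτ
  rcases le_total 0 τ with h | h
  · have hsub : Icc 0 τ ⊆ Icc (-T) T := Icc_subset_Icc (by linarith) hτ.2
    have := intervalIntegral.integral_eq_sub_of_hasDerivAt_of_le h (hw.mono hsub)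
      (fun x hx => hd x ⟨by linarith [hx.1], by linarith [hx.2, hτ.2]⟩)
      ((hQ.mono hsub).intervalIntegrable_of_Icc h)
    rw [this]; ring
  · have hsub : Icc τ 0 ⊆ Icc (-T) T := Icc_subset_Icc hτ.1 hT
    have := intervalIntegral.integral_eq_sub_of_hasDerivAt_of_le h (hw.mono hsub)
      (fun x hx => hd x ⟨by linarith [hx.1, hτ.1], by linarith [hx.2]⟩)
      ((hQ.mono hsub).intervalIntegrable_of_Icc h)
    rw [intervalIntegral.integral_symm, this]; ring

lemma Dn_le_self {n : ℝ} {u : ℝ → ℂ} (hu : Lt u) (k : ℝ) :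
    ‖Dn n u k‖ ≤ |k| * (Real.sqrt |k| * ∫ l, ‖u l‖ ^ 2) := by
  have h0 : 0 ≤ ∫ l, ‖u l‖ ^ 2 := integral_nonneg fun k => by positivity
  unfold Dn
  split_ifs
  · rw [norm_mul, norm_mul, norm_neg, Complex.norm_I, one_mul, Complex.norm_real, Real.norm_eq_abs]
    gcongr; exact Gq_self_le hu k
  · rw [norm_zero]; positivity

lemma conj_Dn {n : ℝ} {u w : ℝ → ℂ} (hw : ∀ k, n < |k| → w k = 0) (k : ℝ) :
    (starRingEnd ℂ) (w k) * Dn n u k = (starRingEnd ℂ) (w k) * (-Complex.I * (k:ℂ) * Gq u u k) := by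
  unfold Dn
  split_ifs with h
  · rfl
  · rw [hw k (not_le.1 h)]; simp

lemma norm_Dn {n : ℝ} {u w : ℝ → ℂ} (hw : ∀ k, n < |k| → w k = 0) (k : ℝ) :
    ‖w k‖ * ‖Dn n u k‖ = ‖w k‖ * ‖-Complex.I * (k:ℂ) * Gq u u k‖ := by
  unfold Dn
  split_ifs with h
  · rfl
  · rw [hw k (not_le.1 h)]; simp

lemma Dn_meas2 {n : ℝ} {f : ℝ → ℝ → ℂ} (hf : Measurable (Function.uncurry f)) :
    Measurable (Function.uncurry fun τ k => Dn n (f τ) k) := by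
  have h := Gq_meas hf hf
  have h2 : Measurable fun z : ℝ × ℝ => -Complex.I * (z.2 : ℂ) * Gq (f z.1) (f z.1) z.2 := by
    refine Measurable.mul (by fun_prop) h
  exact Measurable.ite (measurableSet_le (by fun_prop : Measurable fun z : ℝ × ℝ => |z.2|) measurable_const)
    h2 measurable_const

lemma uncurry_meas {f : ℝ → ℝ → ℂ} (hf : Measurable (Function.uncurry f)) (τ : ℝ) : Measurable (f τ) :=
  hf.comp (measurable_const.prodMk measurable_id)

lemma Gal.hs {s n A T R : ℝ} (hs : 0 ≤ s) {g₀ : ℝ → ℂ} {f : ℝ → ℝ → ℂ} {ρ : ℝ → ℝ}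
    (h : Gal n A T R g₀ f ρ) (τ : ℝ) : Hs s (f τ) := by
  obtain ⟨C, hC⟩ := h.bdd
  exact nice_Hs hs (uncurry_meas h.meas τ) (hC τ) (h.supp τ)

lemma Gal.energy {s n A T R : ℝ} (hs : 2 < s) (hn : 0 ≤ n) (hT : 0 ≤ T) (hA : 0 < A) {g₀ : ℝ → ℂ}
    {f : ℝ → ℝ → ℂ} {ρ : ℝ → ℝ} (h : Gal n A T R g₀ f ρ) {V : ℝ → ℝ} (hV : Adm (2 * s + 1) V)
    (hVV : ∀ k, V k ≤ V0 s k) : ∀ τ ∈ Icc (-T) T,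
      ∫ k, V k * ‖f τ k‖ ^ 2 ≤ (∫ k, V k * ‖g₀ k‖ ^ 2) * Real.exp (4 * 2 ^ (2 * s + 1) * A * T) := by
  obtain ⟨C, hC⟩ := h.bdd
  have hC0 : 0 ≤ C := (norm_nonneg _).trans (hC 0 0)
  have hm := fun τ => uncurry_meas h.meas τ
  have hHs := fun τ => h.hs (s := s) (by linarith) τ
  have hVn := V0_pos s n
  have hVk : ∀ k, |k| ≤ n → V0 s k ≤ V0 s n := fun k hk =>
    V0_mono (by linarith) (hk.trans (le_abs_self n))
  set P1 := 2 * n * (V0 s n * C ^ 2) with hP1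
  set P2 := 2 * n * (V0 s n * C) ^ 2 with hP2
  have hE1 : ∀ τ, ∫ k, V0 s k * ‖f τ k‖ ^ 2 ≤ P1 + P2 := by
    intro τ
    have := (supp_int hn (F := fun k => V0 s k * ‖f τ k‖ ^ 2) (C := V0 s n * C ^ 2)
      ((V0_meas s).mul ((hm τ).norm.pow_const 2)) (fun k => by have := V0_pos s k; positivity)
      (fun k => by
        by_cases hk : n < |k|
        · simp [h.supp τ k hk]; positivity
        · have := hVk k (not_lt.1 hk)
          have := hC τ k
          gcongr) (fun k hk => by simp [h.supp τ k hk])).2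
    have : 0 ≤ P2 := by positivity
    linarith
  have hVf : ∀ τ, Lt (fun k => (V k : ℂ) * f τ k) ∧ ∫ k, ‖(V k : ℂ) * f τ k‖ ^ 2 ≤ P1 + P2 := by
    intro τ
    have hmm : Measurable (fun k => (V k : ℂ) * f τ k) :=
      (Complex.measurable_ofReal.comp hV.meas).mul (hm τ)
    have := supp_int hn (F := fun k => ‖(V k : ℂ) * f τ k‖ ^ 2) (C := (V0 s n * C) ^ 2)
      (hmm.norm.pow_const 2) (fun k => by positivity)
      (fun k => by
        by_cases hk : n < |k|
        · simp [h.supp τ k hk]; positivity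
        · have := (hVV k).trans (hVk k (not_lt.1 hk))
          have := hC τ k
          have := hV.nonneg k
          rw [norm_mul, Complex.norm_real, Real.norm_of_nonneg this]
          gcongr) (fun k hk => by simp [h.supp τ k hk])
    have h3 : 0 ≤ P1 := by positivity
    exact ⟨⟨hmm, this.1⟩, by linarith [this.2]⟩
  have htri : ∀ τ, Integrable (fun z : ℝ × ℝ => ((z.1 * V z.1 * Sker (z.1 - z.2) z.2 : ℝ) : ℂ) *
      (f τ (z.1 - z.2) * f τ z.2 * (starRingEnd ℂ) (f τ z.1))) ∧
      ∫ z : ℝ × ℝ, ‖((z.1 * V z.1 * Sker (z.1 - z.2) z.2 : ℝ) : ℂ) *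
      (f τ (z.1 - z.2) * f τ z.2 * (starRingEnd ℂ) (f τ z.1))‖ ≤ Bc s (P1 + P2) * (P1 + P2) := by
    intro τ
    have h1 := hs_tri hs (hHs τ) (hHs τ) (hVf τ).1 (hE1 τ) (hE1 τ) (hVf τ).2
    have e : (fun z : ℝ × ℝ => ((z.1 * Sker (z.1 - z.2) z.2 : ℝ) : ℂ) *
      (f τ (z.1 - z.2) * f τ z.2 * (starRingEnd ℂ) ((V z.1 : ℂ) * f τ z.1))) =
      fun z : ℝ × ℝ => ((z.1 * V z.1 * Sker (z.1 - z.2) z.2 : ℝ) : ℂ) *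
      (f τ (z.1 - z.2) * f τ z.2 * (starRingEnd ℂ) (f τ z.1)) := by
      ext z; rw [map_mul, Complex.conj_ofReal]; push_cast; ring
    have e2 := fun z => congrFun e z
    simp only [e2] at h1
    exact h1
  have hfub := fun τ => tri_fub hV.meas hV.nonneg (hHs τ).lt (hHs τ).lt (hm τ) (htri τ).1
  have hr : ∀ τ, 0 ≤ (ρ τ)⁻¹ ∧ (ρ τ)⁻¹ ≤ 1 := fun τ =>
    ⟨by have := h.r1 τ; positivity, inv_le_one_of_one_le₀ (h.r1 τ)⟩
  have eB : ∀ τ k, V k * (‖f τ k‖ * ‖(((ρ τ)⁻¹ : ℝ) : ℂ) ^ 2 * Dn n (f τ) k‖) =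
      ((ρ τ)⁻¹) ^ 2 * (V k * (‖f τ k‖ * ‖-Complex.I * (k:ℂ) * Gq (f τ) (f τ) k‖)) := by
    intro τ k
    rw [← norm_Dn (h.supp τ) k, norm_mul, norm_pow, Complex.norm_real, Real.norm_of_nonneg (hr τ).1]
    ring
  have eq : ∀ τ k, V k * (2 * ((starRingEnd ℂ) (f τ k) * ((((ρ τ)⁻¹ : ℝ) : ℂ) ^ 2 * Dn n (f τ) k)).re) =
      ((ρ τ)⁻¹) ^ 2 * (V k * (2 * ((starRingEnd ℂ) (f τ k) * (-Complex.I * (k:ℂ) * Gq (f τ) (f τ) k)).re)) := by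
    intro τ k
    rw [← conj_Dn (h.supp τ) k, mul_left_comm ((starRingEnd ℂ) (f τ k)), ← Complex.ofReal_pow, Complex.re_ofReal_mul]
    ring
  have hp1 : (1:ℝ) ≤ 2 * s + 1 := by linarith
  have main := _root_.energy (c := 4 * 2 ^ (2 * s + 1) * A) (d := 0) (B := Bc s (P1 + P2) * (P1 + P2)) (T := T)
    (w := f) (Q := fun τ k => (((ρ τ)⁻¹ : ℝ) : ℂ) ^ 2 * Dn n (f τ) k) (V := V)
    hT (by positivity) le_rfl h.meas ?_ hV.meas hV.nonneg
    (Filter.Eventually.of_forall fun k => (h.cont k).continuousOn)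
    (Filter.Eventually.of_forall fun k => (h.Qc k).continuousOn)
    (Filter.Eventually.of_forall fun k => h.der k)
    (fun τ _ => ((hHs τ).wt hV.meas hV.nonneg hVV).1)
    (fun τ _ => by simp only [eB]; exact (hfub τ).1.1.const_mul _)
    (fun τ _ => ?_) (fun τ _ => ?_)
  · intro τ hτ
    refine (main τ hτ).trans (le_of_eq ?_)
    simp only [h.init]; ring
  · have h1 := Dn_meas2 (n := n) h.meas
    have h2 : Measurable (fun z : ℝ × ℝ => (((ρ z.1)⁻¹ : ℝ) : ℂ) ^ 2) :=
      (Complex.measurable_ofReal.comp ((h.rc.measurable.comp measurable_fst).inv)).pow_const 2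
    exact h2.mul h1
  · simp only [eB]
    rw [integral_const_mul]
    have h1 := (hfub τ).1.2.trans (htri τ).2
    have h0 : 0 ≤ ∫ k, V k * (‖f τ k‖ * ‖-Complex.I * (k:ℂ) * Gq (f τ) (f τ) k‖) :=
      integral_nonneg fun k => by have := hV.nonneg k; positivity
    have h2 : ((ρ τ)⁻¹) ^ 2 ≤ 1 := pow_le_one₀ (hr τ).1 (hr τ).2
    exact (mul_le_of_le_one_left h0 h2).trans h1
  · simp only [eq]
    rw [integral_const_mul, (hfub τ).2, abs_mul, abs_mul, abs_of_nonneg (by positivity : 0 ≤ ((ρ τ)⁻¹) ^ 2),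
      abs_two, add_zero]
    have h1 := sym3 hV hp1 (h.symm τ) (htri τ).1 ((hHs τ).L32 hs le_rfl).1
      ((hHs τ).wt hV.meas hV.nonneg hVV).1
    have h2 := h.rA τ
    have h3 := h.r1 τ
    set E := ∫ k, V k * ‖f τ k‖ ^ 2
    have hE : 0 ≤ E := integral_nonneg fun k => by have := hV.nonneg k; positivity
    calc _ ≤ ((ρ τ)⁻¹) ^ 2 * (2 * (2 * 2 ^ (2 * s + 1) * (A * ρ τ) * E)) := by
          gcongr
          refine h1.trans ?_
          gcongr
          exact h2
      _ = (ρ τ)⁻¹ * (4 * 2 ^ (2 * s + 1) * A * E) := by field_simp; ring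
      _ ≤ 1 * (4 * 2 ^ (2 * s + 1) * A * E) := by gcongr; exact (hr τ).2
      _ = _ := one_mul _

open MeasureTheory Set

structure GS (s n T : ℝ) (g₀ : ℝ → ℂ) (f : ℝ → ℝ → ℂ) : Prop where
  meas : Measurable (Function.uncurry f)
  init : ∀ k, f 0 k = g₀ k
  supp : ∀ τ k, n < |k| → f τ k = 0
  symm : ∀ τ k, f τ (-k) = (starRingEnd ℂ) (f τ k)
  cont : ∀ k, Continuous (fun τ => f τ k)
  Dc : ∀ k, ContinuousOn (fun τ => Dn n (f τ) k) (Icc (-T) T)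
  der : ∀ k, ∀ τ ∈ Ioo (-T) T, HasDerivAt (fun τ => f τ k) (Dn n (f τ) k) τ
  hs : ∀ τ, Hs s (f τ)
  en : ∀ V, Adm (2 * s + 1) V → (∀ k, V k ≤ V0 s k) → ∀ τ ∈ Icc (-T) T,
    ∫ k, V k * ‖f τ k‖ ^ 2 ≤ 4 * ∫ k, V k * ‖g₀ k‖ ^ 2

lemma int_bd {Q : ℝ → ℂ} {T C : ℝ} (hT : 0 ≤ T) (hQ : ∀ σ ∈ Icc (-T) T, ‖Q σ‖ ≤ C) {a b : ℝ}
    (ha : a ∈ Icc (-T) T) (hb : b ∈ Icc (-T) T) : ‖∫ σ in a..b, Q σ‖ ≤ C * |b - a| := by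
  refine intervalIntegral.norm_integral_le_of_norm_le_const fun x hx => hQ x ?_
  have := uIoc_subset_uIcc hx
  exact (uIcc_subset_Icc ha hb) this

lemma gal_one {s n A T lam μ P : ℝ} (hs : 2 < s) (hn : 0 ≤ n) (hT : 0 ≤ T) (hA : 0 < A)
    (hl : 0 < lam) (hμ : 0 < μ) (hAT : 4 * 2 ^ (2 * s + 1) * A * T ≤ 1) {g₀ : ℝ → ℂ}
    (hm : Measurable g₀) (hb : ∃ C, ∀ k, ‖g₀ k‖ ≤ C) (hsu : ∀ k, n < |k| → g₀ k = 0)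
    (hr : ∀ k, g₀ (-k) = (starRingEnd ℂ) (g₀ k))
    (hP : lam ^ (2 * s) * (4 * ∫ k, ‖g₀ k‖ ^ 2) + 4 * ∫ k, V0 s k * ‖g₀ k‖ ^ 2 ≤ P)
    (hPA : 1/2 * (μ * (lam ^ (4 - 2 * s) * cj s 3) + P / μ) ≤ A) : ∃ f, GS s n T g₀ f := by
  obtain ⟨C, hC⟩ := hb
  have hC0 : 0 ≤ C := (norm_nonneg _).trans (hC 0)
  have hN0 : 0 ≤ ∫ k, ‖g₀ k‖ ^ 2 := integral_nonneg fun k => by positivity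
  set R := C + n * (Real.sqrt n * (4 * ∫ k, ‖g₀ k‖ ^ 2)) * T + 1 with hR
  have hR0 : 0 < R := by positivity
  obtain ⟨f, ρ, h⟩ := galerkin hn hA hR0 hT hm ⟨C, hC⟩ hsu hr
  have hexp : Real.exp (4 * 2 ^ (2 * s + 1) * A * T) ≤ 4 :=
    (Real.exp_le_exp.2 hAT).trans (by linarith [Real.exp_one_lt_d9])
  have hHs := fun τ => h.hs (s := s) (by linarith) τ
  have en : ∀ V, Adm (2 * s + 1) V → (∀ k, V k ≤ V0 s k) → ∀ τ ∈ Icc (-T) T,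
    ∫ k, V k * ‖f τ k‖ ^ 2 ≤ 4 * ∫ k, V k * ‖g₀ k‖ ^ 2 := by
    intro V hV hVV τ hτ
    refine (h.energy hs hn hT hA hV hVV τ hτ).trans ?_
    rw [mul_comm]
    exact mul_le_mul_of_nonneg_right hexp
      (integral_nonneg fun k => by have := hV.nonneg k; positivity)
  have en1 : ∀ τ ∈ Icc (-T) T, ∫ k, ‖f τ k‖ ^ 2 ≤ 4 * ∫ k, ‖g₀ k‖ ^ 2 := by
    intro τ hτ
    have := en _ (adm_one (by linarith)) (fun k => V0_one_le s k) τ hτ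
    simpa only [one_mul] using this
  have rho1 : ∀ τ ∈ Icc (-T) T, ρ τ = 1 := by
    intro τ hτ
    refine h.rR τ ?_ ?_
    · refine le_trans ((hHs τ).A_bound hs hl hμ ?_) hPA
      refine le_trans (add_le_add ?_ (en _ (adm_V0 (by linarith)) (fun k => le_rfl) τ hτ)) hP
      exact mul_le_mul_of_nonneg_left (en1 τ hτ) (by positivity)
    · intro k
      by_cases hk : n < |k|
      · rw [h.supp τ k hk, norm_zero]; exact hR0.le
      have hk := not_lt.1 hk
      have hd := duh hT (h.cont k).continuousOn (h.Qc k).continuousOn (h.der k) τ hτ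
      rw [hd, h.init]
      refine (norm_add_le _ _).trans ?_
      have hb : ∀ σ ∈ Icc (-T) T, ‖(((ρ σ)⁻¹ : ℝ) : ℂ) ^ 2 * Dn n (f σ) k‖ ≤
          n * (Real.sqrt n * (4 * ∫ k, ‖g₀ k‖ ^ 2)) := by
        intro σ hσ
        have h1 := h.r1 σ
        rw [norm_mul, norm_pow, Complex.norm_real, Real.norm_of_nonneg (by positivity)]
        have h2 : ((ρ σ)⁻¹) ^ 2 ≤ 1 := pow_le_one₀ (by positivity) (inv_le_one_of_one_le₀ h1)
        refine (mul_le_of_le_one_left (norm_nonneg _) h2).trans ((Dn_le_self (hHs σ).lt k).trans ?_)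
        have := en1 σ hσ
        have h0 : 0 ≤ ∫ l, ‖f σ l‖ ^ 2 := integral_nonneg fun k => by positivity
        gcongr
      have h3 := int_bd hT hb (a := 0) (b := τ) ⟨by linarith, hT⟩ hτ
      have h4 : |τ - 0| ≤ T := by rw [sub_zero]; exact abs_le.2 hτ
      have h5 : n * (Real.sqrt n * (4 * ∫ k, ‖g₀ k‖ ^ 2)) * |τ - 0| ≤
        n * (Real.sqrt n * (4 * ∫ k, ‖g₀ k‖ ^ 2)) * T := by gcongr
      rw [hR]
      linarith [hC k]
  refine ⟨f, h.meas, h.init, h.supp, h.symm, h.cont, fun k => ?_, fun k τ hτ => ?_, hHs, en⟩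
  · refine (h.Qc k).continuousOn.congr fun τ hτ => ?_
    simp [rho1 τ hτ]
  · have := h.der k τ hτ
    rw [rho1 τ ⟨hτ.1.le, hτ.2.le⟩] at this
    simpa using this

open MeasureTheory Set

lemma E_add {s P : ℝ} {f g : ℝ → ℂ} (hf : Hs s f) (hg : Hs s g) (h1 : ∫ k, V0 s k * ‖f k‖ ^ 2 ≤ P / 4)
    (h2 : ∫ k, V0 s k * ‖g k‖ ^ 2 ≤ P / 4) : ∫ k, V0 s k * ‖g k + f k‖ ^ 2 ≤ P := by
  have h3 : ∫ k, V0 s k * ‖g k + f k‖ ^ 2 ≤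
      ∫ k, (2 * (V0 s k * ‖g k‖ ^ 2) + 2 * (V0 s k * ‖f k‖ ^ 2)) := by
    refine integral_mono (hg.add hf).int ((hg.int.const_mul 2).add (hf.int.const_mul 2)) fun k => ?_
    have hV := V0_pos s k
    have h1 := norm_add_le (g k) (f k)
    have : ‖g k + f k‖ ^ 2 ≤ 2 * ‖g k‖ ^ 2 + 2 * ‖f k‖ ^ 2 := by
      nlinarith [sq_nonneg (‖f k‖ - ‖g k‖), norm_nonneg (g k + f k)]
    change V0 s k * ‖g k + f k‖ ^ 2 ≤ 2 * (V0 s k * ‖g k‖ ^ 2) + 2 * (V0 s k * ‖f k‖ ^ 2)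
    nlinarith
  rw [integral_add (hg.int.const_mul 2) (hf.int.const_mul 2), integral_const_mul, integral_const_mul] at h3
  linarith

lemma E_sub {s P : ℝ} {f g : ℝ → ℂ} (hf : Hs s f) (hg : Hs s g) (h1 : ∫ k, V0 s k * ‖f k‖ ^ 2 ≤ P / 4)
    (h2 : ∫ k, V0 s k * ‖g k‖ ^ 2 ≤ P / 4) : ∫ k, V0 s k * ‖g k - f k‖ ^ 2 ≤ P := by
  have := E_add hf.neg hg (by simpa using h1) h2
  simpa [sub_eq_add_neg] using this

lemma tri1 {s : ℝ} (hs : 2 < s) {u v w : ℝ → ℂ} {P : ℝ} (hu : Hs s u) (hv : Hs s v) (hw : Lt w)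
    (hPu : ∫ k, V0 s k * ‖u k‖ ^ 2 ≤ P) (hPv : ∫ k, V0 s k * ‖v k‖ ^ 2 ≤ P) (hPw : ∫ k, ‖w k‖ ^ 2 ≤ P) :
    Integrable (fun k => ‖w k‖ * ‖-Complex.I * (k:ℂ) * Gq u v k‖) ∧
    ∫ k, ‖w k‖ * ‖-Complex.I * (k:ℂ) * Gq u v k‖ ≤ Bc s P * P ∧
    ∫ k, 2 * ((starRingEnd ℂ) (w k) * (-Complex.I * (k:ℂ) * Gq u v k)).re =
      2 * (∫ z : ℝ × ℝ, ((z.1 * Sker (z.1 - z.2) z.2 : ℝ) : ℂ) *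
      (u (z.1 - z.2) * v z.2 * (starRingEnd ℂ) (w z.1))).im := by
  have h := hs_tri hs hu hv hw hPu hPv hPw
  have h2 := tri_fub (V := fun _ => 1) measurable_const (fun _ => zero_le_one) hu.lt hv.lt hw.meas
    (by simpa only [mul_one] using h.1)
  simp only [one_mul, mul_one] at h2
  exact ⟨h2.1.1, h2.1.2.trans h.2, h2.2⟩

lemma tri2 {s : ℝ} (hs : 2 < s) {h w : ℝ → ℂ} {P : ℝ} (hh : Hs s h) (hw : Hs s w)
    (hPh : ∫ k, V0 s k * ‖h k‖ ^ 2 ≤ P) (hPw : ∫ k, V0 s k * ‖w k‖ ^ 2 ≤ P)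
    (hr : ∀ᵐ k, h (-k) = (starRingEnd ℂ) (h k)) :
    |∫ k, 2 * ((starRingEnd ℂ) (w k) * (-Complex.I * (k:ℂ) * Gq h w k)).re| ≤
      1/2 * (cj s 3 + P) * ∫ k, ‖w k‖ ^ 2 := by
  have hPw' : ∫ k, ‖w k‖ ^ 2 ≤ P := hw.L2.2.trans hPw
  rw [(tri1 hs hh hw hw.lt hPh hPw hPw').2.2, abs_mul, abs_two]
  have h1 := sym2 hr (hs_tri hs hh hw hw.lt hPh hPw hPw').1 (hh.L32 hs hPh).1 hw.lt.int
  have h2 := (hh.L32 hs hPh).2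
  have h0 : 0 ≤ ∫ k, ‖w k‖ ^ 2 := integral_nonneg fun k => by positivity
  calc _ ≤ 2 * (1 / 2 * (1/2 * (cj s 3 + P)) * ∫ k, ‖w k‖ ^ 2) := by
        gcongr; refine h1.trans ?_; gcongr
    _ = _ := by ring

lemma stab {s T P ε : ℝ} (hs : 2 < s) (hT : 0 ≤ T) (hε : 0 ≤ ε) {f g Q : ℝ → ℝ → ℂ}
    (hfm : Measurable (Function.uncurry f)) (hgm : Measurable (Function.uncurry g))
    (hQm : Measurable (Function.uncurry Q))
    (hf : ∀ τ ∈ Icc (-T) T, Hs s (f τ)) (hg : ∀ τ ∈ Icc (-T) T, Hs s (g τ))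
    (hPf : ∀ τ ∈ Icc (-T) T, ∫ k, V0 s k * ‖f τ k‖ ^ 2 ≤ P / 4)
    (hPg : ∀ τ ∈ Icc (-T) T, ∫ k, V0 s k * ‖g τ k‖ ^ 2 ≤ P / 4)
    (hrf : ∀ τ ∈ Icc (-T) T, ∀ᵐ k, f τ (-k) = (starRingEnd ℂ) (f τ k))
    (hrg : ∀ τ ∈ Icc (-T) T, ∀ᵐ k, g τ (-k) = (starRingEnd ℂ) (g τ k))
    (hwc : ∀ᵐ k : ℝ, ContinuousOn (fun τ => g τ k - f τ k) (Icc (-T) T))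
    (hQc : ∀ᵐ k : ℝ, ContinuousOn (fun τ => Q τ k) (Icc (-T) T))
    (hder : ∀ᵐ k : ℝ, ∀ τ ∈ Ioo (-T) T, HasDerivAt (fun τ => g τ k - f τ k) (Q τ k) τ)
    (hdec : ∀ τ ∈ Icc (-T) T, ∃ W, Lt W ∧ ∫ k, ‖W k‖ ^ 2 ≤ P ∧ ∀ k : ℝ,
      (starRingEnd ℂ) (g τ k - f τ k) * Q τ k =
      (starRingEnd ℂ) (g τ k - f τ k) * (-Complex.I * (k:ℂ) *
        Gq (fun l => g τ l + f τ l) (fun l => g τ l - f τ l) k) +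
      (ε:ℂ) * ((starRingEnd ℂ) (W k) * (-Complex.I * (k:ℂ) * Gq (f τ) (f τ) k))) :
    ∀ τ ∈ Icc (-T) T, ∫ k, ‖g τ k - f τ k‖ ^ 2 ≤
      ((∫ k, ‖g 0 k - f 0 k‖ ^ 2) + (2 * ε * (Bc s P * P)) * T) * Real.exp (1/2 * (cj s 3 + P) * T) := by
  have h0 : (0:ℝ) ∈ Icc (-T) T := ⟨by linarith, hT⟩
  have hP : 0 ≤ P := by have := (E_nonneg s (f 0)).trans (hPf 0 h0); linarith
  have c3 := cj_nonneg s 3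
  have c1 := cj_nonneg s 1
  have hBc : 0 ≤ Bc s P := by unfold Bc; positivity
  have key : ∀ τ ∈ Icc (-T) T,
      (Integrable (fun k => ‖g τ k - f τ k‖ * ‖Q τ k‖) ∧
      ∫ k, ‖g τ k - f τ k‖ * ‖Q τ k‖ ≤ (1 + ε) * (Bc s P * P)) ∧
      |∫ k, 2 * ((starRingEnd ℂ) (g τ k - f τ k) * Q τ k).re| ≤
        1/2 * (cj s 3 + P) * (∫ k, ‖g τ k - f τ k‖ ^ 2) + 2 * ε * (Bc s P * P) := by
    intro τ hτ
    obtain ⟨W, hW, hWP, hWe⟩ := hdec τ hτ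
    have hh := (hg τ hτ).add (hf τ hτ)
    have hw := (hg τ hτ).sub (hf τ hτ)
    have eh := E_add (hf τ hτ) (hg τ hτ) (hPf τ hτ) (hPg τ hτ)
    have ew := E_sub (hf τ hτ) (hg τ hτ) (hPf τ hτ) (hPg τ hτ)
    have a1 := tri1 hs hh hw hw.lt eh ew (hw.L2.2.trans ew)
    have hPf' : ∫ k, V0 s k * ‖f τ k‖ ^ 2 ≤ P := (hPf τ hτ).trans (by linarith)
    have a2 := tri1 hs (hf τ hτ) (hf τ hτ) hW hPf' hPf' hWP
    have hr : ∀ᵐ k, g τ (-k) + f τ (-k) = (starRingEnd ℂ) (g τ k + f τ k) := by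
      filter_upwards [hrf τ hτ, hrg τ hτ] with k h1 h2
      rw [h1, h2, map_add]
    have a3 := tri2 hs hh hw eh ew hr
    set X : ℝ → ℂ := fun k => (starRingEnd ℂ) (g τ k - f τ k) * (-Complex.I * (k:ℂ) *
        Gq (fun l => g τ l + f τ l) (fun l => g τ l - f τ l) k) with hX
    set Y : ℝ → ℂ := fun k => (starRingEnd ℂ) (W k) * (-Complex.I * (k:ℂ) * Gq (f τ) (f τ) k) with hY
    have hXm : Measurable X := by
      have := Gq_meas0 hh.meas hw.meas
      have := hw.meas
      exact (Complex.continuous_conj.measurable.comp hw.meas).mul (by fun_prop)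
    have hYm : Measurable Y := by
      have := Gq_meas0 (hf τ hτ).meas (hf τ hτ).meas
      exact (Complex.continuous_conj.measurable.comp hW.meas).mul (by fun_prop)
    have nX : ∀ k, ‖g τ k - f τ k‖ * ‖-Complex.I * (k:ℂ) *
        Gq (fun l => g τ l + f τ l) (fun l => g τ l - f τ l) k‖ = ‖X k‖ := by
      intro k; rw [hX]; simp only; rw [norm_mul ((starRingEnd ℂ) _), RCLike.norm_conj]
    have nY : ∀ k, ‖W k‖ * ‖-Complex.I * (k:ℂ) * Gq (f τ) (f τ) k‖ = ‖Y k‖ := by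
      intro k; rw [hY]; simp only; rw [norm_mul ((starRingEnd ℂ) _), RCLike.norm_conj]
    simp only [nX] at a1
    simp only [nY] at a2
    have hXi : Integrable X := (integrable_norm_iff hXm.aestronglyMeasurable).1 a1.1
    have hYi : Integrable Y := (integrable_norm_iff hYm.aestronglyMeasurable).1 a2.1
    have nQ : ∀ k, ‖g τ k - f τ k‖ * ‖Q τ k‖ = ‖X k + ε * Y k‖ := by
      intro k; rw [hX, hY]; simp only; rw [← hWe k, norm_mul, RCLike.norm_conj]
    have hZi : Integrable (fun k => X k + ε * Y k) := hXi.add (hYi.const_mul _)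
    refine ⟨⟨?_, ?_⟩, ?_⟩
    · simp only [nQ]; exact hZi.norm
    · simp only [nQ]
      have : ∫ k, ‖X k + ε * Y k‖ ≤ ∫ k, (‖X k‖ + ε * ‖Y k‖) :=
        integral_mono hZi.norm (a1.1.add (a2.1.const_mul ε)) fun k => by
          refine (norm_add_le _ _).trans ?_
          rw [norm_mul (ε:ℂ), Complex.norm_real, Real.norm_of_nonneg hε]
      refine this.trans ?_
      rw [integral_add a1.1 (a2.1.const_mul ε), integral_const_mul, add_mul, one_mul]
      have := a2.2.1
      have := a1.2.1
      gcongr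
    · simp only [hWe]
      have e : ∀ k, 2 * (X k + ε * Y k).re = 2 * (X k).re + (2 * ε) * (Y k).re := by
        intro k; rw [Complex.add_re, Complex.re_ofReal_mul]; ring
      have i1 : Integrable (fun k => 2 * (X k).re) := hXi.re.const_mul 2
      have i2 : Integrable (fun k => (2 * ε) * (Y k).re) := hYi.re.const_mul _
      have : ∫ k, 2 * (X k + ε * Y k).re = (∫ k, 2 * (X k).re) + (2 * ε) * ∫ k, (Y k).re := by
        simp only [e]; rw [integral_add i1 i2, integral_const_mul (2 * ε)]
      change |∫ k, 2 * (X k + ε * Y k).re| ≤ _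
      rw [this]
      refine (abs_add_le _ _).trans (add_le_add a3 ?_)
      rw [abs_mul, abs_of_nonneg (by positivity)]
      gcongr
      refine (abs_integral_le_integral_abs).trans (le_trans ?_ a2.2.1)
      exact integral_mono hYi.re.abs a2.1 fun k => Complex.abs_re_le_norm _
  have main := energy (c := 1/2 * (cj s 3 + P)) (d := 2 * ε * (Bc s P * P)) (B := (1 + ε) * (Bc s P * P)) (T := T)
    (w := fun τ k => g τ k - f τ k) (Q := Q) (V := fun _ => 1)
    hT (by positivity) (by positivity) (hgm.sub hfm) hQm measurable_const (fun _ => zero_le_one)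
    hwc hQc hder (fun τ hτ => by simpa only [one_mul] using ((hg τ hτ).sub (hf τ hτ)).lt.int)
    (fun τ hτ => by simpa only [one_mul] using (key τ hτ).1.1)
    (fun τ hτ => by simpa only [one_mul] using (key τ hτ).1.2)
    (fun τ hτ => by simpa only [one_mul] using (key τ hτ).2)
  simpa only [one_mul] using main

lemma gal_cauchy {s n m T P : ℝ} (hs : 2 < s) (hT : 0 ≤ T) (hn : 0 < n) (hnm : n ≤ m) {g₀ h₀ : ℝ → ℂ}
    {f g : ℝ → ℝ → ℂ} (hf : GS s n T g₀ f) (hg : GS s m T h₀ g)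
    (h1 : ∫ k, V0 s k * ‖g₀ k‖ ^ 2 ≤ P / 16) (h2 : ∫ k, V0 s k * ‖h₀ k‖ ^ 2 ≤ P / 16) :
    ∀ τ ∈ Icc (-T) T, ∫ k, ‖g τ k - f τ k‖ ^ 2 ≤
      ((∫ k, ‖h₀ k - g₀ k‖ ^ 2) + (2 * n⁻¹ * (Bc s P * P)) * T) * Real.exp (1/2 * (cj s 3 + P) * T) := by
  have hV := adm_V0 (s := s) (by linarith)
  have e1 : ∀ τ ∈ Icc (-T) T, ∫ k, V0 s k * ‖f τ k‖ ^ 2 ≤ P / 4 := fun τ hτ =>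
    (hf.en _ hV (fun _ => le_rfl) τ hτ).trans (by linarith)
  have e2 : ∀ τ ∈ Icc (-T) T, ∫ k, V0 s k * ‖g τ k‖ ^ 2 ≤ P / 4 := fun τ hτ =>
    (hg.en _ hV (fun _ => le_rfl) τ hτ).trans (by linarith)
  have hP : 0 ≤ P := by have := (E_nonneg s g₀).trans h1; linarith
  have main := stab (P := P) (ε := n⁻¹) (f := f) (g := g) (Q := fun τ k => Dn m (g τ) k - Dn n (f τ) k)
    hs hT (by positivity) hf.meas hg.meas ((Dn_meas2 hg.meas).sub (Dn_meas2 hf.meas))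
    (fun τ _ => hf.hs τ) (fun τ _ => hg.hs τ) e1 e2
    (fun τ _ => Filter.Eventually.of_forall (hf.symm τ)) (fun τ _ => Filter.Eventually.of_forall (hg.symm τ))
    (Filter.Eventually.of_forall fun k => ((hg.cont k).sub (hf.cont k)).continuousOn)
    (Filter.Eventually.of_forall fun k => (hg.Dc k).sub (hf.Dc k))
    (Filter.Eventually.of_forall fun k τ hτ => (hg.der k τ hτ).sub (hf.der k τ hτ))
    (fun τ hτ => ?_)
  · intro τ hτ
    have := main τ hτ
    simpa only [hf.init, hg.init] using this
  · refine ⟨fun k => if |k| ≤ n then 0 else (n:ℂ) * g τ k, ?_, ?_, ?_⟩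
    · have hm : Measurable (fun k => if |k| ≤ n then (0:ℂ) else (n:ℂ) * g τ k) :=
        Measurable.ite (measurableSet_le (by fun_prop) measurable_const) measurable_const
          ((hg.hs τ).meas.const_mul _)
      refine ⟨hm, ((hg.hs τ).w2 hs).1.mono' (hm.norm.pow_const 2).aestronglyMeasurable
        (Filter.Eventually.of_forall fun k => ?_)⟩
      rw [Real.norm_of_nonneg (by positivity)]
      split_ifs with h
      · simp; positivity
      · rw [norm_mul, mul_pow, Complex.norm_real, Real.norm_of_nonneg hn.le, Real.rpow_two]
        gcongr; exact (not_le.1 h).le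
    · refine le_trans (le_trans ?_ ((hg.hs τ).w2 hs).2) ((e2 τ hτ).trans (by linarith))
      refine integral_mono_of_nonneg (Filter.Eventually.of_forall fun k => by positivity) ((hg.hs τ).w2 hs).1
        (Filter.Eventually.of_forall fun k => ?_)
      simp only
      split_ifs with h
      · simp; positivity
      · rw [norm_mul, mul_pow, Complex.norm_real, Real.norm_of_nonneg hn.le, Real.rpow_two]
        gcongr; exact (not_le.1 h).le
    · intro k
      rw [Gq_diff (hf.hs τ).lt (hg.hs τ).lt]
      by_cases hk : |k| ≤ n
      · simp only [Dn, if_pos hk, if_pos (hk.trans hnm)]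
        simp; ring
      · have hf0 := hf.supp τ k (not_le.1 hk)
        have hnc : (n:ℂ) ≠ 0 := by exact_mod_cast hn.ne'
        by_cases hk2 : |k| ≤ m
        · simp only [Dn, if_neg hk, if_pos hk2, hf0, map_mul, Complex.conj_ofReal]
          push_cast
          field_simp
          simp
          ring
        · have hg0 := hg.supp τ k (not_le.1 hk2)
          simp [hf0, hg0]

open MeasureTheory Set Filter Topology

lemma fatou {V : ℝ → ℝ} (hV : Measurable V) (hV0 : ∀ k, 0 ≤ V k) {u : ℕ → ℝ → ℂ} {v : ℝ → ℂ} {C : ℝ}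
    (hu : ∀ n, Measurable (u n)) (hv : ∀ k, Tendsto (fun n => u n k) atTop (𝓝 (v k)))
    (hi : ∀ n, Integrable (fun k => V k * ‖u n k‖ ^ 2)) (hC : ∀ n, ∫ k, V k * ‖u n k‖ ^ 2 ≤ C) :
    Integrable (fun k => V k * ‖v k‖ ^ 2) ∧ ∫ k, V k * ‖v k‖ ^ 2 ≤ C := by
  have hvm : Measurable v := measurable_of_tendsto_metrizable hu (tendsto_pi_nhds.2 hv)
  have hC0 : 0 ≤ C := (integral_nonneg fun k => by have := hV0 k; positivity).trans (hC 0)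
  have hL : ∫⁻ k, ENNReal.ofReal (V k * ‖v k‖ ^ 2) ≤ ENNReal.ofReal C := by
    have e : ∀ k, ENNReal.ofReal (V k * ‖v k‖ ^ 2) =
        liminf (fun n => ENNReal.ofReal (V k * ‖u n k‖ ^ 2)) atTop := by
      intro k
      refine (Tendsto.liminf_eq ?_).symm
      exact ENNReal.tendsto_ofReal (((hv k).norm.pow 2).const_mul _)
    simp only [e]
    refine (lintegral_liminf_le fun n => ?_).trans ?_
    · exact (hV.mul ((hu n).norm.pow_const 2)).ennreal_ofReal
    · refine liminf_le_of_le (by isBoundedDefault) fun b hb => ?_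
      obtain ⟨n, hn⟩ := hb.exists
      refine hn.trans ?_
      rw [← ofReal_integral_eq_lintegral_ofReal (hi n) (Eventually.of_forall fun k => by
        have := hV0 k; positivity)]
      exact ENNReal.ofReal_le_ofReal (hC n)
  have hm : Measurable (fun k => V k * ‖v k‖ ^ 2) := hV.mul (hvm.norm.pow_const 2)
  have hint : Integrable (fun k => V k * ‖v k‖ ^ 2) := by
    refine ⟨hm.aestronglyMeasurable, ?_⟩
    rw [hasFiniteIntegral_iff_ofReal (Eventually.of_forall fun k => by have := hV0 k; positivity)]
    exact hL.trans_lt ENNReal.ofReal_lt_top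
  refine ⟨hint, ?_⟩
  rw [← ofReal_integral_eq_lintegral_ofReal hint (Eventually.of_forall fun k => by
        have := hV0 k; positivity)] at hL
  exact (ENNReal.ofReal_le_ofReal_iff hC0).1 hL

open Classical in
noncomputable def cut (g₀ : ℝ → ℂ) (n : ℕ) (k : ℝ) : ℂ := if |k| ≤ n + 1 ∧ ‖g₀ k‖ ≤ n + 1 then g₀ k else 0

lemma cut_meas {g₀ : ℝ → ℂ} (h : Measurable g₀) (n : ℕ) : Measurable (cut g₀ n) := by
  unfold cut
  refine Measurable.ite ?_ h measurable_const
  exact (measurableSet_le (by fun_prop : Measurable fun k : ℝ => |k|) measurable_const).inter (measurableSet_le h.norm measurable_const)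

lemma cut_norm (g₀ : ℝ → ℂ) (n : ℕ) (k : ℝ) : ‖cut g₀ n k‖ ≤ ‖g₀ k‖ := by
  unfold cut; split_ifs <;> simp

lemma cut_bdd (g₀ : ℝ → ℂ) (n : ℕ) (k : ℝ) : ‖cut g₀ n k‖ ≤ n + 1 := by
  unfold cut; split_ifs with h
  · exact h.2
  · simp; positivity

lemma cut_supp (g₀ : ℝ → ℂ) (n : ℕ) (k : ℝ) (h : (n:ℝ) + 1 < |k|) : cut g₀ n k = 0 := by
  unfold cut; rw [if_neg]; intro h2; linarith [h2.1]

lemma cut_symm {g₀ : ℝ → ℂ} (hg : ∀ k, g₀ (-k) = (starRingEnd ℂ) (g₀ k)) (n : ℕ) (k : ℝ) :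
    cut g₀ n (-k) = (starRingEnd ℂ) (cut g₀ n k) := by
  unfold cut
  rw [hg k, abs_neg, RCLike.norm_conj]
  split_ifs <;> simp

lemma cut_ev (g₀ : ℝ → ℂ) (k : ℝ) : ∃ N : ℕ, |k| ≤ N ∧ ∀ n ≥ N, cut g₀ n k = g₀ k := by
  obtain ⟨N, hN⟩ := exists_nat_ge (max |k| ‖g₀ k‖)
  refine ⟨N, (le_max_left _ _).trans hN, fun n hn => ?_⟩
  have hn' : (N:ℝ) ≤ n := by exact_mod_cast hn
  unfold cut
  rw [if_pos]
  exact ⟨by linarith [le_max_left |k| ‖g₀ k‖], by linarith [le_max_right |k| ‖g₀ k‖]⟩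

lemma cut_tend (g₀ : ℝ → ℂ) (k : ℝ) : Tendsto (fun n => cut g₀ n k) atTop (𝓝 (g₀ k)) := by
  obtain ⟨N, -, hN⟩ := cut_ev g₀ k
  exact tendsto_atTop_of_eventually_const hN

lemma cut_diff (g₀ : ℝ → ℂ) {n m : ℕ} (h : n ≤ m) (k : ℝ) :
    ‖cut g₀ m k - cut g₀ n k‖ ≤ ‖g₀ k - cut g₀ n k‖ := by
  have hn' : (n:ℝ) ≤ m := by exact_mod_cast h
  by_cases h1 : |k| ≤ (n:ℝ) + 1 ∧ ‖g₀ k‖ ≤ (n:ℝ) + 1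
  · have h2 : |k| ≤ (m:ℝ) + 1 ∧ ‖g₀ k‖ ≤ (m:ℝ) + 1 := ⟨by linarith [h1.1], by linarith [h1.2]⟩
    simp only [cut, if_pos h1, if_pos h2]; exact le_rfl
  · have : cut g₀ n k = 0 := by simp only [cut, if_neg h1]
    rw [this, sub_zero, sub_zero]; exact cut_norm _ _ _

lemma cut_l2 {g₀ : ℝ → ℂ} (hg : Lt g₀) :
    Tendsto (fun n => ∫ k, ‖g₀ k - cut g₀ n k‖ ^ 2) atTop (𝓝 0) := by
  have := tendsto_integral_of_dominated_convergence (μ := volume) (F := fun n k => ‖g₀ k - cut g₀ n k‖ ^ 2)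
    (f := fun _ => (0:ℝ)) (fun k => ‖g₀ k‖ ^ 2)
    (fun n => ((hg.meas.sub (cut_meas hg.meas n)).norm.pow_const 2).aestronglyMeasurable) hg.int
    (fun n => Eventually.of_forall fun k => ?_) (Eventually.of_forall fun k => ?_)
  · simpa using this
  · rw [Real.norm_of_nonneg (by positivity)]
    unfold cut; split_ifs
    · simp
    · simp
  · have := ((tendsto_const_nhds (x := g₀ k)).sub (cut_tend g₀ k)).norm.pow 2
    simpa using this

lemma cut_E {s : ℝ} {g₀ : ℝ → ℂ} (hg : Hs s g₀) {V : ℝ → ℝ} (hV : Measurable V) (h0 : ∀ k, 0 ≤ V k)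
    (hVV : ∀ k, V k ≤ V0 s k) (n : ℕ) : ∫ k, V k * ‖cut g₀ n k‖ ^ 2 ≤ ∫ k, V k * ‖g₀ k‖ ^ 2 := by
  refine integral_mono_of_nonneg (Eventually.of_forall fun k => by have := h0 k; positivity)
    (hg.wt hV h0 hVV).1 (Eventually.of_forall fun k => ?_)
  have := h0 k
  have := cut_norm g₀ n k
  simp only
  gcongr

structure Sol (s T : ℝ) (g₀ : ℝ → ℂ) (f : ℝ → ℝ → ℂ) : Prop where
  meas : Measurable (Function.uncurry f)
  symm : ∀ τ k, f τ (-k) = (starRingEnd ℂ) (f τ k)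
  hs : ∀ τ, Hs s (f τ)
  en : ∀ V, Adm (2 * s + 1) V → (∀ k, V k ≤ V0 s k) → ∀ τ,
    ∫ k, V k * ‖f τ k‖ ^ 2 ≤ 4 * ∫ k, V k * ‖g₀ k‖ ^ 2
  duh : ∀ k, ∀ τ ∈ Icc (-T) T, f τ k = g₀ k + ∫ σ in (0:ℝ)..τ, -Complex.I * (k:ℂ) * Gq (f σ) (f σ) k

lemma GS.l2 {s n T P : ℝ} (hs : 2 < s) {g₀ : ℝ → ℂ} {f : ℝ → ℝ → ℂ} (h : GS s n T g₀ f)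
    (h1 : ∫ k, V0 s k * ‖g₀ k‖ ^ 2 ≤ P / 16) : ∀ τ ∈ Icc (-T) T, ∫ k, V0 s k * ‖f τ k‖ ^ 2 ≤ P / 4 := by
  intro τ hτ
  have := h.en _ (adm_V0 (by linarith)) (fun _ => le_rfl) τ hτ
  linarith

lemma Gq_meas3 {f : ℝ → ℝ → ℂ} (hf : Measurable (Function.uncurry f)) (k : ℝ) :
    Measurable (fun σ => Gq (f σ) (f σ) k) := by
  have h : Measurable (fun σ : ℝ => (σ, k)) := by fun_prop
  have h3 := (Gq_meas hf hf).comp h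
  exact h3

lemma Gq_unif {s P e : ℝ} {f g : ℝ → ℂ} (hf : Hs s f) (hg : Hs s g) (h1 : ∫ k, V0 s k * ‖f k‖ ^ 2 ≤ P / 4)
    (h2 : ∫ k, V0 s k * ‖g k‖ ^ 2 ≤ P / 4) (he : ∫ k, ‖g k - f k‖ ^ 2 ≤ e) (k : ℝ) :
    ‖-Complex.I * (k:ℂ) * Gq g g k - -Complex.I * (k:ℂ) * Gq f f k‖ ≤
      |k| * (Real.sqrt |k| * (Real.sqrt P * Real.sqrt e)) := by
  rw [← mul_sub, norm_mul, norm_mul, norm_neg, Complex.norm_I, one_mul, Complex.norm_real, Real.norm_eq_abs]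
  have := Gq_diff_le hf.lt hg.lt k
  have e1 := ((hg.add hf).L2.2).trans (E_add hf hg h1 h2)
  gcongr
  refine this.trans ?_
  gcongr

set_option maxHeartbeats 1600000 in
lemma lim_sol {s T : ℝ} (hs : 2 < s) (hT : 0 ≤ T) {g₀ : ℝ → ℂ} (hg : Hs s g₀)
    {F : ℕ → ℝ → ℝ → ℂ} (hF : ∀ n : ℕ, GS s (n + 1) T (cut g₀ n) (F n)) : ∃ f, Sol s T g₀ f := by
  set P := 16 * ∫ k, V0 s k * ‖g₀ k‖ ^ 2 with hP
  have hP0 : 0 ≤ P := by have := E_nonneg s g₀; positivity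
  have hV := adm_V0 (s := s) (by linarith)
  have hcE : ∀ n, ∫ k, V0 s k * ‖cut g₀ n k‖ ^ 2 ≤ P / 16 := fun n => by
    have := cut_E hg hV.meas hV.nonneg (fun _ => le_rfl) n
    rw [hP]; linarith
  have hFE := fun n => (hF n).l2 hs (hcE n)
  set e : ℕ → ℝ := fun n => ((∫ k, ‖g₀ k - cut g₀ n k‖ ^ 2) + (2 * ((n:ℝ) + 1)⁻¹ * (Bc s P * P)) * T) *
    Real.exp (1/2 * (cj s 3 + P) * T) with he
  have het : Tendsto e atTop (𝓝 0) := by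
    have h1 := cut_l2 hg.lt
    have h2 : Tendsto (fun n : ℕ => ((n:ℝ) + 1)⁻¹) atTop (𝓝 0) := by
      simpa [one_div] using tendsto_one_div_add_atTop_nhds_zero_nat (𝕜 := ℝ)
    have := (h1.add (((h2.const_mul 2).mul_const (Bc s P * P)).mul_const T)).mul_const
      (Real.exp (1/2 * (cj s 3 + P) * T))
    simpa only [mul_zero, zero_mul, add_zero] using this
  have hst : Tendsto (fun n => Real.sqrt P * Real.sqrt (e n)) atTop (𝓝 0) := by
    have := (Real.continuous_sqrt.tendsto 0).comp het
    simpa using this.const_mul (Real.sqrt P)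
  have hc : ∀ n m, n ≤ m → ∀ τ ∈ Icc (-T) T, ∫ k, ‖F m τ k - F n τ k‖ ^ 2 ≤ e n := by
    intro n m hnm τ hτ
    have hnm' : (n:ℝ) ≤ m := by exact_mod_cast hnm
    have key : ∫ k, ‖cut g₀ m k - cut g₀ n k‖ ^ 2 ≤ ∫ k, ‖g₀ k - cut g₀ n k‖ ^ 2 := by
      refine integral_mono_of_nonneg (Eventually.of_forall fun k => by positivity)
        ?_ (Eventually.of_forall fun k => ?_)
      · have hc : Lt (cut g₀ n) := ⟨cut_meas hg.meas n, by
          have := (hF n).hs 0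
          have h2 := this.lt.int
          simpa only [(hF n).init] using h2⟩
        exact (hg.lt.sub hc).int
      · have := cut_diff g₀ hnm k
        simp only
        gcongr
    refine (gal_cauchy hs hT (by positivity) (by linarith) (hF n) (hF m) (hcE n) (hcE m) τ hτ).trans ?_
    rw [he]
    simp only
    gcongr
  have hD : ∀ (n : ℕ) (k : ℝ), |k| ≤ (n:ℝ) → ∀ u : ℝ → ℂ, Dn (n + 1) u k = -Complex.I * (k:ℂ) * Gq u u k := by
    intro n k hk u
    unfold Dn; rw [if_pos (by linarith)]
  have hFd : ∀ (n : ℕ) (k : ℝ), |k| ≤ (n:ℝ) → ∀ τ ∈ Icc (-T) T,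
      F n τ k = cut g₀ n k + ∫ σ in (0:ℝ)..τ, -Complex.I * (k:ℂ) * Gq (F n σ) (F n σ) k := by
    intro n k hk τ hτ
    have := _root_.duh hT ((hF n).cont k).continuousOn ((hF n).Dc k) ((hF n).der k) τ hτ
    simpa only [(hF n).init, hD n k hk] using this
  have h0m : (0:ℝ) ∈ Icc (-T) T := ⟨by linarith, hT⟩
  have hFc : ∀ (n : ℕ) (k : ℝ), |k| ≤ (n:ℝ) → ∀ τ ∈ Icc (-T) T,
      IntervalIntegrable (fun σ => -Complex.I * (k:ℂ) * Gq (F n σ) (F n σ) k) volume 0 τ := by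
    intro n k hk τ hτ
    have := (hF n).Dc k
    simp only [hD n k hk] at this
    exact (this.mono (uIcc_subset_Icc h0m hτ)).intervalIntegrable
  have hpc : ∀ k, ∀ τ ∈ Icc (-T) T, CauchySeq (fun n => F n τ k) := by
    intro k τ hτ
    obtain ⟨N, hkN, hN⟩ := cut_ev g₀ k
    rw [← cauchySeq_shift N]
    refine cauchySeq_of_le_tendsto_0' (fun n => |k| * (Real.sqrt |k| * (Real.sqrt P * Real.sqrt (e (n + N)))) * T) ?_ ?_
    · intro n m hnm
      have hn1 : |k| ≤ ((n + N : ℕ) : ℝ) := by push_cast; linarith [(Nat.cast_nonneg n : (0:ℝ) ≤ n)]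
      have hm1 : |k| ≤ ((m + N : ℕ) : ℝ) := by push_cast; linarith [(Nat.cast_nonneg m : (0:ℝ) ≤ m)]
      rw [dist_comm, dist_eq_norm, hFd _ k hn1 τ hτ, hFd _ k hm1 τ hτ, hN _ (by omega), hN _ (by omega),
        add_sub_add_left_eq_sub, ← intervalIntegral.integral_sub (hFc _ k hm1 τ hτ) (hFc _ k hn1 τ hτ)]
      refine (int_bd hT (fun σ hσ => Gq_unif ((hF _).hs σ) ((hF _).hs σ) (hFE _ σ hσ) (hFE _ σ hσ)
        (hc _ _ (by omega) σ hσ) k) h0m hτ).trans ?_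
      have h4 : |τ - 0| ≤ T := by rw [sub_zero]; exact abs_le.2 hτ
      gcongr
    · have := (((hst.comp (tendsto_add_atTop_nat N)).const_mul (Real.sqrt |k|)).const_mul |k|).mul_const T
      simpa using this
  let cl : ℝ → ℝ := fun τ => max (-T) (min τ T)
  have hcl : ∀ τ, cl τ ∈ Icc (-T) T := fun τ => ⟨le_max_left _ _, max_le (by linarith) (min_le_right _ _)⟩
  have hcl2 : ∀ τ ∈ Icc (-T) T, cl τ = τ := fun τ h => by
    simp only [cl]; rw [min_eq_left h.2, max_eq_right h.1]
  have hclm : Measurable cl := by fun_prop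
  have hlim : ∀ τ k, ∃ y, Tendsto (fun n => F n (cl τ) k) atTop (𝓝 y) := fun τ k =>
    cauchySeq_tendsto_of_complete (hpc k (cl τ) (hcl τ))
  choose f hf using hlim
  have hfm : Measurable (Function.uncurry f) := by
    refine measurable_of_tendsto_metrizable (f := fun n => fun z : ℝ × ℝ => F n (cl z.1) z.2) (fun n => ?_)
      (tendsto_pi_nhds.2 fun z => hf z.1 z.2)
    exact (hF n).meas.comp ((hclm.comp measurable_fst).prodMk measurable_snd)
  have fen : ∀ V, Adm (2 * s + 1) V → (∀ k, V k ≤ V0 s k) → ∀ τ,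
      Integrable (fun k => V k * ‖f τ k‖ ^ 2) ∧ ∫ k, V k * ‖f τ k‖ ^ 2 ≤ 4 * ∫ k, V k * ‖g₀ k‖ ^ 2 := by
    intro V hV hVV τ
    refine fatou hV.meas hV.nonneg (fun n => ((hF n).hs (cl τ)).meas) (hf τ)
      (fun n => (((hF n).hs (cl τ)).wt hV.meas hV.nonneg hVV).1) (fun n => ?_)
    refine ((hF n).en V hV hVV (cl τ) (hcl τ)).trans ?_
    have := cut_E hg hV.meas hV.nonneg hVV n
    gcongr
  have fHs : ∀ τ, Hs s (f τ) := fun τ => ⟨uncurry_meas hfm τ, (fen _ hV (fun _ => le_rfl) τ).1⟩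
  have fE : ∀ τ, ∫ k, V0 s k * ‖f τ k‖ ^ 2 ≤ P / 4 := fun τ => by
    have := (fen _ hV (fun _ => le_rfl) τ).2; rw [hP]; linarith
  have fe : ∀ n τ, ∫ k, ‖f τ k - F n (cl τ) k‖ ^ 2 ≤ e n := by
    intro n τ
    have := (fatou (V := fun _ => 1) measurable_const (fun _ => zero_le_one)
      (u := fun m k => F (m + n) (cl τ) k - F n (cl τ) k) (v := fun k => f τ k - F n (cl τ) k) (C := e n)
      (fun m => ((hF _).hs _).meas.sub ((hF _).hs _).meas)
      (fun k => ((hf τ k).comp (tendsto_add_atTop_nat n)).sub tendsto_const_nhds)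
      (fun m => by simpa only [one_mul] using (((hF (m+n)).hs (cl τ)).lt.sub ((hF n).hs (cl τ)).lt).int)
      (fun m => by simpa only [one_mul] using hc n (m + n) (by omega) (cl τ) (hcl τ))).2
    simpa only [one_mul] using this
  refine ⟨f, hfm, fun τ k => ?_, fHs, fun V h1 h2 τ => (fen V h1 h2 τ).2, fun k τ hτ => ?_⟩
  · refine tendsto_nhds_unique (hf τ (-k)) ?_
    simp only [(hF _).symm]
    exact (Complex.continuous_conj.tendsto _).comp (hf τ k)
  · have t1 := hf τ k
    rw [hcl2 τ hτ] at t1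
    refine tendsto_nhds_unique t1 ?_
    obtain ⟨N, hkN, hN⟩ := cut_ev g₀ k
    have t2 : Tendsto (fun n => cut g₀ n k + ∫ σ in (0:ℝ)..τ, -Complex.I * (k:ℂ) * Gq (F n σ) (F n σ) k)
        atTop (𝓝 (g₀ k + ∫ σ in (0:ℝ)..τ, -Complex.I * (k:ℂ) * Gq (f σ) (f σ) k)) := by
      refine (cut_tend g₀ k).add ?_
      refine intervalIntegral.tendsto_integral_filter_of_dominated_convergence
        (fun _ => |k| * (Real.sqrt |k| * P)) ?_ ?_ ?_ ?_
      · refine Eventually.of_forall fun n => ?_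
        exact ((Gq_meas3 (hF n).meas k).const_mul _).aestronglyMeasurable
      · refine Eventually.of_forall fun n => Eventually.of_forall fun σ hσ => ?_
        have hσ' : σ ∈ Icc (-T) T := uIcc_subset_Icc h0m hτ (uIoc_subset_uIcc hσ)
        rw [norm_mul, norm_mul, norm_neg, Complex.norm_I, one_mul, Complex.norm_real, Real.norm_eq_abs]
        gcongr
        refine (Gq_self_le ((hF n).hs σ).lt k).trans ?_
        gcongr
        have := ((hF n).hs σ).L2.2
        have := hFE n σ hσ'
        linarith
      · exact intervalIntegrable_const
      · refine Eventually.of_forall fun σ hσ => ?_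
        have hσ' : σ ∈ Icc (-T) T := uIcc_subset_Icc h0m hτ (uIoc_subset_uIcc hσ)
        rw [tendsto_iff_norm_sub_tendsto_zero]
        have h3 := ((hst.const_mul (Real.sqrt |k|)).const_mul |k|)
        simp only [mul_zero] at h3
        refine squeeze_zero (fun n => norm_nonneg _) (fun n => ?_) h3
        rw [norm_sub_rev]
        refine Gq_unif ((hF n).hs σ) (fHs σ) (hFE n σ hσ') (fE σ) ?_ k
        have := fe n σ
        rwa [hcl2 σ hσ'] at this
    refine t2.congr' ?_
    filter_upwards [eventually_ge_atTop N] with n hn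
    have : |k| ≤ (n:ℝ) := hkN.trans (by exact_mod_cast hn)
    exact (hFd n k this τ hτ).symm

open MeasureTheory Set Filter Topology

lemma VR_tend {s : ℝ} {g : ℝ → ℂ} (hs : 0 ≤ s) (hg : Hs s g) :
    Tendsto (fun n : ℕ => ∫ k, VR s ((n:ℝ) + 1) k * ‖g k‖ ^ 2) atTop (𝓝 0) := by
  have := tendsto_integral_of_dominated_convergence (μ := volume)
    (F := fun (n : ℕ) k => VR s ((n:ℝ) + 1) k * ‖g k‖ ^ 2)
    (f := fun _ => (0:ℝ)) (fun k => V0 s k * ‖g k‖ ^ 2)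
    (fun n => (((adm_VR hs (by positivity)).meas).mul (hg.meas.norm.pow_const 2)).aestronglyMeasurable) hg.int
    (fun n => Eventually.of_forall fun k => ?_) (Eventually.of_forall fun k => ?_)
  · simpa using this
  · have h1 := (adm_VR (s := s) (R := (n:ℝ) + 1) hs (by positivity)).nonneg k
    have h2 := VR_le (s := s) (R := (n:ℝ) + 1) k
    rw [Real.norm_of_nonneg (by positivity)]
    gcongr
  · have h2 : Tendsto (fun n : ℕ => ((n:ℝ) + 1)⁻¹) atTop (𝓝 0) := by
      simpa [one_div] using tendsto_one_div_add_atTop_nhds_zero_nat (𝕜 := ℝ)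
    have h3 : Tendsto (fun n : ℕ => V0 s k * (|k| * ((n:ℝ) + 1)⁻¹) * ‖g k‖ ^ 2) atTop (𝓝 0) := by
      simpa using ((h2.const_mul |k|).const_mul (V0 s k)).mul_const (‖g k‖ ^ 2)
    refine squeeze_zero (fun n => ?_) (fun n => ?_) h3
    · have h1 := (adm_VR (s := s) (R := (n:ℝ) + 1) hs (by positivity)).nonneg k
      positivity
    · have := (V0_pos s k).le
      unfold VR
      gcongr
      rw [← div_eq_mul_inv]; exact min_le_right _ _

lemma Sol.pt {s T : ℝ} (hs : 2 < s) (hT : 0 ≤ T) {g₀ : ℝ → ℂ} {f : ℝ → ℝ → ℂ} (h : Sol s T g₀ f) (k : ℝ)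
    {τ τ₀ : ℝ} (hτ : τ ∈ Icc (-T) T) (hτ₀ : τ₀ ∈ Icc (-T) T) :
    ‖f τ k - f τ₀ k‖ ≤ |k| * (Real.sqrt |k| * (4 * ∫ k, ‖g₀ k‖ ^ 2)) * |τ - τ₀| := by
  have en1 : ∀ τ, ∫ k, ‖f τ k‖ ^ 2 ≤ 4 * ∫ k, ‖g₀ k‖ ^ 2 := by
    intro τ
    have := h.en _ (adm_one (by linarith)) (fun k => V0_one_le s k) τ
    simpa only [one_mul] using this
  have hb : ∀ σ, ‖-Complex.I * (k:ℂ) * Gq (f σ) (f σ) k‖ ≤ |k| * (Real.sqrt |k| * (4 * ∫ k, ‖g₀ k‖ ^ 2)) := by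
    intro σ
    rw [norm_mul, norm_mul, norm_neg, Complex.norm_I, one_mul, Complex.norm_real, Real.norm_eq_abs]
    have := en1 σ
    gcongr
    refine (Gq_self_le (h.hs σ).lt k).trans ?_
    gcongr
  have hi : ∀ a b : ℝ, IntervalIntegrable (fun σ => -Complex.I * (k:ℂ) * Gq (f σ) (f σ) k) volume a b := by
    intro a b
    refine IntervalIntegrable.mono_fun' (intervalIntegrable_const
      (c := |k| * (Real.sqrt |k| * (4 * ∫ k, ‖g₀ k‖ ^ 2)))) ?_ (Eventually.of_forall hb)
    exact ((Gq_meas3 h.meas k).const_mul _).aestronglyMeasurable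
  rw [h.duh k τ hτ, h.duh k τ₀ hτ₀, add_sub_add_left_eq_sub, intervalIntegral.integral_interval_sub_left (hi _ _) (hi _ _)]
  exact int_bd hT (fun σ _ => hb σ) hτ₀ hτ

lemma Sol.cont {s T : ℝ} (hs : 2 < s) (hT : 0 ≤ T) {g₀ : ℝ → ℂ} (hg : Hs s g₀) {f : ℝ → ℝ → ℂ} (h : Sol s T g₀ f)
    {τ₀ : ℝ} (hτ₀ : τ₀ ∈ Icc (-T) T) :
    Tendsto (fun τ => ∫ k, V0 s k * ‖f τ k - f τ₀ k‖ ^ 2) (𝓝[Icc (-T) T] τ₀) (𝓝 0) := by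
  have hs0 : 0 ≤ s := by linarith
  set N := 4 * ∫ k, ‖g₀ k‖ ^ 2 with hN
  have hN0 : 0 ≤ N := by
    have : 0 ≤ ∫ k, ‖g₀ k‖ ^ 2 := integral_nonneg fun k => by positivity
    positivity
  have key : ∀ R : ℝ, 0 < R → ∀ τ ∈ Icc (-T) T, ∫ k, V0 s k * ‖f τ k - f τ₀ k‖ ^ 2 ≤
      2 * R * (V0 s R * (R * (Real.sqrt R * N) * |τ - τ₀|) ^ 2) + 16 * ∫ k, VR s R k * ‖g₀ k‖ ^ 2 := by
    intro R hR τ hτ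
    have hA := adm_VR (s := s) hs0 hR
    have hVR := V0_pos s R
    set F : ℝ → ℝ := fun k => if |k| ≤ R then V0 s k * ‖f τ k - f τ₀ k‖ ^ 2 else 0 with hF
    have hw := (h.hs τ).sub (h.hs τ₀)
    have hFi := supp_int hR.le (F := F) (C := V0 s R * (R * (Real.sqrt R * N) * |τ - τ₀|) ^ 2)
      (Measurable.ite (measurableSet_le (by fun_prop) measurable_const)
        ((V0_meas s).mul (hw.meas.norm.pow_const 2)) measurable_const)
      (fun k => by
        have := V0_pos s k
        simp only [hF]; split_ifs <;> positivity)
      (fun k => by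
        simp only [hF]; split_ifs with hk
        · have h1 : V0 s k ≤ V0 s R := V0_mono hs0 (hk.trans (le_abs_self R))
          have h2 := h.pt hs hT k hτ hτ₀
          have h3 : ‖f τ k - f τ₀ k‖ ≤ R * (Real.sqrt R * N) * |τ - τ₀| := by
            refine h2.trans ?_
            rw [← hN]
            gcongr
          gcongr
        · positivity)
      (fun k hk => by simp only [hF]; rw [if_neg (not_le.2 hk)])
    have i1 := ((h.hs τ).wt hA.meas hA.nonneg (fun k => VR_le k)).1
    have i2 := ((h.hs τ₀).wt hA.meas hA.nonneg (fun k => VR_le k)).1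
    have e1 := h.en _ hA (fun k => VR_le k) τ
    have e2 := h.en _ hA (fun k => VR_le k) τ₀
    have i3 : Integrable (fun k => 2 * (VR s R k * ‖f τ k‖ ^ 2) + 2 * (VR s R k * ‖f τ₀ k‖ ^ 2)) :=
      (i1.const_mul 2).add (i2.const_mul 2)
    have : ∫ k, V0 s k * ‖f τ k - f τ₀ k‖ ^ 2 ≤ ∫ k, (F k +
        (2 * (VR s R k * ‖f τ k‖ ^ 2) + 2 * (VR s R k * ‖f τ₀ k‖ ^ 2))) := by
      refine integral_mono hw.int (hFi.1.add i3) fun k => ?_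
      simp only [hF]
      have hV := V0_pos s k
      have hR0 := hA.nonneg k
      split_ifs with hk
      · have : 0 ≤ (2 * (VR s R k * ‖f τ k‖ ^ 2) + 2 * (VR s R k * ‖f τ₀ k‖ ^ 2)) := by positivity
        linarith
      · rw [VR_eq hR (not_le.1 hk).le]
        have h1 := norm_sub_le (f τ k) (f τ₀ k)
        have : ‖f τ k - f τ₀ k‖ ^ 2 ≤ 2 * ‖f τ k‖ ^ 2 + 2 * ‖f τ₀ k‖ ^ 2 := by
          nlinarith [sq_nonneg (‖f τ k‖ - ‖f τ₀ k‖), norm_nonneg (f τ k - f τ₀ k)]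
        nlinarith
    rw [integral_add hFi.1 i3, integral_add (i1.const_mul 2) (i2.const_mul 2), integral_const_mul,
      integral_const_mul] at this
    linarith [hFi.2]
  rw [Metric.tendsto_nhds]
  intro ε hε
  have h1 := ((VR_tend hs0 hg).const_mul 16)
  rw [mul_zero] at h1
  obtain ⟨n, hn⟩ := (h1.eventually (gt_mem_nhds (half_pos hε))).exists
  set R : ℝ := (n:ℝ) + 1 with hR
  have hR0 : 0 < R := by positivity
  have h2 : Tendsto (fun τ => 2 * R * (V0 s R * (R * (Real.sqrt R * N) * |τ - τ₀|) ^ 2)) (𝓝[Icc (-T) T] τ₀) (𝓝 0) := by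
    have : Continuous (fun τ => 2 * R * (V0 s R * (R * (Real.sqrt R * N) * |τ - τ₀|) ^ 2)) := by fun_prop
    have := this.tendsto τ₀
    simp only [sub_self, abs_zero, mul_zero] at this
    norm_num at this
    exact this.mono_left nhdsWithin_le_nhds
  filter_upwards [h2.eventually (gt_mem_nhds (half_pos hε)), self_mem_nhdsWithin] with τ a1 a2
  have a3 := key R hR0 τ a2
  rw [Real.dist_eq, sub_zero, abs_of_nonneg (E_nonneg s fun k => f τ k - f τ₀ k)]
  linarith

structure WS (s τs : ℝ) (f₀ : ℝ → ℂ) (f : ℝ → ℝ → ℂ) : Prop where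
  meas : Measurable (Function.uncurry f)
  init : ∀ᵐ k : ℝ, f 0 k = f₀ k
  symm : ∀ τ ∈ Ioo (-τs) τs, ∀ᵐ k : ℝ, f τ (-k) = (starRingEnd ℂ) (f τ k)
  int : ∀ τ ∈ Ioo (-τs) τs, Integrable (fun k : ℝ => V0 s k * ‖f τ k‖ ^ 2)
  cont : ∀ τ₀ ∈ Ioo (-τs) τs, Tendsto (fun τ : ℝ => ∫ k : ℝ, V0 s k * ‖f τ k - f τ₀ k‖ ^ 2)
             (𝓝[Ioo (-τs) τs] τ₀) (𝓝 0)
  duh : ∀ᵐ k : ℝ, ∀ τ ∈ Ioo (-τs) τs,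
    f τ k = f₀ k - Complex.I * ((k : ℝ) : ℂ) * ∫ σ in (0 : ℝ)..τ, Gq (f σ) (f σ) k

lemma WS.hs {s τs : ℝ} {f₀ : ℝ → ℂ} {f : ℝ → ℝ → ℂ} (h : WS s τs f₀ f) {τ : ℝ} (hτ : τ ∈ Ioo (-τs) τs) :
    Hs s (f τ) := ⟨uncurry_meas h.meas τ, h.int τ hτ⟩

lemma WS.loc {s τs : ℝ} {f₀ : ℝ → ℂ} {f : ℝ → ℝ → ℂ} (h : WS s τs f₀ f) {τ₀ : ℝ} (hτ : τ₀ ∈ Ioo (-τs) τs) :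
    ∃ C, ∀ᶠ τ in 𝓝[Ioo (-τs) τs] τ₀, ∫ k, V0 s k * ‖f τ k‖ ^ 2 ≤ C := by
  refine ⟨4 * max 1 (∫ k, V0 s k * ‖f τ₀ k‖ ^ 2), ?_⟩
  filter_upwards [(h.cont τ₀ hτ).eventually (gt_mem_nhds one_pos), self_mem_nhdsWithin] with τ h1 h2
  have := E_add (P := 4 * max 1 (∫ k, V0 s k * ‖f τ₀ k‖ ^ 2)) (h.hs hτ) ((h.hs h2).sub (h.hs hτ))
    (by linarith [le_max_right 1 (∫ k, V0 s k * ‖f τ₀ k‖ ^ 2)])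
    (by linarith [le_max_left 1 (∫ k, V0 s k * ‖f τ₀ k‖ ^ 2)])
  simpa using this

lemma WS.bdd {s τs T : ℝ} {f₀ : ℝ → ℂ} {f : ℝ → ℝ → ℂ} (h : WS s τs f₀ f)
    (hT : Icc (-T) T ⊆ Ioo (-τs) τs) : ∃ C, ∀ τ ∈ Icc (-T) T, ∫ k, V0 s k * ‖f τ k‖ ^ 2 ≤ C := by
  refine isCompact_Icc.induction_on (p := fun S => ∃ C, ∀ τ ∈ S, ∫ k, V0 s k * ‖f τ k‖ ^ 2 ≤ C) ⟨0, by simp⟩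
    (fun S S' hSS ⟨C, hC⟩ => ⟨C, fun τ hτ => hC τ (hSS hτ)⟩)
    (fun S S' ⟨C, hC⟩ ⟨C', hC'⟩ => ⟨max C C', ?_⟩) (fun τ₀ hτ₀ => ?_)
  · rintro τ (hτ | hτ)
    · exact (hC τ hτ).trans (le_max_left _ _)
    · exact (hC' τ hτ).trans (le_max_right _ _)
  · obtain ⟨C, hC⟩ := h.loc (hT hτ₀)
    exact ⟨_, nhdsWithin_mono _ hT hC, C, fun τ hτ => hτ⟩

lemma WS.Gc {s τs : ℝ} {f₀ : ℝ → ℂ} {f : ℝ → ℝ → ℂ} (h : WS s τs f₀ f) (k : ℝ) :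
    ContinuousOn (fun τ => Gq (f τ) (f τ) k) (Ioo (-τs) τs) := by
  intro τ₀ hτ₀
  obtain ⟨C, hC⟩ := h.loc hτ₀
  set P := 4 * max C (∫ k, V0 s k * ‖f τ₀ k‖ ^ 2) with hP
  have h3 : Tendsto (fun τ => Real.sqrt |k| * (Real.sqrt P * Real.sqrt (∫ k, V0 s k * ‖f τ k - f τ₀ k‖ ^ 2)))
      (𝓝[Ioo (-τs) τs] τ₀) (𝓝 0) := by
    have := (((Real.continuous_sqrt.tendsto 0).comp (h.cont τ₀ hτ₀)).const_mul (Real.sqrt P)).const_mul (Real.sqrt |k|)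
    simpa using this
  rw [ContinuousWithinAt, tendsto_iff_norm_sub_tendsto_zero]
  refine squeeze_zero' (Eventually.of_forall fun τ => norm_nonneg _) ?_ h3
  filter_upwards [hC, self_mem_nhdsWithin] with τ h1 h2
  refine (Gq_diff_le (h.hs hτ₀).lt (h.hs h2).lt k).trans ?_
  have e1 := ((h.hs h2).add (h.hs hτ₀)).L2.2.trans (E_add (P := P) (h.hs hτ₀) (h.hs h2)
    (by linarith [le_max_right C (∫ k, V0 s k * ‖f τ₀ k‖ ^ 2)])
    (by linarith [le_max_left C (∫ k, V0 s k * ‖f τ₀ k‖ ^ 2)]))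
  have e2 := ((h.hs h2).sub (h.hs hτ₀)).L2.2
  gcongr

lemma WS.der {s τs : ℝ} {f₀ : ℝ → ℂ} {f : ℝ → ℝ → ℂ} (h : WS s τs f₀ f) :
    ∀ᵐ k : ℝ, ∀ τ ∈ Ioo (-τs) τs, HasDerivAt (fun τ => f τ k) (-Complex.I * (k:ℂ) * Gq (f τ) (f τ) k) τ := by
  filter_upwards [h.duh] with k hk τ hτ
  have hc := h.Gc k
  have h0 : (0:ℝ) ∈ Ioo (-τs) τs := ⟨by linarith [hτ.1, hτ.2], by linarith [hτ.1, hτ.2]⟩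
  have hi : IntervalIntegrable (fun σ => Gq (f σ) (f σ) k) volume 0 τ :=
    (hc.mono ((ordConnected_Ioo).uIcc_subset h0 hτ)).intervalIntegrable
  have hn : Ioo (-τs) τs ∈ 𝓝 τ := isOpen_Ioo.mem_nhds hτ
  have hd := intervalIntegral.integral_hasDerivAt_right hi
    (Gq_meas3 h.meas k).stronglyMeasurable.stronglyMeasurableAtFilter (hc.continuousAt hn)
  have hd2 := ((hd.const_mul (Complex.I * (k:ℂ))).const_sub (f₀ k))
  have := hd2.congr_of_eventuallyEq (f₁ := fun τ => f τ k) (by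
    filter_upwards [hn] with σ hσ using hk σ hσ)
  rw [neg_mul, neg_mul]
  exact this

lemma uniq {s τs : ℝ} (hs : 2 < s) {f₀ : ℝ → ℂ} {f g : ℝ → ℝ → ℂ} (hf : WS s τs f₀ f) (hg : WS s τs f₀ g) :
    ∀ τ ∈ Ioo (-τs) τs, ∀ᵐ k : ℝ, g τ k = f τ k := by
  intro τ hτ
  set T := |τ| with hT
  have hT0 : 0 ≤ T := abs_nonneg _
  have hTs : T < τs := abs_lt.2 hτ
  have hsub : Icc (-T) T ⊆ Ioo (-τs) τs := fun x hx => ⟨by linarith [hx.1], by linarith [hx.2]⟩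
  have hsub2 : Ioo (-T) T ⊆ Ioo (-τs) τs := Ioo_subset_Icc_self.trans hsub
  obtain ⟨C, hC⟩ := hf.bdd hsub
  obtain ⟨C', hC'⟩ := hg.bdd hsub
  have hQm : Measurable (Function.uncurry fun (τ k : ℝ) => -Complex.I * (k:ℂ) * Gq (g τ) (g τ) k -
      -Complex.I * (k:ℂ) * Gq (f τ) (f τ) k) := by
    have h1 := Gq_meas hf.meas hf.meas
    have h2 := Gq_meas hg.meas hg.meas
    have h3 : Measurable (fun z : ℝ × ℝ => -Complex.I * (z.2:ℂ)) := by fun_prop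
    exact (h3.mul h2).sub (h3.mul h1)
  have main := stab (P := 4 * max C C') (ε := 0) (T := T) hs hT0 le_rfl hf.meas hg.meas hQm
    (fun σ hσ => hf.hs (hsub hσ)) (fun σ hσ => hg.hs (hsub hσ))
    (fun σ hσ => (hC σ hσ).trans (by linarith [le_max_left C C']))
    (fun σ hσ => (hC' σ hσ).trans (by linarith [le_max_right C C']))
    (fun σ hσ => hf.symm σ (hsub hσ)) (fun σ hσ => hg.symm σ (hsub hσ)) ?_ ?_ ?_ (fun σ hσ => ?_) τ
    ⟨by linarith [neg_abs_le τ], le_abs_self τ⟩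
  · have h0 : ∫ k, ‖g 0 k - f 0 k‖ ^ 2 = 0 := by
      rw [integral_eq_zero_of_ae]
      filter_upwards [hf.init, hg.init] with k h1 h2
      simp [h1, h2]
    rw [h0] at main
    simp only [mul_zero, zero_mul, add_zero] at main
    have hw := ((hg.hs hτ).sub (hf.hs hτ)).lt.int
    have h1 : ∫ k, ‖g τ k - f τ k‖ ^ 2 = 0 := le_antisymm main (integral_nonneg fun k => by positivity)
    rw [integral_eq_zero_iff_of_nonneg (fun k => by positivity) hw] at h1
    filter_upwards [h1] with k hk
    have : ‖g τ k - f τ k‖ ^ 2 = 0 := hk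
    exact sub_eq_zero.1 (norm_eq_zero.1 (pow_eq_zero_iff (two_ne_zero) |>.1 this))
  · filter_upwards [hf.der, hg.der] with k h1 h2 σ hσ
    exact ((h2 σ (hsub hσ)).sub (h1 σ (hsub hσ))).continuousAt.continuousWithinAt
  · refine Eventually.of_forall fun k => ?_
    exact ((continuousOn_const.mul (hg.Gc k)).sub (continuousOn_const.mul (hf.Gc k))).mono hsub
  · filter_upwards [hf.der, hg.der] with k h1 h2 σ hσ
    exact (h2 σ (hsub2 hσ)).sub (h1 σ (hsub2 hσ))
  · refine ⟨fun _ => 0, ⟨measurable_const, by simp⟩, ?_, fun k => ?_⟩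
    · have := (E_nonneg s (f σ)).trans (hC σ hσ)
      have := le_max_left C C'
      have e : ∫ _ : ℝ, ‖(0:ℂ)‖ ^ 2 = 0 := by simp
      rw [e]; linarith
    · rw [Gq_diff (hf.hs (hsub hσ)).lt (hg.hs (hsub hσ)).lt]
      simp; ring

open MeasureTheory Set Filter Topology

open Classical in
noncomputable def symz (f₀ : ℝ → ℂ) (k : ℝ) : ℂ := if f₀ (-k) = (starRingEnd ℂ) (f₀ k) then f₀ k else 0

lemma symz_meas {f₀ : ℝ → ℂ} (h : Measurable f₀) : Measurable (symz f₀) := by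
  unfold symz
  refine Measurable.ite ?_ h measurable_const
  exact measurableSet_eq_fun (h.comp measurable_neg) (Complex.continuous_conj.measurable.comp h)

lemma symz_symm (f₀ : ℝ → ℂ) (k : ℝ) : symz f₀ (-k) = (starRingEnd ℂ) (symz f₀ k) := by
  unfold symz
  rw [neg_neg]
  by_cases h : f₀ (-k) = (starRingEnd ℂ) (f₀ k)
  · have h2 : f₀ k = (starRingEnd ℂ) (f₀ (-k)) := by rw [h]; simp
    rw [if_pos h, if_pos h2, h]
  · have h2 : ¬ f₀ k = (starRingEnd ℂ) (f₀ (-k)) := fun h3 => h (by rw [h3]; simp)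
    rw [if_neg h, if_neg h2]; simp

lemma consts {s N M : ℝ} (hs : 2 < s) (hN : 0 < N) (hM : 0 < M) :
    ∃ lam μ : ℝ, 0 < lam ∧ 0 < μ ∧ lam ^ (2 * s) * (4 * N ^ 2) + 4 * M ^ 2 = 8 * M ^ 2 ∧
      1/2 * (μ * (lam ^ (4 - 2 * s) * cj s 3) + 8 * M ^ 2 / μ) =
        (cj s 3 / 2 + 4) * (N ^ (1 - 2 / s) * M ^ (2 / s)) := by
  have hs0 : s ≠ 0 := by linarith
  have hl : 0 < (M / N) ^ (1 / s) := by positivity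
  set lam := (M / N) ^ (1 / s) with hlam
  refine ⟨lam, M * lam ^ (s - 2), hl, by positivity, ?_, ?_⟩
  · rw [hlam, ← Real.rpow_mul (by positivity), show 1 / s * (2 * s) = 2 by field_simp, Real.rpow_two]
    field_simp; ring
  · have h1 : lam ^ (s - 2) * lam ^ (4 - 2 * s) = lam ^ (2 - s) := by
      rw [← Real.rpow_add hl]; congr 1; ring
    have h2 : lam ^ (s - 2) * lam ^ (2 - s) = 1 := by
      rw [← Real.rpow_add hl]; simp
    have h3 : lam ^ (2 - s) * M = N ^ (1 - 2 / s) * M ^ (2 / s) := by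
      rw [hlam, ← Real.rpow_mul (by positivity), show 1 / s * (2 - s) = 2 / s - 1 by field_simp,
        Real.div_rpow hM.le hN.le, Real.rpow_sub hM, Real.rpow_one,
        show (1 - 2 / s) = -(2 / s - 1) by ring, Real.rpow_neg hN.le]
      have : N ^ (2 / s - 1) ≠ 0 := by positivity
      field_simp
    have h4 : 8 * M ^ 2 / (M * lam ^ (s - 2)) = 8 * (lam ^ (2 - s) * M) := by
      rw [div_eq_iff (by positivity)]
      calc 8 * M ^ 2 = 8 * M ^ 2 * (lam ^ (s - 2) * lam ^ (2 - s)) := by rw [h2, mul_one]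
        _ = _ := by ring
    have h5 : M * lam ^ (s - 2) * (lam ^ (4 - 2 * s) * cj s 3) = cj s 3 * (lam ^ (2 - s) * M) := by
      rw [← h1]; ring
    rw [h4, h5, h3]; ring

lemma Sol.ws {s T : ℝ} (hs : 2 < s) (hT : 0 ≤ T) {f₀ g₀ : ℝ → ℂ} (hg : Hs s g₀) (he : ∀ᵐ k, g₀ k = f₀ k)
    {f : ℝ → ℝ → ℂ} (h : Sol s T g₀ f) : WS s T f₀ f where
  meas := h.meas
  init := by
    filter_upwards [he] with k hk
    rw [h.duh k 0 ⟨by linarith, hT⟩, hk]; simp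
  symm := fun τ _ => Eventually.of_forall (h.symm τ)
  int := fun τ _ => (h.hs τ).int
  cont := fun τ hτ => (h.cont hs hT hg (Ioo_subset_Icc_self hτ)).mono_left (nhdsWithin_mono _ Ioo_subset_Icc_self)
  duh := by
    filter_upwards [he] with k hk τ hτ
    rw [h.duh k τ (Ioo_subset_Icc_self hτ), hk, intervalIntegral.integral_const_mul]
    ring

lemma exist_ws {s : ℝ} (hs : 2 < s) {f₀ : ℝ → ℂ} (hm : Measurable f₀)
    (hr : ∀ᵐ k : ℝ, f₀ (-k) = (starRingEnd ℂ) (f₀ k)) (hi : Integrable (fun k : ℝ => V0 s k * ‖f₀ k‖ ^ 2))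
    {M N τs : ℝ} (hM : M = Real.sqrt (∫ k : ℝ, V0 s k * ‖f₀ k‖ ^ 2)) (hN : N = Real.sqrt (∫ k : ℝ, ‖f₀ k‖ ^ 2))
    (hτ : τs = 1 / (4 * 2 ^ (2 * s + 1) * (cj s 3 / 2 + 4) * N ^ (1 - 2 / s) * M ^ (2 / s))) :
    ∃ f, WS s τs f₀ f := by
  have hHf : Hs s f₀ := ⟨hm, hi⟩
  have hN0 : 0 ≤ N := hN ▸ Real.sqrt_nonneg _
  rcases hN0.eq_or_lt with h0 | h0
  · have hs2 : (1 - 2 / s) ≠ 0 := by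
      have : 2 / s < 1 := (div_lt_one (by linarith)).2 hs
      linarith
    have : τs = 0 := by rw [hτ, ← h0, Real.zero_rpow hs2]; simp
    have hn : ∀ τ, τ ∉ Ioo (-τs) τs := by
      intro τ h; rw [this] at h; simp at h
    exact ⟨fun _ k => f₀ k, hm.comp measurable_snd, Eventually.of_forall fun _ => rfl,
      fun τ h => absurd h (hn τ), fun τ h => absurd h (hn τ), fun τ h => absurd h (hn τ),
      Eventually.of_forall fun _ τ h => absurd h (hn τ)⟩
  have hM0 : 0 < M := lt_of_lt_of_le h0 (by rw [hM, hN]; exact Real.sqrt_le_sqrt hHf.L2.2)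
  have hN2 : N ^ 2 = ∫ k : ℝ, ‖f₀ k‖ ^ 2 := by
    rw [hN]; exact Real.sq_sqrt (integral_nonneg fun k => by positivity)
  have hM2 : M ^ 2 = ∫ k : ℝ, V0 s k * ‖f₀ k‖ ^ 2 := by
    rw [hM]; exact Real.sq_sqrt (E_nonneg s f₀)
  obtain ⟨lam, μ, hl, hμ, e1, e2⟩ := consts hs h0 hM0
  have c3 := cj_nonneg s 3
  set Y := N ^ (1 - 2 / s) * M ^ (2 / s) with hY
  have hY0 : 0 < Y := by positivity
  have hT : 0 ≤ τs := by rw [hτ]; positivity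
  set g₀ := symz f₀ with hg₀
  have he : ∀ᵐ k, g₀ k = f₀ k := by
    filter_upwards [hr] with k hk
    rw [hg₀, symz, if_pos hk]
  have hgi : Hs s g₀ := ⟨symz_meas hm, hi.congr (by filter_upwards [he] with k hk; rw [hk])⟩
  have i1 : ∫ k, V0 s k * ‖g₀ k‖ ^ 2 = M ^ 2 := by
    rw [hM2]; exact integral_congr_ae (by filter_upwards [he] with k hk; rw [hk])
  have i2 : ∫ k, ‖g₀ k‖ ^ 2 = N ^ 2 := by
    rw [hN2]; exact integral_congr_ae (by filter_upwards [he] with k hk; rw [hk])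
  have hex : ∀ n : ℕ, ∃ F, GS s ((n:ℝ) + 1) τs (cut g₀ n) F := by
    intro n
    have a1 := cut_E hgi (V0_meas s) (fun k => (V0_pos s k).le) (fun _ => le_rfl) n
    have a2 := cut_E hgi (V := fun _ => 1) measurable_const (fun _ => zero_le_one) (V0_one_le s) n
    simp only [one_mul] at a2
    rw [i1] at a1
    rw [i2] at a2
    refine gal_one (A := (cj s 3 / 2 + 4) * Y) (P := 8 * M ^ 2) hs (by positivity) hT (by positivity) hl hμ ?_
      (cut_meas hgi.meas n) ⟨_, cut_bdd g₀ n⟩ (cut_supp g₀ n) (cut_symm (symz_symm f₀) n) ?_ e2.le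
    · rw [hτ, hY]
      refine le_of_eq ?_
      field_simp
    · rw [← e1]
      gcongr
  choose F hF using hex
  obtain ⟨f, hf⟩ := lim_sol hs hT hgi hF
  exact ⟨f, hf.ws hs hT hgi he⟩

theorem local_wellposedness (s : ℝ) (hs : 2 < s) :
    ∃ K : ℝ, 0 < K ∧ ∀ f₀ : ℝ → ℂ, Measurable f₀ →
      (∀ᵐ k : ℝ, f₀ (-k) = (starRingEnd ℂ) (f₀ k)) →
      Integrable (fun k : ℝ => (1 + |k| ^ (2 * s)) * ‖f₀ k‖ ^ 2) →
      ∀ M₀ N₀ τs : ℝ,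
        M₀ = Real.sqrt (∫ k : ℝ, (1 + |k| ^ (2 * s)) * ‖f₀ k‖ ^ 2) →
        N₀ = Real.sqrt (∫ k : ℝ, ‖f₀ k‖ ^ 2) →
        τs = 1 / (K * N₀ ^ (1 - 2 / s) * M₀ ^ (2 / s)) →
        ∃ f : ℝ → ℝ → ℂ,
          (Measurable (Function.uncurry f) ∧
           (∀ᵐ k : ℝ, f 0 k = f₀ k) ∧
           (∀ τ ∈ Set.Ioo (-τs) τs, ∀ᵐ k : ℝ, f τ (-k) = (starRingEnd ℂ) (f τ k)) ∧
           (∀ τ ∈ Set.Ioo (-τs) τs,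
             Integrable (fun k : ℝ => (1 + |k| ^ (2 * s)) * ‖f τ k‖ ^ 2)) ∧
           (∀ τ₀ ∈ Set.Ioo (-τs) τs, Filter.Tendsto
             (fun τ : ℝ => ∫ k : ℝ, (1 + |k| ^ (2 * s)) * ‖f τ k - f τ₀ k‖ ^ 2)
             (nhdsWithin τ₀ (Set.Ioo (-τs) τs)) (nhds 0)) ∧
           (∀ᵐ k : ℝ, ∀ τ ∈ Set.Ioo (-τs) τs,
             f τ k = f₀ k - Complex.I * ((k : ℝ) : ℂ) *
               ∫ σ in (0 : ℝ)..τ, ∫ l : ℝ,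
                 ((Sker (k - l) l : ℝ) : ℂ) * f σ (k - l) * f σ l)) ∧
          (∀ g : ℝ → ℝ → ℂ,
            (Measurable (Function.uncurry g) ∧
             (∀ᵐ k : ℝ, g 0 k = f₀ k) ∧
             (∀ τ ∈ Set.Ioo (-τs) τs, ∀ᵐ k : ℝ, g τ (-k) = (starRingEnd ℂ) (g τ k)) ∧
             (∀ τ ∈ Set.Ioo (-τs) τs,
               Integrable (fun k : ℝ => (1 + |k| ^ (2 * s)) * ‖g τ k‖ ^ 2)) ∧
             (∀ τ₀ ∈ Set.Ioo (-τs) τs, Filter.Tendsto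
               (fun τ : ℝ => ∫ k : ℝ, (1 + |k| ^ (2 * s)) * ‖g τ k - g τ₀ k‖ ^ 2)
               (nhdsWithin τ₀ (Set.Ioo (-τs) τs)) (nhds 0)) ∧
             (∀ᵐ k : ℝ, ∀ τ ∈ Set.Ioo (-τs) τs,
               g τ k = f₀ k - Complex.I * ((k : ℝ) : ℂ) *
                 ∫ σ in (0 : ℝ)..τ, ∫ l : ℝ,
                   ((Sker (k - l) l : ℝ) : ℂ) * g σ (k - l) * g σ l)) →
            ∀ τ ∈ Set.Ioo (-τs) τs, ∀ᵐ k : ℝ, g τ k = f τ k) := by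
  have c3 := cj_nonneg s 3
  refine ⟨4 * 2 ^ (2 * s + 1) * (cj s 3 / 2 + 4), by positivity, ?_⟩
  intro f₀ hm hr hi M₀ N₀ τs hM hN hτ
  obtain ⟨f, hf⟩ := exist_ws hs hm hr hi hM hN hτ
  refine ⟨f, ⟨hf.meas, hf.init, hf.symm, hf.int, hf.cont, hf.duh⟩, ?_⟩
  rintro g ⟨h1, h2, h3, h4, h5, h6⟩
  exact uniq hs hf ⟨h1, h2, h3, h4, h5, h6⟩
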